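/- arXiv:2401.07373 — 3 statements merged into one kernel-verified Lean document; each statement's English description precedes it below -/
import Mathlib

section
/- Let M > M₁(Ω₁) and let u^ε be the strictly k-convex solution of problem (2.1). Then there exists a constant C > 1, depending on Ω₁, M and ε₀ but not on ε, such that at every point p ∈ ∂Ω₁, with ν the unit inward normal of ∂Ω₁ at p, one has C·(Dψ(p)·ν) < Du^ε(p)·ν < Dψ(p)·ν, where ψ is the strictly k-convex solution of σ_k(D²ψ) = 1 in Ω₁ with ψ = 0 on ∂Ω₁. -/
open Set Metric Filter Topology Bornology
open scoped RealInnerProductSpace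

noncomputable section

/-- Euclidean `n`-space. -/
abbrev Euc (n : ℕ) := EuclideanSpace ℝ (Fin n)

/-- The `k`-th elementary symmetric polynomial of a vector `lam ∈ ℝⁿ`. -/
def esymmVec {n : ℕ} (k : ℕ) (lam : Fin n → ℝ) : ℝ :=
  ∑ S ∈ Finset.powersetCard k (Finset.univ : Finset (Fin n)), ∏ i ∈ S, lam i

/-- `σ_k(A)`: the `k`-th elementary symmetric polynomial of the eigenvalues of a
symmetric matrix `A` (junk value `0` if `A` is not symmetric). -/
noncomputable def sigmaMat {n : ℕ} (k : ℕ) (A : Matrix (Fin n) (Fin n) ℝ) : ℝ := by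
  classical exact if h : A.IsHermitian then esymmVec k h.eigenvalues else 0

/-- The eigenvalues of the symmetric matrix `A` lie in the Gårding cone
`Γ_k = {λ : σ_j(λ) > 0, j = 1, …, k}`. -/
def InGardingCone {n : ℕ} (k : ℕ) (A : Matrix (Fin n) (Fin n) ℝ) : Prop :=
  ∃ h : A.IsHermitian, ∀ j : ℕ, 1 ≤ j → j ≤ k → 0 < esymmVec j h.eigenvalues

/-- The Hessian matrix of `u` at `x`, with derivatives taken within the set `s`. -/
noncomputable def hessianWithin {n : ℕ} (u : Euc n → ℝ) (s : Set (Euc n)) (x : Euc n) :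
    Matrix (Fin n) (Fin n) ℝ :=
  fun i j => iteratedFDerivWithin ℝ 2 u s x
    ![EuclideanSpace.single i (1:ℝ), EuclideanSpace.single j (1:ℝ)]

/-- The Hessian matrix `D²u(x)` of `u` at `x`. -/
noncomputable def hessian {n : ℕ} (u : Euc n → ℝ) (x : Euc n) : Matrix (Fin n) (Fin n) ℝ :=
  fun i j => iteratedFDeriv ℝ 2 u x
    ![EuclideanSpace.single i (1:ℝ), EuclideanSpace.single j (1:ℝ)]

/-- Operator norm of the Hessian matrix of `u` at `x` (derivatives within `s`). -/
noncomputable def hessOpNormWithin {n : ℕ} (u : Euc n → ℝ) (s : Set (Euc n)) (x : Euc n) : ℝ :=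
  ‖Matrix.toEuclideanCLM (𝕜 := ℝ) (hessianWithin u s x)‖

/-- A set has smooth boundary: it is the sublevel set of a smooth defining function
with nonvanishing differential on the boundary. -/
def HasSmoothBoundary {n : ℕ} (Ω : Set (Euc n)) : Prop :=
  ∃ ρ : Euc n → ℝ, ContDiff ℝ (⊤ : ℕ∞) ρ ∧ Ω = {x | ρ x < 0} ∧
    ∀ x ∈ frontier Ω, fderiv ℝ ρ x ≠ 0

/-- `c_{n,k} = (C(n,k))^{1/k}` where `C(n,k)` is the binomial coefficient. -/
noncomputable def cnk (n k : ℕ) : ℝ := (n.choose k : ℝ) ^ ((1:ℝ)/(k:ℝ))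

/-- The radially symmetric subsolution `|x - x₀|²/(2c_{n,k}) − ε²/(2c_{n,k}) − M`. -/
noncomputable def underSol {n : ℕ} (k : ℕ) (x₀ : Euc n) (ε M : ℝ) (x : Euc n) : ℝ :=
  ‖x - x₀‖^2 / (2 * cnk n k) - ε^2 / (2 * cnk n k) - M

/-- The closed ring `Ω̄^ε = closure (Ω₁ \ B̄_ε(x₀))`. -/
def ringSet {n : ℕ} (Ω₁ : Set (Euc n)) (x₀ : Euc n) (ε : ℝ) : Set (Euc n) :=
  closure (Ω₁ \ closedBall x₀ ε)

/-- `u` is a strictly `k`-convex solution of problem (2.1):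
`σ_k(D²u) = 1` in `Ω^ε = Ω₁ \ B̄_ε(x₀)`, `u = 0` on `∂Ω₁`, `u = −M` on `∂B_ε(x₀)`,
with `u ∈ C²(Ω̄^ε)`. -/
def IsSol {n : ℕ} (k : ℕ) (Ω₁ : Set (Euc n)) (x₀ : Euc n) (ε M : ℝ) (u : Euc n → ℝ) : Prop :=
  ContDiffOn ℝ 2 u (ringSet Ω₁ x₀ ε) ∧
  (∀ x ∈ Ω₁ \ closedBall x₀ ε,
      InGardingCone k (hessianWithin u (ringSet Ω₁ x₀ ε) x) ∧
      sigmaMat k (hessianWithin u (ringSet Ω₁ x₀ ε) x) = 1) ∧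
  (∀ x ∈ frontier Ω₁, u x = 0) ∧
  (∀ x ∈ sphere x₀ ε, u x = -M)

/-- `ψ` is a strictly `k`-convex solution of problem (2.2):
`σ_k(D²ψ) = 1` in `Ω₁`, `ψ = 0` on `∂Ω₁`, with `ψ ∈ C^∞(Ω̄₁)`. -/
def IsSol22 {n : ℕ} (k : ℕ) (Ω₁ : Set (Euc n)) (ψ : Euc n → ℝ) : Prop :=
  ContDiffOn ℝ (⊤ : ℕ∞) ψ (closure Ω₁) ∧
  (∀ x ∈ Ω₁, InGardingCone k (hessianWithin ψ (closure Ω₁) x) ∧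
      sigmaMat k (hessianWithin ψ (closure Ω₁) x) = 1) ∧
  (∀ x ∈ frontier Ω₁, ψ x = 0)

/-- `u` is a strictly `k`-convex solution of the Dirichlet problem on the convex ring
`Ω = Ω₁ \ Ω̄₂`: `σ_k(D²u) = 1` in `Ω`, `u = 0` on `∂Ω₁`, `u = −M` on `∂Ω₂`,
with `u ∈ C²(Ω̄)`. -/
def IsSolRing {n : ℕ} (k : ℕ) (Ω₁ Ω₂ : Set (Euc n)) (M : ℝ) (u : Euc n → ℝ) : Prop :=
  ContDiffOn ℝ 2 u (closure (Ω₁ \ closure Ω₂)) ∧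
  (∀ x ∈ Ω₁ \ closure Ω₂,
      InGardingCone k (hessianWithin u (closure (Ω₁ \ closure Ω₂)) x) ∧
      sigmaMat k (hessianWithin u (closure (Ω₁ \ closure Ω₂)) x) = 1) ∧
  (∀ x ∈ frontier Ω₁, u x = 0) ∧
  (∀ x ∈ frontier Ω₂, u x = -M)

/-- The extension `ũ` of `u`, equal to `−M` on the closed ball `B̄_ε(x₀)`. -/
noncomputable def extendBy {n : ℕ} (u : Euc n → ℝ) (x₀ : Euc n) (ε M : ℝ) (x : Euc n) : ℝ := by
  classical exact if x ∈ closedBall x₀ ε then -M else u x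

/-- The extension `ũ` of `u`, equal to `−M` on the set `Ω₂`. -/
noncomputable def extendOn {n : ℕ} (u : Euc n → ℝ) (Ω₂ : Set (Euc n)) (M : ℝ) (x : Euc n) : ℝ := by
  classical exact if x ∈ Ω₂ then -M else u x

/-- The quadratic polynomial with Hessian `A`, linear part `b` and constant term `c`. -/
noncomputable def quadPoly {n : ℕ} (A : Matrix (Fin n) (Fin n) ℝ) (b : Euc n) (c : ℝ)
    (x : Euc n) : ℝ :=
  (∑ i, ∑ j, A i j * x i * x j) / 2 + ⟪b, x⟫ + c


open Polynomial in
lemma splits_deriv' {p : ℝ[X]} (hp : p.Splits) : (derivative p).Splits := by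
  rw [splits_iff_card_roots]
  have h1 := card_roots_le_derivative p
  have h2 := splits_iff_card_roots.1 hp
  have h3 := card_roots' (derivative p)
  have h4 := natDegree_derivative_le p
  by_cases h : p.natDegree = 0
  · rw [natDegree_eq_zero] at h
    obtain ⟨c, rfl⟩ := h
    simp
  · omega

open Polynomial in
lemma splits_iter_deriv {p : ℝ[X]} (hp : p.Splits) (m : ℕ) : (derivative^[m] p).Splits := by
  induction m with
  | zero => simpa
  | succ m ih => rw [Function.iterate_succ_apply']; exact splits_deriv' ih

open Polynomial in
lemma log_conc {p : ℝ[X]} (hp : p.Splits) (x : ℝ) :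
    p.eval x * (derivative (derivative p)).eval x ≤ ((derivative p).eval x)^2 := by
  rw [hp.eq_prod_roots]
  generalize p.leadingCoeff = a
  generalize p.roots = s
  have key : (Multiset.map (fun a => X - C a) s).prod.eval x * (derivative (derivative (Multiset.map (fun a => X - C a) s).prod)).eval x ≤ ((derivative (Multiset.map (fun a => X - C a) s).prod).eval x)^2 := by
    induction s using Multiset.induction_on with
    | empty => simp
    | cons r s ih =>
      simp only [Multiset.map_cons, Multiset.prod_cons]
      generalize (Multiset.map (fun a => X - C a) s).prod = f at *
      simp only [derivative_mul, derivative_sub, derivative_X, derivative_C, eval_mul, eval_add, eval_sub, eval_X, eval_C, derivative_add, sub_zero, one_mul, derivative_one]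
      nlinarith [mul_le_mul_of_nonneg_left ih (sq_nonneg (x - r)), sq_nonneg (f.eval x)]
  simp only [derivative_mul, derivative_C, zero_mul, zero_add, eval_mul, eval_C]
  nlinarith [mul_le_mul_of_nonneg_left key (sq_nonneg a)]

open Polynomial in
lemma newton_poly {p : ℝ[X]} (hp : p.Splits) (m : ℕ) :
    p.coeff m * p.coeff (m+2) ≤ (p.coeff (m+1))^2 := by
  by_cases hneg : p.coeff m * p.coeff (m+2) ≤ 0
  · exact hneg.trans (sq_nonneg _)
  push Not at hneg
  have h := log_conc (splits_iter_deriv hp m) 0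
  rw [← Function.iterate_succ_apply' derivative, ← Function.iterate_succ_apply' derivative,
    ← coeff_zero_eq_eval_zero, ← coeff_zero_eq_eval_zero, ← coeff_zero_eq_eval_zero,
    coeff_iterate_derivative, coeff_iterate_derivative, coeff_iterate_derivative] at h
  simp only [zero_add, Nat.descFactorial_self, nsmul_eq_mul, Nat.succ_eq_add_one] at h
  have e1 : (((m+1).factorial : ℕ) : ℝ) = (m+1) * (m.factorial : ℝ) := by
    rw [Nat.factorial_succ]; push_cast; ring
  have e2 : (((m+1+1).factorial : ℕ) : ℝ) = (m+2) * ((m+1) * (m.factorial : ℝ)) := by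
    rw [Nat.factorial_succ, Nat.factorial_succ]; push_cast; ring
  rw [e1, e2, show m+1+1 = m+2 from rfl] at h
  have hf : (0:ℝ) < m.factorial := by exact_mod_cast m.factorial_pos
  have hm : (0:ℝ) ≤ m := Nat.cast_nonneg m
  set F : ℝ := (m.factorial : ℝ) with hF
  have h' : (F^2*(m+1)) * ((m+2) * (p.coeff m * p.coeff (m+2))) ≤ (F^2 * (m+1)) * ((m+1) * p.coeff (m+1)^2) := by
    nlinarith [h]
  have h2 := le_of_mul_le_mul_left h' (by positivity)
  have h3 : (m+1) * (p.coeff m * p.coeff (m+2)) ≤ (m+1:ℝ) * p.coeff (m+1)^2 := by nlinarith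
  exact le_of_mul_le_mul_left h3 (by positivity)

/-- elementary symmetric function over a finset -/
def EE {ι : Type*} (s : Finset ι) (k : ℕ) (l : ι → ℝ) : ℝ :=
  ∑ S ∈ Finset.powersetCard k s, ∏ i ∈ S, l i

lemma EE_zero {ι : Type*} (s : Finset ι) (l : ι → ℝ) : EE s 0 l = 1 := by simp [EE]

lemma EE_big {ι : Type*} (s : Finset ι) (k : ℕ) (hk : s.card < k) (l : ι → ℝ) : EE s k l = 0 := by
  simp [EE, Finset.powersetCard_eq_empty.2 hk]

lemma EE_newton {ι : Type*} (s : Finset ι) (k : ℕ) (l : ι → ℝ) :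
    EE s k l * EE s (k+2) l ≤ (EE s (k+1) l)^2 := by
  by_cases hk : s.card < k + 2
  · rw [EE_big s _ hk]; simp; positivity
  push Not at hk
  have hs : (∏ i ∈ s, (Polynomial.X + Polynomial.C (l i))).Splits := by
    apply Polynomial.Splits.prod
    intro i _
    exact Polynomial.Splits.X_add_C _
  have h := newton_poly hs (s.card - (k+2))
  rw [Finset.prod_X_add_C_coeff _ _ (by omega), Finset.prod_X_add_C_coeff _ _ (by omega), Finset.prod_X_add_C_coeff _ _ (by omega)] at h
  rw [show s.card - (s.card - (k+2)) = k+2 by omega, show s.card - (s.card - (k+2)+2) = k by omega, show s.card - (s.card - (k+2)+1) = k+1 by omega] at h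
  unfold EE
  linarith

lemma EE_insert {ι : Type*} [DecidableEq ι] (s : Finset ι) (i : ι) (hi : i ∉ s) (k : ℕ) (l : ι → ℝ) :
    EE (insert i s) (k+1) l = EE s (k+1) l + l i * EE s k l := by
  unfold EE
  rw [Finset.powersetCard_succ_insert hi, Finset.sum_union, Finset.sum_image, Finset.mul_sum]
  · congr 1
    apply Finset.sum_congr rfl
    intro S hS
    rw [Finset.prod_insert]
    intro h
    exact hi ((Finset.mem_powersetCard.1 hS).1 h)
  · intro S hS T hT h
    have hS' : i ∉ S := fun h => hi ((Finset.mem_powersetCard.1 hS).1 h)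
    have hT' : i ∉ T := fun h => hi ((Finset.mem_powersetCard.1 hT).1 h)
    have := congrArg (fun U => Finset.erase U i) h
    simpa [Finset.erase_insert hS', Finset.erase_insert hT'] using this
  · rw [Finset.disjoint_left]
    intro S hS hT
    obtain ⟨T, _, rfl⟩ := Finset.mem_image.1 hT
    exact hi ((Finset.mem_powersetCard.1 hS).1 (Finset.mem_insert_self i T))

lemma EE_erase_pos {ι : Type*} [DecidableEq ι] (s : Finset ι) (i : ι) (hi : i ∉ s) (k : ℕ) (l : ι → ℝ)
    (h : ∀ j, 1 ≤ j → j ≤ k+1 → 0 < EE (insert i s) j l) : ∀ j ≤ k, 0 < EE s j l := by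
  intro j
  induction j with
  | zero => intro _; rw [EE_zero]; norm_num
  | succ j ih =>
    intro hj
    have h0 := ih (by omega)
    have h1 := h (j+1) (by omega) (by omega)
    have h2 := h (j+2) (by omega) (by omega)
    rw [EE_insert s i hi] at h1 h2
    have hN := EE_newton s j l
    by_contra hc
    push Not at hc
    rw [show j+1+1 = j+2 from rfl] at h2
    set a := EE s j l
    set b := EE s (j+1) l
    set c := EE s (j+2) l
    have hl : 0 < l i := by
      by_contra hl
      push Not at hl
      nlinarith
    nlinarith

lemma EE_congr {ι : Type*} (s : Finset ι) (k : ℕ) (l m : ι → ℝ) (h : ∀ i ∈ s, l i = m i) : EE s k l = EE s k m := by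
  unfold EE
  apply Finset.sum_congr rfl
  intro S hS
  apply Finset.prod_congr rfl
  intro i hi
  exact h i ((Finset.mem_powersetCard.1 hS).1 hi)

lemma EE_step {ι : Type*} [Fintype ι] [DecidableEq ι] (k : ℕ) (l : ι → ℝ) (i : ι) (c : ℝ) :
    EE Finset.univ (k+1) (Function.update l i c) = EE Finset.univ (k+1) l + (c - l i) * EE (Finset.univ.erase i) k l := by
  have hu : (Finset.univ : Finset ι) = insert i (Finset.univ.erase i) := by simp
  have hi : i ∉ (Finset.univ : Finset ι).erase i := by simp
  conv_lhs => rw [hu]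
  conv_rhs => rw [hu]
  rw [EE_insert _ _ hi, EE_insert _ _ hi]
  rw [EE_congr _ (k+1) (Function.update l i c) l, EE_congr _ k (Function.update l i c) l]
  · simp [Finset.erase_insert]; ring
  · intro j hj
    rw [Function.update_of_ne (Finset.ne_of_mem_erase hj)]
  · intro j hj
    rw [Function.update_of_ne (Finset.ne_of_mem_erase hj)]

/-- one coordinate change -/
lemma EE_step_mono {ι : Type*} [Fintype ι] [DecidableEq ι] (k : ℕ) (l : ι → ℝ) (i : ι) (c : ℝ)
    (hc : l i ≤ c) (h : ∀ j, 1 ≤ j → j ≤ k → 0 < EE Finset.univ j l) :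
    (∀ j, 1 ≤ j → j ≤ k → 0 < EE Finset.univ j (Function.update l i c)) ∧
    (1 ≤ k → EE Finset.univ k l ≤ EE Finset.univ k (Function.update l i c)) ∧
    (1 ≤ k → l i < c → EE Finset.univ k l < EE Finset.univ k (Function.update l i c)) := by
  have hu : (Finset.univ : Finset ι) = insert i (Finset.univ.erase i) := by simp
  have hi : i ∉ (Finset.univ : Finset ι).erase i := by simp
  have key : ∀ j, j + 1 ≤ k → 0 < EE (Finset.univ.erase i) j l := by
    intro j hj
    refine EE_erase_pos (Finset.univ.erase i) i hi j l ?_ j le_rfl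
    intro m h1 h2
    rw [← hu]
    exact h m h1 (by omega)
  refine ⟨?_, ?_, ?_⟩
  · intro j h1 h2
    obtain ⟨j, rfl⟩ : ∃ m, j = m + 1 := ⟨j - 1, by omega⟩
    rw [EE_step]
    have := h (j+1) h1 h2
    nlinarith [key j h2, mul_nonneg (sub_nonneg.2 hc) (key j h2).le]
  · intro hk
    obtain ⟨j, rfl⟩ : ∃ m, k = m + 1 := ⟨k - 1, by omega⟩
    rw [EE_step]
    nlinarith [mul_nonneg (sub_nonneg.2 hc) (key j le_rfl).le]
  · intro hk hc
    obtain ⟨j, rfl⟩ : ∃ m, k = m + 1 := ⟨k - 1, by omega⟩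
    rw [EE_step]
    nlinarith [mul_pos (sub_pos.2 hc) (key j le_rfl)]

lemma EE_mono_aux {ι : Type*} [Fintype ι] [DecidableEq ι] (k : ℕ) (hk : 1 ≤ k) (l m : ι → ℝ) (hlm : ∀ i, l i ≤ m i)
    (h : ∀ j, 1 ≤ j → j ≤ k → 0 < EE Finset.univ j l) (s : Finset ι) :
    (∀ j, 1 ≤ j → j ≤ k → 0 < EE Finset.univ j (fun i => if i ∈ s then m i else l i)) ∧
    EE Finset.univ k l ≤ EE Finset.univ k (fun i => if i ∈ s then m i else l i) ∧
    ((∃ i ∈ s, l i < m i) → EE Finset.univ k l < EE Finset.univ k (fun i => if i ∈ s then m i else l i)) := by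
  induction s using Finset.induction_on with
  | empty => simpa using h
  | insert a s ha ih =>
    have e : (fun i => if i ∈ insert a s then m i else l i) = Function.update (fun i => if i ∈ s then m i else l i) a (m a) := by
      ext i
      by_cases hia : i = a
      · subst hia; simp
      · simp [hia]
    rw [e]
    obtain ⟨i1, i2, i3⟩ := ih
    obtain ⟨s1, s2, s3⟩ := EE_step_mono k (fun i => if i ∈ s then m i else l i) a (m a) (by simp [ha, hlm]) i1
    refine ⟨s1, i2.trans (s2 hk), ?_⟩
    rintro ⟨i, his, hi⟩
    rcases Finset.mem_insert.1 his with rfl | his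
    · exact i2.trans_lt (s3 hk (by simpa [ha] using hi))
    · exact (i3 ⟨i, his, hi⟩).trans_le (s2 hk)

lemma esymm_mono {n : ℕ} (k : ℕ) (hk : 1 ≤ k) (l m : Fin n → ℝ) (hlm : ∀ i, l i ≤ m i)
    (h : ∀ j, 1 ≤ j → j ≤ k → 0 < esymmVec j l) :
    esymmVec k l ≤ esymmVec k m ∧ ((∃ i, l i < m i) → esymmVec k l < esymmVec k m) := by
  have := EE_mono_aux k hk l m hlm h Finset.univ
  simpa [EE, esymmVec] using this.2

/-- ratio bound in the Garding cone -/
lemma esymm_ratio {n : ℕ} (k : ℕ) (l : Fin n → ℝ)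
    (h : ∀ j, 1 ≤ j → j ≤ k → 0 < esymmVec j l) :
    ∀ j, j + 1 ≤ k → esymmVec (j+1) l ≤ esymmVec j l * esymmVec 1 l := by
  intro j
  induction j with
  | zero => intro _; simp [esymmVec]
  | succ j ih =>
    intro hj
    have i1 := ih (by omega)
    have hN : esymmVec j l * esymmVec (j+2) l ≤ (esymmVec (j+1) l)^2 := EE_newton Finset.univ j l
    have p1 := h (j+1) (by omega) (by omega)
    have p0 : 0 < esymmVec j l := by
      rcases Nat.eq_zero_or_pos j with rfl | hj0
      · simp [esymmVec]
      · exact h j hj0 (by omega)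
    have : esymmVec j l * esymmVec (j+2) l ≤ esymmVec j l * (esymmVec (j+1) l * esymmVec 1 l) := by
      nlinarith
    exact le_of_mul_le_mul_left this p0

/-- sigma via the characteristic polynomial -/
def sig {n : ℕ} (k : ℕ) (A : Matrix (Fin n) (Fin n) ℝ) : ℝ := (-1)^k * A.charpoly.coeff (n-k)

lemma esymm_eq_sig {n k : ℕ} (hkn : k ≤ n) (A : Matrix (Fin n) (Fin n) ℝ) (hA : A.IsHermitian) :
    esymmVec k hA.eigenvalues = sig k A := by
  unfold sig
  rw [hA.charpoly_eq]
  have : ∀ i, (Polynomial.X - Polynomial.C ((hA.eigenvalues i : ℝ)) : Polynomial ℝ) = Polynomial.X + Polynomial.C (- hA.eigenvalues i) := by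
    intro i; simp [sub_eq_add_neg]
  simp only [RCLike.ofReal_real_eq_id, id, this]
  rw [Finset.prod_X_add_C_coeff _ _ (by simp)]
  simp only [Finset.card_univ, Fintype.card_fin]
  rw [show n - (n-k) = k by omega]
  unfold esymmVec
  rw [Finset.mul_sum]
  apply Finset.sum_congr rfl
  intro S hS
  rw [Finset.prod_neg, (Finset.mem_powersetCard.1 hS).2, ← mul_assoc, ← mul_pow]
  simp

lemma sigmaMat_eq_sig {n k : ℕ} (hkn : k ≤ n) (A : Matrix (Fin n) (Fin n) ℝ) (hA : A.IsHermitian) :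
    sigmaMat k A = sig k A := by
  unfold sigmaMat
  rw [dif_pos hA, esymm_eq_sig hkn]

lemma sig_eq_univ {n : ℕ} (k : ℕ) (A : Matrix (Fin n) (Fin n) ℝ) :
    sig k A = (-1)^k * MvPolynomial.eval (fun p : Fin n × Fin n => A p.1 p.2) ((Matrix.charpoly.univ ℝ (Fin n)).coeff (n-k)) := by
  unfold sig
  have := Matrix.charpoly.univ_coeff_eval₂Hom (Fin n) (RingHom.id ℝ) (fun p : Fin n × Fin n => A p.1 p.2) (n-k)
  rw [MvPolynomial.eval, this]
  rfl

lemma continuous_sig {n : ℕ} (k : ℕ) : Continuous (sig k : Matrix (Fin n) (Fin n) ℝ → ℝ) := by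
  have : (sig k : Matrix (Fin n) (Fin n) ℝ → ℝ) = fun A => (-1)^k * MvPolynomial.eval (fun p : Fin n × Fin n => A p.1 p.2) ((Matrix.charpoly.univ ℝ (Fin n)).coeff (n-k)) := by
    ext A; exact sig_eq_univ k A
  rw [this]
  refine continuous_const.mul ((MvPolynomial.continuous_eval _).comp ?_)
  fun_prop

lemma sig_smul {n k : ℕ} (hkn : k ≤ n) (c : ℝ) (A : Matrix (Fin n) (Fin n) ℝ) :
    sig k (c • A) = c^k * sig k A := by
  rw [sig_eq_univ, sig_eq_univ]
  have h := Matrix.charpoly.univ_coeff_isHomogeneous ℝ (Fin n) (n-k) k (by simp; omega)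
  have h2 : MvPolynomial.eval (fun p : Fin n × Fin n => (c • A) p.1 p.2) ((Matrix.charpoly.univ ℝ (Fin n)).coeff (n-k)) = c^k * MvPolynomial.eval (fun p : Fin n × Fin n => A p.1 p.2) ((Matrix.charpoly.univ ℝ (Fin n)).coeff (n-k)) := by
    rw [MvPolynomial.eval_eq, MvPolynomial.eval_eq, Finset.mul_sum]
    apply Finset.sum_congr rfl
    intro d hd
    have hdk := h (MvPolynomial.mem_support_iff.1 hd)
    rw [Pi.one_def, ← Finsupp.degree_eq_weight_one] at hdk
    simp only [Matrix.smul_apply, smul_eq_mul, mul_pow, Finset.prod_mul_distrib]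
    rw [Finset.prod_pow_eq_pow_sum]
    rw [show ∑ i ∈ d.support, d i = k from hdk]
    ring
  rw [h2]; ring

open scoped Matrix in
lemma sig_rank1 {n : ℕ} (k : ℕ) (B : Matrix (Fin n) (Fin n) ℝ) (ξ : Fin n → ℝ) (τ : ℝ) :
    sig k (B + τ • Matrix.vecMulVec ξ ξ) = sig k B + τ * (sig k (B + Matrix.vecMulVec ξ ξ) - sig k B) := by
  have key : (B + τ • Matrix.vecMulVec ξ ξ).charpoly = Polynomial.C (1-τ) * B.charpoly + Polynomial.C τ * (B + Matrix.vecMulVec ξ ξ).charpoly := by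
    apply Polynomial.eq_of_infinite_eval_eq
    have hfin : {x : ℝ | B.charpoly.eval x = 0}.Finite := by
      refine (Multiset.finite_toSet B.charpoly.roots).subset ?_
      intro x hx
      simp only [Set.mem_setOf_eq, Polynomial.mem_roots (B.charpoly_monic.ne_zero)]
      exact hx
    refine (hfin.infinite_compl).mono ?_
    intro x hx
    have hx' : B.charpoly.eval x ≠ 0 := hx
    simp only [Set.mem_setOf_eq, Polynomial.eval_add, Polynomial.eval_mul, Polynomial.eval_C, Matrix.eval_charpoly] at *
    set Mx := Matrix.scalar (Fin n) x - B with hM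
    have hU : IsUnit Mx.det := isUnit_iff_ne_zero.2 hx'
    have gen : ∀ t : ℝ, (Matrix.scalar (Fin n) x - (B + t • Matrix.vecMulVec ξ ξ)).det = Mx.det * (1 - t * (ξ ⬝ᵥ (Mx⁻¹ *ᵥ ξ))) := by
      intro t
      have e : Matrix.scalar (Fin n) x - (B + t • Matrix.vecMulVec ξ ξ) = Mx + Matrix.replicateCol Unit ((-t) • ξ) * Matrix.replicateRow Unit ξ := by
        rw [← Matrix.vecMulVec_eq, hM]
        ext i j
        simp [Matrix.vecMulVec_apply]; ring
      rw [e, Matrix.det_add_replicateCol_mul_replicateRow hU]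
      congr 1
      rw [Matrix.det_unique]
      simp only [Matrix.add_apply, Matrix.one_apply_eq, Matrix.mul_assoc]
      rw [Matrix.mul_apply]
      simp only [Matrix.replicateRow_apply, Matrix.mul_apply, Matrix.replicateCol_apply, dotProduct, Matrix.mulVec, Finset.mul_sum, Pi.smul_apply, smul_eq_mul, sub_eq_add_neg, ← Finset.sum_neg_distrib]
      congr 1
      apply Finset.sum_congr rfl; intro i _
      apply Finset.sum_congr rfl; intro j _
      ring
    rw [gen τ]
    have g1 := gen 1
    rw [one_smul] at g1
    rw [g1]; ring
  unfold sig
  rw [key]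
  simp only [Polynomial.coeff_add, Polynomial.coeff_C_mul]
  ring

lemma sig_addId {n : ℕ} (k : ℕ) : ∃ T : Matrix (Fin n) (Fin n) ℝ × ℝ → ℝ, Continuous T ∧
    ∀ A s, sig k (A + s • (1 : Matrix (Fin n) (Fin n) ℝ)) = sig k A + s * T (A, s) := by
  have key : ∀ S : Finset (Fin n), ∃ T : Matrix (Fin n) (Fin n) ℝ × ℝ → ℝ, Continuous T ∧
    ∀ A s, sig k (A + s • (∑ i ∈ S, Matrix.vecMulVec (Pi.single i 1) (Pi.single i 1) : Matrix (Fin n) (Fin n) ℝ)) = sig k A + s * T (A, s) := by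
    intro S
    induction S using Finset.induction_on with
    | empty => exact ⟨fun _ => 0, continuous_const, by simp⟩
    | insert a S ha ih =>
      obtain ⟨T, hT, h⟩ := ih
      set D : Matrix (Fin n) (Fin n) ℝ := ∑ i ∈ S, Matrix.vecMulVec (Pi.single i 1) (Pi.single i 1) with hD
      set E : Matrix (Fin n) (Fin n) ℝ := Matrix.vecMulVec (Pi.single a 1) (Pi.single a 1) with hE
      refine ⟨fun p => T p + (sig k (p.1 + p.2 • D + E) - sig k (p.1 + p.2 • D)), ?_, ?_⟩
      · have h1 : Continuous fun p : Matrix (Fin n) (Fin n) ℝ × ℝ => sig k (p.1 + p.2 • D + E) :=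
          (continuous_sig k).comp (by fun_prop)
        have h2 : Continuous fun p : Matrix (Fin n) (Fin n) ℝ × ℝ => sig k (p.1 + p.2 • D) :=
          (continuous_sig k).comp (by fun_prop)
        exact hT.add (h1.sub h2)
      · intro A s
        rw [Finset.sum_insert ha, smul_add, add_comm (s • _) (s • _), ← add_assoc, sig_rank1, ← hD, ← hE]
        simp only [h]
        ring
  obtain ⟨T, hT, h⟩ := key Finset.univ
  refine ⟨T, hT, ?_⟩
  intro A s
  rw [← h]
  congr 3
  ext i j
  simp [Matrix.sum_apply, Matrix.vecMulVec_apply, Matrix.one_apply, Pi.single_apply]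

lemma quad_eq {n : ℕ} (A : Matrix (Fin n) (Fin n) ℝ) (hA : A.IsHermitian) (x : Euc n) :
    ⟪x, A.toEuclideanLin x⟫ = ∑ j, hA.eigenvalues j * ⟪hA.eigenvectorBasis j, x⟫^2 := by
  rw [← hA.eigenvectorBasis.sum_inner_mul_inner]
  apply Finset.sum_congr rfl
  intro j _
  have hs := Matrix.isSymmetric_toEuclideanLin_iff.mpr hA
  rw [← hs (hA.eigenvectorBasis j) x]
  have : A.toEuclideanLin (hA.eigenvectorBasis j) = hA.eigenvalues j • hA.eigenvectorBasis j := by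
    have := hA.mulVec_eigenvectorBasis j
    ext i
    simpa using congrFun this i
  rw [this, inner_smul_left, real_inner_comm]
  simp; ring

lemma weyl {n : ℕ} (A B : Matrix (Fin n) (Fin n) ℝ) (hA : A.IsHermitian) (hB : B.IsHermitian)
    (h : ∀ x : Euc n, ⟪x, A.toEuclideanLin x⟫ ≤ ⟪x, B.toEuclideanLin x⟫) (i : Fin n) :
    hA.eigenvalues i ≤ hB.eigenvalues i := by
  by_contra hc
  push Not at hc
  set e := (Fintype.equivOfCardEq (Fintype.card_fin (Fintype.card (Fin n)))).symm with he
  have mA : ∀ j l, e j ≤ e l → hA.eigenvalues l ≤ hA.eigenvalues j := fun j l hjl => hA.eigenvalues₀_antitone hjl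
  have mB : ∀ j l, e j ≤ e l → hB.eigenvalues l ≤ hB.eigenvalues j := fun j l hjl => hB.eigenvalues₀_antitone hjl
  let f : Euc n →ₗ[ℝ] ({j : Fin n // j ≠ i} → ℝ) := LinearMap.pi fun j =>
    if e j.1 < e i then (innerSL ℝ (hB.eigenvectorBasis j.1) : Euc n →L[ℝ] ℝ).toLinearMap else (innerSL ℝ (hA.eigenvectorBasis j.1) : Euc n →L[ℝ] ℝ).toLinearMap
  have hn : 0 < n := i.pos
  have hk : LinearMap.ker f ≠ ⊥ := by
    apply LinearMap.ker_ne_bot_of_finrank_lt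
    simp [Fintype.card_subtype_compl]
    omega
  obtain ⟨x, hx, hx0⟩ := (Submodule.ne_bot_iff _).1 hk
  have hfx : f x = 0 := hx
  have c1 : ∀ j, e j < e i → ⟪hB.eigenvectorBasis j, x⟫ = 0 := by
    intro j hj
    have := congrFun hfx ⟨j, fun h => by rw [h] at hj; exact lt_irrefl _ hj⟩
    simpa [f, hj] using this
  have c2 : ∀ j, e i < e j → ⟪hA.eigenvectorBasis j, x⟫ = 0 := by
    intro j hj
    have := congrFun hfx ⟨j, fun h => by rw [h] at hj; exact lt_irrefl _ hj⟩
    simpa [f, not_lt.2 hj.le] using this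
  have hxx := h x
  rw [quad_eq A hA, quad_eq B hB] at hxx
  have nA : ∑ j, ⟪hA.eigenvectorBasis j, x⟫^2 = ‖x‖^2 := by
    rw [← hA.eigenvectorBasis.sum_sq_norm_inner_right x]; simp
  have nB : ∑ j, ⟪hB.eigenvectorBasis j, x⟫^2 = ‖x‖^2 := by
    rw [← hB.eigenvectorBasis.sum_sq_norm_inner_right x]; simp
  have b1 : hA.eigenvalues i * ‖x‖^2 ≤ ∑ j, hA.eigenvalues j * ⟪hA.eigenvectorBasis j, x⟫^2 := by
    rw [← nA, Finset.mul_sum]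
    apply Finset.sum_le_sum
    intro j _
    rcases lt_or_ge (e i) (e j) with hj | hj
    · rw [c2 j hj]; simp
    · exact mul_le_mul_of_nonneg_right (mA _ _ hj) (sq_nonneg _)
  have b2 : ∑ j, hB.eigenvalues j * ⟪hB.eigenvectorBasis j, x⟫^2 ≤ hB.eigenvalues i * ‖x‖^2 := by
    rw [← nB, Finset.mul_sum]
    apply Finset.sum_le_sum
    intro j _
    rcases lt_or_ge (e j) (e i) with hj | hj
    · rw [c1 j hj]; simp
    · exact mul_le_mul_of_nonneg_right (mB _ _ hj) (sq_nonneg _)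
  have : 0 < ‖x‖^2 := by positivity
  nlinarith

lemma sig_mono {n k : ℕ} (hk : 1 ≤ k) (hkn : k ≤ n) (A B : Matrix (Fin n) (Fin n) ℝ)
    (hA : InGardingCone k A) (hB : B.IsHermitian)
    (h : ∀ x : Euc n, ⟪x, A.toEuclideanLin x⟫ ≤ ⟪x, B.toEuclideanLin x⟫) :
    sig k A ≤ sig k B ∧ (A.trace < B.trace → sig k A < sig k B) := by
  obtain ⟨hA, hg⟩ := hA
  have hw := weyl A B hA hB h
  have := esymm_mono k hk _ _ hw hg
  rw [esymm_eq_sig hkn, esymm_eq_sig hkn] at this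
  refine ⟨this.1, fun ht => this.2 ?_⟩
  by_contra hc
  push Not at hc
  rw [hA.trace_eq_sum_eigenvalues, hB.trace_eq_sum_eigenvalues] at ht
  have : ∑ i, hB.eigenvalues i ≤ ∑ i, hA.eigenvalues i := Finset.sum_le_sum fun i _ => hc i
  simp at ht
  linarith

/-- barrier algebra -/
lemma barrier_alg {n k : ℕ} (hk : 1 ≤ k) (hkn : k ≤ n) (A₀ : Matrix (Fin n) (Fin n) ℝ)
    (hA : InGardingCone k A₀) (ξ₀ : Fin n → ℝ) (hξ : ξ₀ ≠ 0) :
    ∃ α : ℝ, 0 < α ∧ ∀ᶠ p : (Matrix (Fin n) (Fin n) ℝ × (Fin n → ℝ)) × ℝ in 𝓝 ((A₀, ξ₀), 0),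
      0 < p.2 → sig k (p.1.1 + p.2 • (1 : Matrix (Fin n) (Fin n) ℝ) + (-(2 * α * p.2)) • Matrix.vecMulVec p.1.2 p.1.2) < sig k p.1.1 := by
  obtain ⟨T, hT, hTe⟩ := sig_addId (n := n) k
  let S : Matrix (Fin n) (Fin n) ℝ → (Fin n → ℝ) → ℝ := fun B ξ => sig k (B + Matrix.vecMulVec ξ ξ) - sig k B
  have hS0 : 0 < S A₀ ξ₀ := by
    have hH : (Matrix.vecMulVec ξ₀ ξ₀).IsHermitian := by
      ext i j; simp [Matrix.vecMulVec_apply, mul_comm]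
    have := (sig_mono hk hkn A₀ (A₀ + Matrix.vecMulVec ξ₀ ξ₀) hA (hA.1.add hH) ?_).2 ?_
    · exact sub_pos.2 this
    · intro x
      rw [map_add, LinearMap.add_apply, inner_add_right]
      have : ⟪x, (Matrix.vecMulVec ξ₀ ξ₀).toEuclideanLin x⟫ = (∑ i, ξ₀ i * x i)^2 := by
        simp only [PiLp.inner_apply, Matrix.toLpLin_apply, Matrix.mulVec, dotProduct, Matrix.vecMulVec_apply, RCLike.inner_apply, conj_trivial]
        rw [sq, Finset.sum_mul]
        apply Finset.sum_congr rfl; intro i _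
        rw [Finset.mul_sum, Finset.sum_mul]
        apply Finset.sum_congr rfl; intro j _
        ring
      rw [this]; nlinarith [sq_nonneg (∑ i, ξ₀ i * x i)]
    · rw [Matrix.trace_add, Matrix.trace_vecMulVec]
      have : 0 < ξ₀ ⬝ᵥ ξ₀ := by
        rcases (dotProduct_self_star_nonneg ξ₀).lt_or_eq with h | h
        · simpa using h
        · exact absurd (dotProduct_self_eq_zero.1 (by simpa using h.symm)) hξ
      linarith
  let α := (|T (A₀, 0)| + 1) / (2 * S A₀ ξ₀)
  have hα : 0 < α := by positivity
  refine ⟨α, hα, ?_⟩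
  have hQ : Continuous fun p : (Matrix (Fin n) (Fin n) ℝ × (Fin n → ℝ)) × ℝ => T (p.1.1, p.2) - 2 * α * S (p.1.1 + p.2 • (1 : Matrix (Fin n) (Fin n) ℝ)) p.1.2 := by
    refine (hT.comp (by fun_prop)).sub (continuous_const.mul ?_)
    refine Continuous.sub ((continuous_sig k).comp ?_) ((continuous_sig k).comp (by fun_prop))
    refine Continuous.add (by fun_prop) ?_
    refine continuous_matrix fun i j => ?_
    simp only [Matrix.vecMulVec_apply]
    fun_prop
  have hneg : T (A₀, 0) - 2 * α * S (A₀ + (0:ℝ) • (1 : Matrix (Fin n) (Fin n) ℝ)) ξ₀ < 0 := by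
    rw [zero_smul, add_zero]
    have : 2 * α * S A₀ ξ₀ = |T (A₀, 0)| + 1 := by
      simp only [α]; field_simp
    rw [this]
    linarith [le_abs_self (T (A₀, 0))]
  filter_upwards [hQ.continuousAt.eventually_lt continuousAt_const hneg] with p hp hp2
  rw [sig_rank1, hTe]
  have : S (p.1.1 + p.2 • (1 : Matrix (Fin n) (Fin n) ℝ)) p.1.2 = sig k (p.1.1 + p.2 • (1 : Matrix (Fin n) (Fin n) ℝ) + Matrix.vecMulVec p.1.2 p.1.2) - (sig k p.1.1 + p.2 * T (p.1.1, p.2)) := by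
    rw [← hTe]
  rw [← this]
  nlinarith

/-- closure of Garding cone with positive sigma_k -/
lemma garding_closed {n k : ℕ} (hk : 1 ≤ k) (hkn : k ≤ n) (A : Matrix (Fin n) (Fin n) ℝ) (hA : A.IsHermitian)
    (hpos : 0 < sig k A) (h0 : ∀ j, 1 ≤ j → j ≤ k → 0 ≤ sig j A)
    (hr : ∀ j, 1 ≤ j → j + 1 ≤ k → sig (j+1) A ≤ sig j A * sig 1 A) : InGardingCone k A := by
  refine ⟨hA, ?_⟩
  have key : ∀ m, m < k → 0 < sig (k - m) A := by
    intro m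
    induction m with
    | zero => intro _; simpa using hpos
    | succ m ih =>
      intro hm
      have i1 := ih (by omega)
      have h2 := hr (k - (m+1)) (by omega) (by omega)
      rw [show k - (m+1) + 1 = k - m by omega] at h2
      have h3 := h0 (k - (m+1)) (by omega) (by omega)
      rcases h3.lt_or_eq with h | h
      · exact h
      · rw [← h] at h2; linarith
  intro j h1 h2
  rw [esymm_eq_sig (by omega)]
  have := key (k - j) (by omega)
  rwa [show k - (k - j) = j by omega] at this

lemma garding_sig {n k : ℕ} (hkn : k ≤ n) (A : Matrix (Fin n) (Fin n) ℝ) (hA : InGardingCone k A) :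
    (∀ j, 1 ≤ j → j ≤ k → 0 < sig j A) ∧ (∀ j, 1 ≤ j → j + 1 ≤ k → sig (j+1) A ≤ sig j A * sig 1 A) := by
  obtain ⟨hA, h⟩ := hA
  refine ⟨fun j h1 h2 => ?_, fun j h1 h2 => ?_⟩
  · rw [← esymm_eq_sig (by omega) A hA]; exact h j h1 h2
  · have := esymm_ratio k _ h j h2
    rwa [esymm_eq_sig (by omega), esymm_eq_sig (by omega), esymm_eq_sig (by omega)] at this

lemma garding_smul {n k : ℕ} (hkn : k ≤ n) (A : Matrix (Fin n) (Fin n) ℝ) (hA : InGardingCone k A) (c : ℝ) (hc : 0 < c) :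
    InGardingCone k (c • A) := by
  have h := (garding_sig hkn A hA).1
  have hH : (c • A).IsHermitian := by
    have := hA.1
    ext i j
    simp [← this.apply i j]
  refine ⟨hH, fun j h1 h2 => ?_⟩
  rw [esymm_eq_sig (by omega), sig_smul (by omega)]
  have := h j h1 h2
  positivity

/-- second derivative -/
def D2 {n : ℕ} (f : Euc n → ℝ) (x : Euc n) : Euc n →L[ℝ] Euc n →L[ℝ] ℝ := fderiv ℝ (fderiv ℝ f) x

/-- Hessian via fderiv -/
def HH {n : ℕ} (f : Euc n → ℝ) (x : Euc n) : Matrix (Fin n) (Fin n) ℝ :=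
  fun i j => D2 f x (EuclideanSpace.single i (1:ℝ)) (EuclideanSpace.single j (1:ℝ))

lemma hessianWithin_eq {n : ℕ} (u : Euc n → ℝ) (s : Set (Euc n)) (x : Euc n) (hs : s ∈ 𝓝 x) :
    hessianWithin u s x = HH u x := by
  have h : iteratedFDerivWithin ℝ 2 u s x = iteratedFDeriv ℝ 2 u x := by
    rw [← iteratedFDerivWithin_univ]
    exact iteratedFDerivWithin_congr_set (by simpa using hs) 2
  ext i j
  simp only [hessianWithin, HH, D2]
  rw [h, iteratedFDeriv_two_apply]
  simp

lemma D2_diff {n : ℕ} {f : Euc n → ℝ} {x : Euc n} (hf : ContDiffAt ℝ 2 f x) :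
    DifferentiableAt ℝ (fderiv ℝ f) x :=
  (hf.fderiv_right (m := 1) (by norm_num)).differentiableAt (by norm_num)

lemma ev_diff {n : ℕ} {f : Euc n → ℝ} {x : Euc n} (hf : ContDiffAt ℝ 2 f x) :
    ∀ᶠ y in 𝓝 x, DifferentiableAt ℝ f y := by
  filter_upwards [hf.eventually (by simp)] with y hy
  exact hy.differentiableAt (by norm_num)

lemma D2_sub {n : ℕ} {f g : Euc n → ℝ} {x : Euc n} (hf : ContDiffAt ℝ 2 f x) (hg : ContDiffAt ℝ 2 g x) :
    D2 (fun y => f y - g y) x = D2 f x - D2 g x := by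
  unfold D2
  have : fderiv ℝ (fun y => f y - g y) =ᶠ[𝓝 x] fun y => fderiv ℝ f y - fderiv ℝ g y := by
    filter_upwards [ev_diff hf, ev_diff hg] with y h1 h2
    exact fderiv_fun_sub h1 h2
  rw [this.fderiv_eq, fderiv_fun_sub (D2_diff hf) (D2_diff hg)]

lemma D2_smul {n : ℕ} {f : Euc n → ℝ} {x : Euc n} (hf : ContDiffAt ℝ 2 f x) (c : ℝ) :
    D2 (fun y => c * f y) x = c • D2 f x := by
  unfold D2
  have : fderiv ℝ (fun y => c * f y) =ᶠ[𝓝 x] fun y => c • fderiv ℝ f y := by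
    filter_upwards [ev_diff hf] with y h1
    exact fderiv_const_mul h1 c
  rw [this.fderiv_eq, fderiv_fun_const_smul (D2_diff hf)]

lemma HH_smul {n : ℕ} {f : Euc n → ℝ} {x : Euc n} (hf : ContDiffAt ℝ 2 f x) (c : ℝ) :
    HH (fun y => c * f y) x = c • HH f x := by
  ext i j
  simp [HH, D2_smul hf]

lemma HH_quad {n : ℕ} (f : Euc n → ℝ) (p x : Euc n) :
    ⟪x, (HH f p).toEuclideanLin x⟫ = D2 f p x x := by
  have hx : x = ∑ i, x i • EuclideanSpace.single i (1:ℝ) := by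
    ext j; simp [Finset.sum_apply, Pi.single_apply]
  conv_rhs => rw [hx]
  simp only [map_sum, map_smul, ContinuousLinearMap.sum_apply, ContinuousLinearMap.smul_apply, smul_eq_mul]
  simp only [PiLp.inner_apply, Matrix.toLpLin_apply, Matrix.mulVec, dotProduct, RCLike.inner_apply, conj_trivial, HH]
  simp only [Finset.mul_sum, Finset.sum_mul]
  rw [Finset.sum_comm]
  apply Finset.sum_congr rfl; intro i _
  apply Finset.sum_congr rfl; intro j _
  ring

lemma HH_herm {n : ℕ} {f : Euc n → ℝ} {x : Euc n} (hf : ContDiffAt ℝ 2 f x) : (HH f x).IsHermitian := by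
  have := hf.isSymmSndFDerivAt (by simp)
  ext i j
  simp only [Matrix.conjTranspose_apply, HH, D2, star_trivial]
  exact this _ _

lemma second_test {n : ℕ} {f : Euc n → ℝ} {p : Euc n} (hf : ContDiffAt ℝ 2 f p) (hm : IsLocalMax f p) (v : Euc n) :
    D2 f p v v ≤ 0 := by
  by_contra hc
  push Not at hc
  let g : ℝ → ℝ := fun t => f (p + t • v)
  have hline : ∀ t : ℝ, HasDerivAt (fun t : ℝ => p + t • v) v t := by
    intro t
    simpa using ((hasDerivAt_id t).smul_const v).const_add p
  have hcont : Tendsto (fun t : ℝ => p + t • v) (𝓝 0) (𝓝 p) := by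
    have := (hline 0).continuousAt.tendsto
    simpa using this
  have hg : deriv g =ᶠ[𝓝 0] fun t => fderiv ℝ f (p + t • v) v := by
    filter_upwards [hcont.eventually (ev_diff hf)] with t ht
    exact (ht.hasFDerivAt.comp_hasDerivAt t (hline t)).deriv
  have hg2 : deriv (deriv g) 0 = D2 f p v v := by
    rw [hg.deriv_eq]
    have h1 : HasFDerivAt (fderiv ℝ f) (D2 f p) (p + (0:ℝ) • v) := by
      simp only [zero_smul, add_zero]
      exact (D2_diff hf).hasFDerivAt
    have h2 := h1.comp_hasDerivAt (0:ℝ) (hline 0)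
    have h3 := h2.clm_apply (hasDerivAt_const (0:ℝ) v)
    simpa using h3.deriv
  have hmax : IsLocalMax g 0 := by
    have : ∀ᶠ t in 𝓝 (0:ℝ), f (p + t • v) ≤ f p := hcont.eventually hm
    simpa [IsLocalMax, IsMaxFilter, g] using this
  have hd0 : deriv g 0 = 0 := hmax.deriv_eq_zero
  have hcg : ContinuousAt g 0 := by
    have : ContinuousAt f (p + (0:ℝ) • v) := by simpa using hf.continuousAt
    exact ContinuousAt.comp (g := f) (f := fun t : ℝ => p + t • v) this (hline 0).continuousAt
  have hmin : IsLocalMin g 0 := isLocalMin_of_deriv_deriv_pos (by rw [hg2]; exact hc) hd0 hcg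
  have hconst : g =ᶠ[𝓝 0] fun _ => g 0 := by
    filter_upwards [hmax, hmin] with t h1 h2
    exact le_antisymm h1 h2
  have hd1 : deriv g =ᶠ[𝓝 0] fun _ => 0 := by
    filter_upwards [hconst.eventuallyEq_nhds] with t ht
    rw [ht.deriv_eq]; simp
  rw [← hg2, hd1.deriv_eq] at hc
  simp at hc

lemma touch {n k : ℕ} (hk : 1 ≤ k) (hkn : k ≤ n) {f g : Euc n → ℝ} {x : Euc n} (hf : ContDiffAt ℝ 2 f x) (hg : ContDiffAt ℝ 2 g x)
    (hm : IsLocalMax (fun y => f y - g y) x) (hG : InGardingCone k (HH f x)) :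
    sig k (HH f x) ≤ sig k (HH g x) := by
  refine (sig_mono hk hkn _ _ hG (HH_herm hg) ?_).1
  intro v
  rw [HH_quad, HH_quad]
  have := second_test (hf.sub hg) hm v
  have e : D2 (fun y => f y - g y) x = D2 f x - D2 g x := D2_sub hf hg
  change D2 (fun y => f y - g y) x v v ≤ 0 at this
  rw [e] at this
  simp at this
  linarith

/-- barrier -/
def bar {n : ℕ} (α : ℝ) (y : Euc n) (x : Euc n) : ℝ := Real.exp (-α * ‖x - y‖^2)

lemma bar_contDiff {n : ℕ} (α : ℝ) (y : Euc n) : ContDiff ℝ 2 (bar α y) := by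
  unfold bar
  exact (contDiff_const.mul ((contDiff_id.sub contDiff_const).norm_sq ℝ)).exp

lemma bar_fderiv {n : ℕ} (α : ℝ) (y x : Euc n) :
    HasFDerivAt (bar α y) ((-2 * α * bar α y x) • innerSL ℝ (x - y)) x := by
  have h1 : HasFDerivAt (fun x : Euc n => ‖x - y‖^2) (2 • innerSL ℝ (x - y)) x := by
    simpa using ((hasFDerivAt_id x).sub_const y).norm_sq
  have h2 := (h1.const_mul (-α)).exp
  refine h2.congr_fderiv ?_
  ext v
  simp [bar]
  ring

lemma bar_D2 {n : ℕ} (α : ℝ) (y x v w : Euc n) :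
    D2 (bar α y) x v w = bar α y x * (4 * α^2 * ⟪x - y, v⟫ * ⟪x - y, w⟫ - 2 * α * ⟪v, w⟫) := by
  unfold D2
  have e : fderiv ℝ (bar α y) = fun x => (-2 * α * bar α y x) • innerSL ℝ (x - y) := by
    ext1 x; exact (bar_fderiv α y x).fderiv
  rw [e]
  have h1 : HasFDerivAt (fun x : Euc n => innerSL ℝ (x - y)) (innerSL ℝ : Euc n →L[ℝ] Euc n →L[ℝ] ℝ) x := by
    have := (innerSL ℝ : Euc n →L[ℝ] Euc n →L[ℝ] ℝ).hasFDerivAt.comp x ((hasFDerivAt_id x).sub_const y)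
    exact this.congr_fderiv (by ext a b; simp)
  have h2 := ((bar_fderiv α y x).const_mul (-2 * α)).smul h1
  have h3 : fderiv ℝ (fun x => (-2 * α * bar α y x) • innerSL ℝ (x - y)) x = _ := h2.fderiv
  rw [h3]
  simp only [ContinuousLinearMap.add_apply, ContinuousLinearMap.smul_apply, ContinuousLinearMap.smulRight_apply, smul_eq_mul]
  have i1 : ∀ a b : Euc n, (innerSL ℝ a) b = ⟪a, b⟫ := fun a b => rfl
  rw [i1, i1, i1]
  ring

lemma HH_barrier {n : ℕ} {ψ : Euc n → ℝ} {x : Euc n} (hψ : ContDiffAt ℝ 2 ψ x) (α δ c : ℝ) (y : Euc n) :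
    HH (fun z => ψ z - δ * (bar α y z - c)) x = HH ψ x + (2 * α * δ * bar α y x) • (1 : Matrix (Fin n) (Fin n) ℝ)
      + (-(2 * α * (2 * α * δ * bar α y x))) • Matrix.vecMulVec (fun i => (x - y) i) (fun i => (x - y) i) := by
  have hb : ContDiffAt ℝ 2 (fun z => bar α y z - c) x := (bar_contDiff α y).contDiffAt.sub contDiffAt_const
  have e1 : D2 (fun z => bar α y z - c) x = D2 (bar α y) x := by
    unfold D2
    congr 1
    ext1 z
    simp [fderiv_sub_const]
  have e : D2 (fun z => ψ z - δ * (bar α y z - c)) x = D2 ψ x - δ • D2 (bar α y) x := by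
    rw [D2_sub (f := ψ) (g := fun z => δ * (bar α y z - c)) hψ (contDiffAt_const.mul hb), D2_smul hb, e1]
  ext i j
  simp only [HH, e, Matrix.add_apply, Matrix.smul_apply, Matrix.vecMulVec_apply, ContinuousLinearMap.sub_apply, ContinuousLinearMap.smul_apply, bar_D2, smul_eq_mul, Matrix.one_apply]
  have hin : ∀ i, ⟪x - y, EuclideanSpace.single i (1:ℝ)⟫ = (x - y) i := by
    intro i; simp [EuclideanSpace.inner_single_right]
  rw [hin, hin]
  have h3 : ⟪EuclideanSpace.single i (1:ℝ), (EuclideanSpace.single j (1:ℝ) : Euc n)⟫ = if i = j then 1 else 0 := by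
    simp [EuclideanSpace.inner_single_left, Pi.single_apply]
  rw [h3]
  split_ifs <;> ring

lemma ring_nhds {n : ℕ} {Ω₁ : Set (Euc n)} (hΩo : IsOpen Ω₁) {ε : ℝ} {x : Euc n} (hx : x ∈ Ω₁ \ closedBall 0 ε) :
    ringSet Ω₁ 0 ε ∈ 𝓝 x :=
  mem_of_superset ((hΩo.sdiff isClosed_closedBall).mem_nhds hx) subset_closure

lemma ring_sub {n : ℕ} {Ω₁ : Set (Euc n)} {ε : ℝ} : ringSet Ω₁ 0 ε ⊆ closure Ω₁ :=
  closure_mono diff_subset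

lemma ring_norm {n : ℕ} {Ω₁ : Set (Euc n)} {ε : ℝ} {x : Euc n} (hx : x ∈ ringSet Ω₁ 0 ε) : ε ≤ ‖x‖ := by
  have : ringSet Ω₁ 0 ε ⊆ {x : Euc n | ε ≤ ‖x‖} := by
    apply closure_minimal
    · intro y hy
      have := hy.2
      simp at this
      exact this.le
    · exact isClosed_le continuous_const continuous_norm
  exact this hx

lemma ring_mem {n : ℕ} {Ω₁ : Set (Euc n)} {ε : ℝ} {x : Euc n} (hx : x ∈ closure Ω₁) (h : ε < ‖x‖) :
    x ∈ ringSet Ω₁ 0 ε := by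
  have := (isOpen_lt continuous_const continuous_norm : IsOpen {x : Euc n | ε < ‖x‖}).inter_closure (t := Ω₁) ⟨h, hx⟩
  refine closure_mono ?_ this
  rintro y ⟨h1, h2⟩
  refine ⟨h2, ?_⟩
  simpa using h1

lemma ring_cases {n : ℕ} {Ω₁ : Set (Euc n)} (hΩo : IsOpen Ω₁) {ε : ℝ} {x : Euc n} (hx : x ∈ ringSet Ω₁ 0 ε) :
    x ∈ Ω₁ \ closedBall 0 ε ∨ x ∈ frontier Ω₁ ∨ x ∈ sphere (0 : Euc n) ε := by
  by_cases h : x ∈ Ω₁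
  · rcases (ring_norm hx).lt_or_eq with h1 | h1
    · left; refine ⟨h, ?_⟩; simpa using h1
    · right; right; simpa using h1.symm
  · right; left
    rw [hΩo.frontier_eq]
    exact ⟨ring_sub hx, h⟩

lemma u_facts {n k : ℕ} (hkn : k ≤ n) {Ω₁ : Set (Euc n)} (hΩo : IsOpen Ω₁) {ε M : ℝ} {u : Euc n → ℝ}
    (hu : IsSol k Ω₁ 0 ε M u) {x : Euc n} (hx : x ∈ Ω₁ \ closedBall 0 ε) :
    ContDiffAt ℝ 2 u x ∧ InGardingCone k (HH u x) ∧ sig k (HH u x) = 1 := by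
  have hn := ring_nhds hΩo hx
  obtain ⟨h1, h2⟩ := hu.2.1 x hx
  rw [hessianWithin_eq u _ x hn] at h1 h2
  refine ⟨hu.1.contDiffAt hn, h1, ?_⟩
  rw [← h2, sigmaMat_eq_sig hkn _ h1.choose]

lemma psi_facts {n k : ℕ} (hkn : k ≤ n) {Ω₁ : Set (Euc n)} (hΩo : IsOpen Ω₁) {ψ : Euc n → ℝ}
    (hψ : IsSol22 k Ω₁ ψ) {x : Euc n} (hx : x ∈ Ω₁) :
    ContDiffAt ℝ 2 ψ x ∧ InGardingCone k (HH ψ x) ∧ sig k (HH ψ x) = 1 := by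
  have hn : closure Ω₁ ∈ 𝓝 x := mem_of_superset (hΩo.mem_nhds hx) subset_closure
  obtain ⟨h1, h2⟩ := hψ.2.1 x hx
  rw [hessianWithin_eq ψ _ x hn] at h1 h2
  refine ⟨(hψ.1.contDiffAt hn).of_le (by change ((2:ℕ∞):WithTop ℕ∞) ≤ _; exact WithTop.coe_le_coe.2 le_top), h1, ?_⟩
  rw [← h2, sigmaMat_eq_sig hkn _ h1.choose]

lemma max_principle {n : ℕ} {K : Set (Euc n)} (hK : IsCompact K) {f : Euc n → ℝ} (hf : ContinuousOn f K)
    (hb : ∀ x ∈ K, f x ≤ 0 ∨ (K ∈ 𝓝 x ∧ ¬ IsLocalMax f x)) : ∀ x ∈ K, f x ≤ 0 := by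
  intro x hx
  obtain ⟨z, hz, hm⟩ := hK.exists_isMaxOn ⟨x, hx⟩ hf
  rcases hb z hz with h | ⟨h1, h2⟩
  · exact (hm hx).trans h
  · exact absurd (hm.isLocalMax h1) h2

lemma no_max {n k : ℕ} (hk : 1 ≤ k) (hkn : k ≤ n) {f g : Euc n → ℝ} {x : Euc n} (hf : ContDiffAt ℝ 2 f x)
    (hG : InGardingCone k (HH f x)) (h1 : sig k (HH f x) = 1) (hg : ContDiffAt ℝ 2 g x) (h2 : sig k (HH g x) ≤ 1)
    {c : ℝ} (hc : 1 < c) : ¬ IsLocalMax (fun y => c * f y - g y) x := by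
  intro hm
  have hcf : ContDiffAt ℝ 2 (fun y => c * f y) x := contDiffAt_const.mul hf
  have := touch hk hkn hcf hg hm (by rw [HH_smul hf]; exact garding_smul hkn _ hG c (by linarith))
  rw [HH_smul hf, sig_smul hkn, h1] at this
  have h3 : 1 < c ^ k := one_lt_pow₀ hc (by omega)
  linarith

lemma psi_neg {n k : ℕ} (hk : 1 ≤ k) (hkn : k ≤ n) {Ω₁ : Set (Euc n)} (hΩo : IsOpen Ω₁) (hΩb : IsBounded Ω₁) {ψ : Euc n → ℝ}
    (hψ : IsSol22 k Ω₁ ψ) : (∀ x ∈ closure Ω₁, ψ x ≤ 0) ∧ ∀ x ∈ Ω₁, ψ x < 0 := by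
  have key : ∀ x ∈ Ω₁, ¬ IsLocalMax ψ x := by
    intro x hx hm
    obtain ⟨h1, h2, h3⟩ := psi_facts hkn hΩo hψ hx
    have h0 : ContDiffAt ℝ 2 (fun y => (0:ℝ) * ψ y) x := contDiffAt_const.mul h1
    have := touch hk hkn h1 h0 (by simpa using hm) h2
    rw [HH_smul h1, sig_smul hkn, h3, zero_pow (by omega)] at this
    norm_num at this
  have hle : ∀ x ∈ closure Ω₁, ψ x ≤ 0 := by
    apply max_principle hΩb.isCompact_closure hψ.1.continuousOn
    intro x hx
    by_cases h : x ∈ Ω₁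
    · right; exact ⟨mem_of_superset (hΩo.mem_nhds h) subset_closure, key x h⟩
    · left
      exact (hψ.2.2 x (by rw [hΩo.frontier_eq]; exact ⟨hx, h⟩)).le
  refine ⟨hle, fun x hx => ?_⟩
  refine lt_of_le_of_ne (hle x (subset_closure hx)) fun h => key x hx ?_
  filter_upwards [hΩo.mem_nhds hx] with y hy
  rw [h]; exact hle y (subset_closure hy)

lemma ring_compact {n : ℕ} {Ω₁ : Set (Euc n)} (hΩb : IsBounded Ω₁) {ε : ℝ} : IsCompact (ringSet Ω₁ 0 ε) :=
  (hΩb.subset diff_subset).isCompact_closure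

lemma upper {n k : ℕ} (hk : 1 ≤ k) (hkn : k ≤ n) {Ω₁ : Set (Euc n)} (hΩo : IsOpen Ω₁) (hΩb : IsBounded Ω₁) {ψ : Euc n → ℝ}
    (hψ : IsSol22 k Ω₁ ψ) {ε M M₁ : ℝ} {u : Euc n → ℝ} (hu : IsSol k Ω₁ 0 ε M u)
    (hM₁ : 0 < M₁) (hM₁ψ : ∀ x ∈ closure Ω₁, -ψ x < M₁) (hM : M₁ < M) :
    ∀ x ∈ ringSet Ω₁ 0 ε, u x ≤ ψ x := by
  have key : ∀ t : ℝ, 0 < t → ∀ x ∈ ringSet Ω₁ 0 ε, (1 + t) * u x - ψ x ≤ 0 := by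
    intro t ht
    apply max_principle (ring_compact hΩb)
    · exact (continuousOn_const.mul hu.1.continuousOn).sub (hψ.1.continuousOn.mono ring_sub)
    · intro x hx
      rcases ring_cases hΩo hx with h | h | h
      · right
        obtain ⟨h1, h2, h3⟩ := u_facts hkn hΩo hu h
        obtain ⟨g1, g2, g3⟩ := psi_facts hkn hΩo hψ h.1
        exact ⟨ring_nhds hΩo h, no_max hk hkn h1 h2 h3 g1 g3.le (by linarith)⟩
      · left; rw [hu.2.2.1 x h, hψ.2.2 x h]; simp
      · left; rw [hu.2.2.2 x h]
        have := hM₁ψ x (ring_sub hx)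
        nlinarith
  intro x hx
  by_contra hc
  push Not at hc
  have hp : 0 < u x - ψ x := by linarith
  have h2 := key ((u x - ψ x) / (2 * (1 + |u x|))) (by positivity) x hx
  have h3 : (u x - ψ x) / (2 * (1 + |u x|)) * u x ≥ -((u x - ψ x) / 2) := by
    have ha := neg_abs_le (u x)
    have hb := abs_nonneg (u x)
    have e : (u x - ψ x) / (2 * (1 + |u x|)) * (1 + |u x|) = (u x - ψ x) / 2 := by field_simp
    have hq : 0 < (u x - ψ x) / (2 * (1 + |u x|)) := by positivity
    nlinarith
  nlinarith

lemma lower_const {n k : ℕ} (hk : 1 ≤ k) (hkn : k ≤ n) {Ω₁ : Set (Euc n)} (hΩo : IsOpen Ω₁) (hΩb : IsBounded Ω₁) {ψ : Euc n → ℝ}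
    (hψ : IsSol22 k Ω₁ ψ) {ε₀ : ℝ} (hε₀ : 0 < ε₀) (hball : closedBall (0 : Euc n) ε₀ ⊆ Ω₁) (M : ℝ) :
    ∃ C : ℝ, 1 < C ∧ ∀ x ∈ closedBall (0 : Euc n) ε₀, C * ψ x ≤ -M := by
  obtain ⟨z, hz, hm⟩ := (isCompact_closedBall (0 : Euc n) ε₀).exists_isMaxOn ⟨0, by simp [hε₀.le]⟩
    (hψ.1.continuousOn.mono (hball.trans subset_closure))
  have hz0 := (psi_neg hk hkn hΩo hΩb hψ).2 z (hball hz)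
  refine ⟨2 + |M| / (-ψ z), ?_, fun x hx => ?_⟩
  · have : 0 ≤ |M| / (-ψ z) := div_nonneg (abs_nonneg _) (by linarith)
    linarith
  · have hx' : ψ x ≤ ψ z := hm hx
    have hq : 0 ≤ |M| / (-ψ z) := div_nonneg (abs_nonneg _) (by linarith)
    have e : |M| / (-ψ z) * ψ z = -|M| := by field_simp [hz0.ne]
    have := le_abs_self M
    nlinarith

lemma lower {n k : ℕ} (hk : 1 ≤ k) (hkn : k ≤ n) {Ω₁ : Set (Euc n)} (hΩo : IsOpen Ω₁) (hΩb : IsBounded Ω₁) {ψ : Euc n → ℝ}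
    (hψ : IsSol22 k Ω₁ ψ) {ε M C : ℝ} {u : Euc n → ℝ} (hu : IsSol k Ω₁ 0 ε M u)
    (hC : 1 < C) (hCM : ∀ x ∈ closedBall (0 : Euc n) ε, C * ψ x ≤ -M) :
    ∀ x ∈ ringSet Ω₁ 0 ε, C * ψ x ≤ u x := by
  have key : ∀ x ∈ ringSet Ω₁ 0 ε, C * ψ x - u x ≤ 0 := by
    apply max_principle (ring_compact hΩb)
    · exact (continuousOn_const.mul (hψ.1.continuousOn.mono ring_sub)).sub hu.1.continuousOn
    · intro x hx
      rcases ring_cases hΩo hx with h | h | h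
      · right
        obtain ⟨h1, h2, h3⟩ := u_facts hkn hΩo hu h
        obtain ⟨g1, g2, g3⟩ := psi_facts hkn hΩo hψ h.1
        exact ⟨ring_nhds hΩo h, no_max hk hkn g1 g2 g3 h1 h3.le hC⟩
      · left; rw [hu.2.2.1 x h, hψ.2.2 x h]; simp
      · left; rw [hu.2.2.2 x h]
        have := hCM x (sphere_subset_closedBall h)
        linarith
  intro x hx
  have := key x hx
  linarith

lemma one_sided {n : ℕ} {K : Set (Euc n)} (hK : Convex ℝ K) {p y : Euc n} (hp : p ∈ K) (hy : y ∈ K) {F : Euc n → ℝ}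
    {F' : Euc n →L[ℝ] ℝ} (hF : HasFDerivWithinAt F F' K p) (hm : ∀ᶠ x in 𝓝[K] p, F x ≤ F p) : F' (y - p) ≤ 0 :=
  IsLocalMaxOn.hasFDerivWithinAt_nonpos hm hF (mem_posTangentConeAt_of_segment_subset (hK.segment_subset hp (by simpa using hy)))

lemma cl_unique {n : ℕ} {Ω₁ : Set (Euc n)} (hΩo : IsOpen Ω₁) (hΩconv : Convex ℝ Ω₁) {p : Euc n} (hp : p ∈ closure Ω₁) :
    UniqueDiffOn ℝ (closure Ω₁) := by
  apply uniqueDiffOn_convex hΩconv.closure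
  have : Ω₁.Nonempty := closure_nonempty_iff.1 ⟨p, hp⟩
  exact this.mono (interior_maximal subset_closure hΩo)

lemma hess_cont {n : ℕ} {Ω₁ : Set (Euc n)} (hun : UniqueDiffOn ℝ (closure Ω₁)) {ψ : Euc n → ℝ}
    (hψ : ContDiffOn ℝ (⊤ : ℕ∞) ψ (closure Ω₁)) : ContinuousOn (hessianWithin ψ (closure Ω₁)) (closure Ω₁) := by
  have h := hψ.continuousOn_iteratedFDerivWithin (m := 2) (by change ((2:ℕ∞):WithTop ℕ∞) ≤ _; exact WithTop.coe_le_coe.2 le_top) hun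
  refine continuousOn_pi.2 fun i => continuousOn_pi.2 fun j => ?_
  intro x hx
  have := h x hx
  exact ((ContinuousMultilinearMap.apply ℝ (fun _ : Fin 2 => Euc n) ℝ ![EuclideanSpace.single i (1:ℝ), EuclideanSpace.single j (1:ℝ)]).continuous.continuousAt.comp_continuousWithinAt this)

lemma ring_nhdsWithin {n : ℕ} {Ω₁ : Set (Euc n)} {ε : ℝ} {p : Euc n} (h : ε < ‖p‖) :
    ringSet Ω₁ 0 ε ∈ 𝓝[closure Ω₁] p := by
  have := (isOpen_lt continuous_const continuous_norm : IsOpen {x : Euc n | ε < ‖x‖}).mem_nhds h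
  filter_upwards [mem_nhdsWithin_of_mem_nhds this, self_mem_nhdsWithin] with x h1 h2
  exact ring_mem h2 h1

lemma hopf {n k : ℕ} (hk : 1 ≤ k) (hkn : k ≤ n) {Ω₁ : Set (Euc n)} (hΩo : IsOpen Ω₁) (hΩconv : Convex ℝ Ω₁) (hΩb : IsBounded Ω₁)
    {ψ : Euc n → ℝ} (hψ : IsSol22 k Ω₁ ψ) {ε M : ℝ} {u : Euc n → ℝ} (hu : IsSol k Ω₁ 0 ε M u)
    (hle : ∀ x ∈ ringSet Ω₁ 0 ε, u x ≤ ψ x) {p y : Euc n} {r : ℝ} (hp : p ∈ closure Ω₁) (hpε : ε < ‖p‖)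
    (hpu : u p = ψ p) (hA : InGardingCone k (hessianWithin ψ (closure Ω₁) p)) (hr : 0 < r) (hd : dist p y = r)
    (hW : ∀ x ∈ closedBall y r, x ≠ p → x ∈ Ω₁ ∧ (x ∈ ringSet Ω₁ 0 ε → u x < ψ x)) :
    fderivWithin ℝ u (ringSet Ω₁ 0 ε) p (y - p) < fderivWithin ℝ ψ (closure Ω₁) p (y - p) := by
  have hpy : p ≠ y := by rintro rfl; simp at hd; linarith
  have hun := cl_unique hΩo hΩconv hp
  have hξ : (fun i => (p - y) i) ≠ 0 := by
    intro h
    apply hpy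
    rw [← sub_eq_zero]
    ext i
    exact congrFun h i
  obtain ⟨α, hα, hev⟩ := barrier_alg hk hkn _ hA _ hξ
  rw [nhds_prod_eq] at hev
  obtain ⟨P, hP, Q, hQ, hPQ⟩ := Filter.eventually_prod_iff.1 hev
  obtain ⟨s₀, hs₀, hQs⟩ := Metric.eventually_nhds_iff.1 hQ
  have hT : Tendsto (fun x => (hessianWithin ψ (closure Ω₁) x, fun i => (x - y) i)) (𝓝[closure Ω₁] p)
      (𝓝 (hessianWithin ψ (closure Ω₁) p, fun i => (p - y) i)) := by
    apply Tendsto.prodMk_nhds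
    · exact hess_cont hun hψ.1 p hp
    · have : Continuous (fun (x : Euc n) (i : Fin n) => (x - y) i) := by fun_prop
      exact (this.tendsto p).mono_left nhdsWithin_le_nhds
  have hT2 := hT.eventually hP
  obtain ⟨ρ₁, hρ₁, hPρ⟩ := Metric.mem_nhdsWithin_iff.1 hT2
  obtain ⟨ρ, hρ, hρ1, hρ2⟩ : ∃ ρ > 0, ρ < ρ₁ ∧ ρ < ‖p‖ - ε :=
    ⟨min ρ₁ (‖p‖ - ε) / 2, by have : 0 < min ρ₁ (‖p‖ - ε) := lt_min hρ₁ (by linarith)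
                              linarith,
      by have := min_le_left ρ₁ (‖p‖ - ε); have : 0 < min ρ₁ (‖p‖ - ε) := lt_min hρ₁ (by linarith)
         linarith,
      by have := min_le_right ρ₁ (‖p‖ - ε); have : 0 < min ρ₁ (‖p‖ - ε) := lt_min hρ₁ (by linarith)
         linarith⟩
  have hnorm : ∀ x ∈ closedBall p ρ, ε < ‖x‖ := by
    intro x hx
    have h1 : ‖p - x‖ ≤ ρ := by rw [← dist_eq_norm, dist_comm]; exact hx
    have := norm_sub_norm_le p x
    linarith
  have hKr : closure Ω₁ ∩ closedBall p ρ ⊆ ringSet Ω₁ 0 ε := fun x hx => ring_mem hx.1 (hnorm x hx.2)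
  have hKc : IsCompact (closure Ω₁ ∩ closedBall p ρ) := hΩb.isCompact_closure.inter_right isClosed_closedBall
  have hψc : ContinuousOn ψ (closure Ω₁) := hψ.1.continuousOn
  have huc : ContinuousOn u (ringSet Ω₁ 0 ε) := hu.1.continuousOn
  -- the spherical part
  obtain ⟨m, hm, hmS⟩ : ∃ m > 0, ∀ x ∈ (closure Ω₁ ∩ closedBall p ρ) ∩ (sphere p ρ ∩ closedBall y r), u x - ψ x ≤ -m := by
    have hSc : IsCompact ((closure Ω₁ ∩ closedBall p ρ) ∩ (sphere p ρ ∩ closedBall y r)) :=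
      hKc.inter_right (isClosed_sphere.inter isClosed_closedBall)
    rcases ((closure Ω₁ ∩ closedBall p ρ) ∩ (sphere p ρ ∩ closedBall y r)).eq_empty_or_nonempty with h | h
    · exact ⟨1, one_pos, by rw [h]; simp⟩
    · obtain ⟨z, hz, hzm⟩ := hSc.exists_isMaxOn h (f := fun x => u x - ψ x)
        ((huc.mono (inter_subset_left.trans hKr)).sub (hψc.mono (inter_subset_left.trans inter_subset_left)))
      have hzp : z ≠ p := by
        rintro rfl
        have := hz.2.1
        simp at this
        linarith
      have := (hW z hz.2.2 hzp).2 (hKr hz.1)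
      refine ⟨ψ z - u z, by linarith, fun x hx => ?_⟩
      have : u x - ψ x ≤ u z - ψ z := hzm hx
      linarith
  set c := Real.exp (-α * r^2) with hc
  have hbar1 : ∀ x, bar α y x ≤ 1 := by
    intro x; unfold bar; apply Real.exp_le_one_iff.2
    have : 0 ≤ α * ‖x - y‖^2 := by positivity
    linarith
  have hbar0 : ∀ x, 0 < bar α y x := fun x => Real.exp_pos _
  have hc0 : 0 < c := Real.exp_pos _
  have hbarc : ∀ x, r ≤ dist x y → bar α y x ≤ c := by
    intro x hx
    unfold bar
    rw [hc]
    apply Real.exp_le_exp.2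
    rw [dist_eq_norm] at hx
    have : r^2 ≤ ‖x - y‖^2 := by gcongr
    nlinarith
  have hbarp : bar α y p = c := by
    unfold bar; rw [← dist_eq_norm, hd]
  obtain ⟨δ, hδ, hδm, hδs⟩ : ∃ δ > 0, δ ≤ m ∧ 2 * α * δ < s₀ := by
    refine ⟨min m (s₀ / (4 * α)), lt_min hm (by positivity), min_le_left _ _, ?_⟩
    have := min_le_right m (s₀ / (4 * α))
    calc 2 * α * min m (s₀ / (4 * α)) ≤ 2 * α * (s₀ / (4 * α)) := by gcongr
      _ = s₀ / 2 := by field_simp; ring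
      _ < s₀ := by linarith
  have main : ∀ x ∈ closure Ω₁ ∩ closedBall p ρ, u x - (ψ x - δ * (bar α y x - c)) ≤ 0 := by
    apply max_principle hKc
    · refine (huc.mono hKr).sub ((hψc.mono inter_subset_left).sub ?_)
      exact (continuous_const.mul ((bar_contDiff α y).continuous.sub continuous_const)).continuousOn
    · intro x hx
      by_cases hxΩ : x ∈ Ω₁
      · by_cases hxb : x ∈ ball p ρ
        · right
          refine ⟨inter_mem (mem_of_superset (hΩo.mem_nhds hxΩ) subset_closure)
            (mem_of_superset (isOpen_ball.mem_nhds hxb) ball_subset_closedBall), fun hmax => ?_⟩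
          have hxr : x ∈ Ω₁ \ closedBall 0 ε := ⟨hxΩ, by simpa using hnorm x hx.2⟩
          obtain ⟨h1, h2, h3⟩ := u_facts hkn hΩo hu hxr
          obtain ⟨g1, g2, g3⟩ := psi_facts hkn hΩo hψ hxΩ
          have hg : ContDiffAt ℝ 2 (fun z => ψ z - δ * (bar α y z - c)) x :=
            g1.sub (contDiffAt_const.mul ((bar_contDiff α y).contDiffAt.sub contDiffAt_const))
          have h4 := touch hk hkn h1 hg hmax h2
          rw [HH_barrier g1, h3] at h4
          have hPx := hPρ ⟨ball_subset_ball hρ1.le hxb, subset_closure hxΩ⟩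
          have hs : 0 < 2 * α * δ * bar α y x := by have := hbar0 x; positivity
          have hs2 : 2 * α * δ * bar α y x < s₀ := by
            have := hbar1 x
            have : 2 * α * δ * bar α y x ≤ 2 * α * δ * 1 := by gcongr
            linarith
          have h5 := hPQ hPx (hQs (y := 2 * α * δ * bar α y x) (by rw [Real.dist_eq, sub_zero, abs_of_pos hs]; exact hs2)) hs
          rw [hessianWithin_eq ψ _ x (mem_of_superset (hΩo.mem_nhds hxΩ) subset_closure)] at h5
          simp only [g3] at h5
          linarith
        · left
          have hxs : x ∈ sphere p ρ := by
            have h1 : dist x p ≤ ρ := hx.2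
            have h2 : ¬ dist x p < ρ := hxb
            exact le_antisymm h1 (not_lt.1 h2)
          by_cases hxy : x ∈ closedBall y r
          · have := hmS x ⟨hx, hxs, hxy⟩
            have := hbar1 x
            nlinarith
          · have h1 : r < dist x y := by simpa using hxy
            have := hbarc x h1.le
            have := hle x (hKr hx)
            nlinarith
      · left
        have hf : x ∈ frontier Ω₁ := by rw [hΩo.frontier_eq]; exact ⟨hx.1, hxΩ⟩
        rw [hu.2.2.1 x hf, hψ.2.2 x hf]
        have : r ≤ dist x y := by
          by_contra hlt
          push Not at hlt
          have hxp : x ≠ p := by rintro rfl; linarith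
          exact hxΩ (hW x hlt.le hxp).1
        have := hbarc x this
        nlinarith
  have hyΩ : y ∈ Ω₁ := (hW y (by simp [hr.le]) hpy.symm).1
  have hDu : HasFDerivWithinAt u (fderivWithin ℝ u (ringSet Ω₁ 0 ε) p) (closure Ω₁) p :=
    ((hu.1.differentiableOn (by norm_num)) p (ring_mem hp hpε)).hasFDerivWithinAt.mono_of_mem_nhdsWithin (ring_nhdsWithin hpε)
  have hDψ : HasFDerivWithinAt ψ (fderivWithin ℝ ψ (closure Ω₁) p) (closure Ω₁) p :=
    ((hψ.1.differentiableOn (by simp)) p hp).hasFDerivWithinAt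
  have hDb := (((bar_fderiv α y p).sub_const c).const_mul δ).hasFDerivWithinAt (s := closure Ω₁)
  have hfin := one_sided hΩconv.closure hp (subset_closure hyΩ) (hDu.sub (hDψ.sub hDb)) (by
    filter_upwards [self_mem_nhdsWithin, mem_nhdsWithin_of_mem_nhds (closedBall_mem_nhds p hρ)] with x h1 h2
    have := main x ⟨h1, h2⟩
    simp only [Pi.sub_apply, hbarp, hpu]
    linarith)
  have hin : ⟪p - y, y - p⟫ = - r^2 := by
    rw [← neg_sub p y, inner_neg_right, real_inner_self_eq_norm_sq, ← dist_eq_norm, hd]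
  have i1 : ∀ a b : Euc n, (innerSL ℝ a) b = ⟪a, b⟫ := fun a b => rfl
  simp only [ContinuousLinearMap.sub_apply, ContinuousLinearMap.smul_apply, smul_eq_mul, i1, hin, hbarp] at hfin
  have : 0 < 2 * α * δ * c * r^2 := by positivity
  linarith

lemma smp {n k : ℕ} (hk : 1 ≤ k) (hkn : k ≤ n) {Ω₁ : Set (Euc n)} (hΩo : IsOpen Ω₁) (hΩconv : Convex ℝ Ω₁) (hΩb : IsBounded Ω₁)
    {ψ : Euc n → ℝ} (hψ : IsSol22 k Ω₁ ψ) {ε M : ℝ} {u : Euc n → ℝ} (hu : IsSol k Ω₁ 0 ε M u) (hε : 0 < ε)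
    (h0 : (0 : Euc n) ∈ Ω₁) (hMψ : ∀ x ∈ closure Ω₁, -ψ x < M)
    (hle : ∀ x ∈ ringSet Ω₁ 0 ε, u x ≤ ψ x) : ∀ x ∈ Ω₁, x ∈ ringSet Ω₁ 0 ε → u x < ψ x := by
  set R := ringSet Ω₁ 0 ε with hR
  have hRc : IsClosed R := isClosed_closure
  set Z : Set (Euc n) := Ω₁ᶜ ∪ {x ∈ R | ψ x ≤ u x} with hZ
  have hZc : IsClosed Z := hΩo.isClosed_compl.union
    (hRc.isClosed_le (hψ.1.continuousOn.mono ring_sub) hu.1.continuousOn)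
  have hW : ∀ x, x ∈ Zᶜ → x ∈ Ω₁ ∧ (x ∈ R → u x < ψ x) := by
    intro x hx
    simp only [hZ, mem_compl_iff, mem_union, not_or, not_not, mem_setOf_eq, not_and, not_le] at hx
    exact hx
  have hsub : Ω₁ ⊆ Zᶜ := by
    apply hΩconv.isPreconnected.subset_of_closure_inter_subset hZc.isOpen_compl
    · refine ⟨0, h0, ?_⟩
      simp only [hZ, mem_compl_iff, mem_union, not_or, not_not, mem_setOf_eq, not_and, not_le]
      refine ⟨h0, fun h => ?_⟩
      have := ring_norm h
      simp at this
      linarith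
    · rintro x0 ⟨hx0, hx0Ω⟩
      by_contra hx0Z
      have hx0Z' : x0 ∈ Z := not_not.1 hx0Z
      obtain ⟨η, hη, hηΩ⟩ := Metric.isOpen_iff.1 hΩo x0 hx0Ω
      obtain ⟨x1, hx1, hx01⟩ := Metric.mem_closure_iff.1 hx0 (η/2) (by linarith)
      obtain ⟨z, hz, hzd⟩ := hZc.exists_infDist_eq_dist ⟨x0, hx0Z'⟩ x1
      have hmin : ∀ x ∈ Z, dist x1 z ≤ dist x1 x := fun x hx => hzd ▸ infDist_le_dist_of_mem hx
      have hzΩ : z ∈ Ω₁ := by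
        apply hηΩ
        have h1 := hmin x0 hx0Z'
        have h2 := dist_triangle z x1 x0
        rw [dist_comm z x1] at h2
        rw [dist_comm x0 x1] at hx01
        rw [mem_ball]
        linarith
      have hz2 : z ∈ R ∧ ψ z ≤ u z := by
        rcases hz with h | h
        · exact absurd hzΩ h
        · exact h
      have hzε : z ∈ Ω₁ \ closedBall 0 ε := by
        rcases ring_cases hΩo hz2.1 with h | h | h
        · exact h
        · rw [hΩo.frontier_eq] at h; exact absurd hzΩ h.2
        · have h1 := hu.2.2.2 z h
          have h2 := hMψ z (subset_closure hzΩ)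
          linarith [hz2.2]
      have hzu : u z = ψ z := le_antisymm (hle z hz2.1) hz2.2
      set r := dist x1 z with hr
      have hrpos : 0 < r := by
        apply dist_pos.2
        rintro rfl
        exact hx1 hz
      have hhopf := hopf hk hkn hΩo hΩconv hΩb hψ hu hle (p := z) (y := midpoint ℝ x1 z) (r := r/2)
        (subset_closure hzΩ) (by simpa using hzε.2) hzu (hψ.2.1 z hzΩ).1 (by linarith)
        (by rw [dist_right_midpoint]; rw [hr]; simp; ring) (by
          intro x hx hxz
          apply hW
          intro hxZ
          apply hxz
          have h1 := hmin x hxZ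
          set y := midpoint ℝ x1 z with hy
          have ha : ‖x1 - y‖ = r / 2 := by
            rw [← dist_eq_norm, hy, dist_left_midpoint, hr]; simp; ring
          have hb : ‖x - y‖ ≤ r / 2 := by rw [← dist_eq_norm]; exact hx
          have hab : r ≤ ‖(x1 - y) - (x - y)‖ := by rw [sub_sub_sub_cancel_right, ← dist_eq_norm]; exact h1
          have hpar := parallelogram_law_with_norm ℝ (x1 - y) (x - y)
          have hnn := norm_nonneg (x - y)
          have h3 : ‖(x1 - y) + (x - y)‖ * ‖(x1 - y) + (x - y)‖ ≤ 0 := by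
            rw [ha] at hpar
            nlinarith
          have h4 : ‖(x1 - y) + (x - y)‖ = 0 := by nlinarith [norm_nonneg ((x1 - y) + (x - y))]
          have h5 : (x1 - y) + (x - y) = 0 := norm_eq_zero.1 h4
          have h6 : (x1 - y) + (z - y) = 0 := by
            have := midpoint_add_self ℝ x1 z
            rw [← hy] at this
            have e : (x1 - y) + (z - y) = (x1 + z) - (y + y) := by abel
            rw [e, this, sub_self]
          have h7 := h5.trans h6.symm
          simpa using h7)
      obtain ⟨h1, h2, h3⟩ := u_facts hkn hΩo hu hzε
      obtain ⟨g1, g2, g3⟩ := psi_facts hkn hΩo hψ hzΩ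
      rw [fderivWithin_of_mem_nhds (ring_nhds hΩo hzε),
        fderivWithin_of_mem_nhds (mem_of_superset (hΩo.mem_nhds hzΩ) subset_closure)] at hhopf
      have hlm : IsLocalMax (fun x => u x - ψ x) z := by
        filter_upwards [ring_nhds hΩo hzε] with x hx
        have := hle x hx
        linarith
      have hz0 := hlm.fderiv_eq_zero
      rw [fderiv_fun_sub (h1.differentiableAt (by norm_num)) (g1.differentiableAt (by norm_num))] at hz0
      rw [sub_eq_zero.1 hz0] at hhopf
      exact lt_irrefl _ hhopf
  intro x hx
  exact (hW x (hsub hx)).2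

lemma bdry_garding {n k : ℕ} (hk : 1 ≤ k) (hkn : k ≤ n) {Ω₁ : Set (Euc n)} (hΩo : IsOpen Ω₁) (hΩconv : Convex ℝ Ω₁)
    {ψ : Euc n → ℝ} (hψ : IsSol22 k Ω₁ ψ) {p : Euc n} (hp : p ∈ closure Ω₁) :
    InGardingCone k (hessianWithin ψ (closure Ω₁) p) := by
  have hc := hess_cont (cl_unique hΩo hΩconv hp) hψ.1 p hp
  have hT : Tendsto (hessianWithin ψ (closure Ω₁)) (𝓝[Ω₁] p) (𝓝 (hessianWithin ψ (closure Ω₁) p)) :=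
    hc.mono_left (nhdsWithin_mono p subset_closure)
  haveI : (𝓝[Ω₁] p).NeBot := mem_closure_iff_nhdsWithin_neBot.1 hp
  have lim : ∀ S : Set (Matrix (Fin n) (Fin n) ℝ), IsClosed S → (∀ x ∈ Ω₁, hessianWithin ψ (closure Ω₁) x ∈ S) →
      hessianWithin ψ (closure Ω₁) p ∈ S := by
    intro S hS h
    refine hS.mem_of_tendsto hT ?_
    filter_upwards [self_mem_nhdsWithin] with x hx using h x hx
  have h1 : sig k (hessianWithin ψ (closure Ω₁) p) = 1 :=
    lim {A | sig k A = 1} (isClosed_eq (continuous_sig k) continuous_const) (by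
      intro x hx
      obtain ⟨a, b⟩ := hψ.2.1 x hx
      rw [sigmaMat_eq_sig hkn _ a.choose] at b
      exact b)
  refine garding_closed hk hkn _ ?_ (by rw [h1]; norm_num) ?_ ?_
  · exact lim {A | A.conjTranspose = A} (isClosed_eq (continuous_id.matrix_conjTranspose) continuous_id)
      (fun x hx => (hψ.2.1 x hx).1.choose)
  · intro j hj hjk
    exact lim {A | 0 ≤ sig j A} (isClosed_le continuous_const (continuous_sig j))
      (fun x hx => ((garding_sig hkn _ (hψ.2.1 x hx).1).1 j hj hjk).le)
  · intro j hj hjk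
    exact lim {A | sig (j+1) A ≤ sig j A * sig 1 A} (isClosed_le (continuous_sig _) ((continuous_sig j).mul (continuous_sig 1)))
      (fun x hx => ((garding_sig hkn _ (hψ.2.1 x hx).1).2 j hj hjk))

lemma normal_eq {n : ℕ} {Ω₁ : Set (Euc n)} {ρ : Euc n → ℝ} {p ν G : Euc n} (hΩ : Ω₁ = {x | ρ x < 0})
    (hG : HasFDerivAt ρ (innerSL ℝ G) p) (hG0 : G ≠ 0) (hρ : ρ p ≤ 0) (hν : ‖ν‖ = 1)
    (hin : ∀ y ∈ closure Ω₁, 0 ≤ ⟪y - p, ν⟫) : G = -(‖G‖ • ν) := by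
  have hGp : 0 < ‖G‖ := norm_pos_iff.2 hG0
  have c1 : ∀ w : Euc n, ⟪G, w⟫ < 0 → 0 ≤ ⟪w, ν⟫ := by
    intro w hw
    have hline : HasDerivAt (fun t : ℝ => p + t • w) w 0 := by
      simpa using ((hasDerivAt_id (0:ℝ)).smul_const w).const_add p
    have hG' : HasFDerivAt ρ (innerSL ℝ G) (p + (0:ℝ) • w) := by simpa using hG
    have hd : HasDerivAt (fun t : ℝ => ρ (p + t • w)) ⟪G, w⟫ 0 := by
      have := hG'.comp_hasDerivAt (0:ℝ) hline
      exact this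
    have hsl := hasDerivAt_iff_tendsto_slope.1 hd
    have hev := (hsl.mono_left (nhdsWithin_mono (0:ℝ) (fun t (ht : t ∈ Ioi (0:ℝ)) => ne_of_gt ht))).eventually (gt_mem_nhds hw)
    obtain ⟨t, ht, htp⟩ := (hev.and self_mem_nhdsWithin).exists
    have htp' : (0:ℝ) < t := htp
    rw [slope_def_field] at ht
    simp only [zero_smul, add_zero, sub_zero] at ht
    have h1 : ρ (p + t • w) - ρ p < 0 := by
      by_contra hcon
      push Not at hcon
      have := div_nonneg hcon htp'.le
      linarith
    have hmem : p + t • w ∈ Ω₁ := by rw [hΩ]; simp only [mem_setOf_eq]; linarith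
    have h2 := hin _ (subset_closure hmem)
    rw [add_sub_cancel_left, real_inner_smul_left] at h2
    exact nonneg_of_mul_nonneg_right h2 htp'
  have c2 : ∀ w : Euc n, ⟪G, w⟫ = 0 → 0 ≤ ⟪w, ν⟫ := by
    intro w hw
    have h : ∀ s : ℝ, 0 < s → 0 ≤ ⟪w, ν⟫ + s * ⟪-G, ν⟫ := by
      intro s hs
      have := c1 (w + s • (-G)) (by
        rw [inner_add_right, hw, real_inner_smul_right, inner_neg_right, real_inner_self_eq_norm_sq]
        have : 0 < s * ‖G‖^2 := by positivity
        linarith)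
      rwa [inner_add_left, real_inner_smul_left] at this
    have hT : Tendsto (fun s : ℝ => ⟪w, ν⟫ + s * ⟪-G, ν⟫) (𝓝[>] 0) (𝓝 (⟪w, ν⟫ + 0 * ⟪-G, ν⟫)) := by
      apply Tendsto.mono_left _ nhdsWithin_le_nhds
      exact (continuous_const.add (continuous_id.mul continuous_const)).tendsto 0
    have := ge_of_tendsto hT (by filter_upwards [self_mem_nhdsWithin] with s hs using h s hs)
    simpa using this
  have hneg : 0 ≤ ⟪-G, ν⟫ := c1 (-G) (by rw [inner_neg_right, real_inner_self_eq_norm_sq]; nlinarith)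
  rw [inner_neg_left] at hneg
  set a := ⟪G, ν⟫ with ha
  have hw := c2 ((a / ‖G‖^2) • G - ν) (by
    rw [inner_sub_right, real_inner_smul_right, real_inner_self_eq_norm_sq, ← ha]; field_simp; ring)
  rw [inner_sub_left, real_inner_smul_left, ← ha, real_inner_self_eq_norm_sq, hν] at hw
  have h1 : ‖G‖^2 ≤ a^2 := by
    have : 1 ≤ a^2 / ‖G‖^2 := by
      have e : a / ‖G‖^2 * a = a^2 / ‖G‖^2 := by ring
      rw [e] at hw; linarith
    rwa [one_le_div (by positivity)] at this
  have h2 : a ≤ -‖G‖ := by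
    by_contra hcon
    push Not at hcon
    nlinarith
  have h3 : ‖G + ‖G‖ • ν‖^2 ≤ 0 := by
    rw [norm_add_sq_real, real_inner_smul_right, ← ha, norm_smul, hν, norm_norm]
    nlinarith
  have h4 : ‖G + ‖G‖ • ν‖ = 0 := by nlinarith [norm_nonneg (G + ‖G‖ • ν)]
  exact eq_neg_of_add_eq_zero_left (norm_eq_zero.1 h4)

lemma interior_ball {n : ℕ} {Ω₁ : Set (Euc n)} (hΩs : HasSmoothBoundary Ω₁) {p ν : Euc n} (hp : p ∈ frontier Ω₁)
    (hν : ‖ν‖ = 1) (hin : ∀ y ∈ closure Ω₁, 0 ≤ ⟪y - p, ν⟫) :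
    ∃ r > 0, ∀ x ∈ closedBall (p + r • ν) r, x ≠ p → x ∈ Ω₁ := by
  obtain ⟨ρ, hρs, hΩ, hρd⟩ := hΩs
  have hρp : ρ p ≤ 0 := by
    have : closure Ω₁ ⊆ {x | ρ x ≤ 0} := by
      apply closure_minimal
      · rw [hΩ]; intro x hx; exact le_of_lt (show ρ x < 0 from hx)
      · exact isClosed_le hρs.continuous continuous_const
    exact this (frontier_subset_closure hp)
  have hdiff : Differentiable ℝ ρ := hρs.differentiable (by simp)
  set G : Euc n := (InnerProductSpace.toDual ℝ (Euc n)).symm (fderiv ℝ ρ p) with hGd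
  have hGe : innerSL ℝ G = fderiv ℝ ρ p := by
    ext w
    change ⟪G, w⟫ = _
    rw [hGd]
    exact InnerProductSpace.toDual_symm_apply (𝕜 := ℝ)
  have hG0 : G ≠ 0 := by
    intro h
    apply hρd p hp
    rw [← hGe, h]; simp
  have hG := normal_eq hΩ (G := G) (by rw [hGe]; exact (hdiff p).hasFDerivAt) hG0 hρp hν hin
  have hGp : 0 < ‖G‖ := norm_pos_iff.2 hG0
  have hfd : ContDiffAt ℝ 1 (fderiv ℝ ρ) p :=
    hρs.contDiffAt.fderiv_right (m := 1) (by change ((2:ℕ∞):WithTop ℕ∞) ≤ _; exact WithTop.coe_le_coe.2 le_top)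
  obtain ⟨K, t, ht, hK⟩ := hfd.exists_lipschitzOnWith
  obtain ⟨η, hη, hηt⟩ := Metric.mem_nhds_iff.1 ht
  have taylor : ∀ x ∈ ball p η, ρ x - ρ p - fderiv ℝ ρ p (x - p) ≤ K * ‖x - p‖ * ‖x - p‖ := by
    intro x hx
    have hb : closedBall p ‖x - p‖ ⊆ ball p η := closedBall_subset_ball (by rw [← dist_eq_norm]; exact hx)
    have := (convex_closedBall p ‖x - p‖).norm_image_sub_le_of_norm_hasFDerivWithin_le'
      (f := ρ) (f' := fderiv ℝ ρ) (φ := fderiv ℝ ρ p) (C := K * ‖x - p‖) (x := p) (y := x)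
      (fun z hz => (hdiff z).hasFDerivAt.hasFDerivWithinAt) (by
        intro z hz
        have h1 := hK.dist_le_mul z (hηt (hb hz)) p (hηt (mem_ball_self hη))
        rw [dist_eq_norm] at h1
        have h2 : dist z p ≤ ‖x - p‖ := hz
        refine h1.trans ?_
        gcongr) (by simp) (by simp [dist_eq_norm])
    exact (le_abs_self _).trans this
  obtain ⟨r, hr, hr1, hr2⟩ : ∃ r > 0, 2 * r < η ∧ 2 * r * K < ‖G‖ := by
    refine ⟨min (η / 4) (‖G‖ / (4 * (K + 1))), lt_min (by positivity) (by positivity), ?_, ?_⟩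
    · have := min_le_left (η / 4) (‖G‖ / (4 * (K + 1))); linarith
    · have h1 := min_le_right (η / 4) (‖G‖ / (4 * ((K:ℝ) + 1)))
      have hK0 : (0:ℝ) ≤ K := K.2
      calc 2 * min (η / 4) (‖G‖ / (4 * ((K:ℝ) + 1))) * K ≤ 2 * (‖G‖ / (4 * ((K:ℝ) + 1))) * (K + 1) := by
            gcongr; linarith
        _ = ‖G‖ / 2 := by field_simp; ring
        _ < ‖G‖ := by linarith
  refine ⟨r, hr, fun x hx hxp => ?_⟩
  set w := x - p with hw
  have hwn : 0 < ‖w‖ := norm_pos_iff.2 (sub_ne_zero.2 hxp)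
  have h1 : ‖w - r • ν‖ ≤ r := by
    have : w - r • ν = x - (p + r • ν) := by rw [hw]; abel
    rw [this, ← dist_eq_norm]; exact hx
  have h2 : ‖w‖^2 ≤ 2 * r * ⟪w, ν⟫ := by
    have : ‖w - r • ν‖^2 ≤ r^2 := by gcongr
    rw [norm_sub_sq_real, norm_smul, hν, real_inner_smul_right, Real.norm_of_nonneg hr.le] at this
    nlinarith
  have h3 : ‖w‖ ≤ 2 * r := by
    have : ‖w‖ ≤ ‖w - r • ν‖ + ‖r • ν‖ := by simpa using norm_add_le (w - r • ν) (r • ν)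
    rw [norm_smul, hν, Real.norm_of_nonneg hr.le] at this
    linarith
  have h4 := taylor x (by rw [mem_ball, dist_eq_norm]; linarith)
  have h5 : fderiv ℝ ρ p (x - p) = -(‖G‖ * ⟪w, ν⟫) := by
    rw [← hGe]
    change ⟪G, x - p⟫ = _
    rw [← hw]
    conv_lhs => rw [hG]
    rw [inner_neg_left, real_inner_smul_left, real_inner_comm]
  rw [h5, ← hw] at h4
  rw [hΩ]
  simp only [mem_setOf_eq]
  have h6 : 0 < ⟪w, ν⟫ := by
    by_contra hcon
    push Not at hcon
    nlinarith [mul_nonneg hr.le (neg_nonneg.2 hcon), pow_pos hwn 2]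
  have h7 : K * ‖w‖ * ‖w‖ ≤ 2 * r * K * ⟪w, ν⟫ := by
    have hK0 : (0:ℝ) ≤ K := K.2
    nlinarith [mul_le_mul_of_nonneg_left h2 hK0]
  nlinarith [mul_lt_mul_of_pos_right hr2 h6]

/-- `C¹` bounds on the outer boundary `∂Ω₁`. -/
theorem statement4 {n k : ℕ} (hk : 1 ≤ k) (hkn : k ≤ n)
    (Ω₁ : Set (Euc n)) (hΩo : IsOpen Ω₁) (hΩconv : Convex ℝ Ω₁)
    (hΩb : IsBounded Ω₁) (hΩs : HasSmoothBoundary Ω₁)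
    (ε₀ : ℝ) (hε₀ : 0 < ε₀) (hball : closedBall (0 : Euc n) ε₀ ⊆ Ω₁)
    (ψ : Euc n → ℝ) (hψ : IsSol22 k Ω₁ ψ)
    (M₁ : ℝ) (hM₁ : 0 < M₁) (hM₁ψ : ∀ x ∈ closure Ω₁, -ψ x < M₁)
    (hM₁sub : ∀ ε ∈ Ioo (0:ℝ) ε₀, ∀ x ∈ frontier Ω₁, underSol k (0 : Euc n) ε M₁ x ≤ 0)
    (M : ℝ) (hM : M₁ < M)
 :
    ∃ C : ℝ, 1 < C ∧ ∀ ε ∈ Ioo (0:ℝ) ε₀, ∀ u : Euc n → ℝ,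
      IsSol k Ω₁ (0 : Euc n) ε M u → ∀ p ∈ frontier Ω₁, ∀ ν : Euc n,
        ‖ν‖ = 1 → (∀ y ∈ closure Ω₁, 0 ≤ ⟪y - p, ν⟫) →
        C * fderivWithin ℝ ψ (closure Ω₁) p ν <
            fderivWithin ℝ u (ringSet Ω₁ (0 : Euc n) ε) p ν ∧
          fderivWithin ℝ u (ringSet Ω₁ (0 : Euc n) ε) p ν <
            fderivWithin ℝ ψ (closure Ω₁) p ν := by
  obtain ⟨C, hC, hCM⟩ := lower_const hk hkn hΩo hΩb hψ hε₀ hball M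
  refine ⟨C + 1, by linarith, ?_⟩
  intro ε hε u hu p hp ν hν hin
  have hle := upper hk hkn hΩo hΩb hψ hu hM₁ hM₁ψ hM
  have hlow := lower hk hkn hΩo hΩb hψ hu hC (fun x hx => hCM x (closedBall_subset_closedBall hε.2.le hx))
  have hst := smp hk hkn hΩo hΩconv hΩb hψ hu hε.1 (hball (by simp [hε₀.le]))
    (fun x hx => (hM₁ψ x hx).trans hM) hle
  obtain ⟨r, hr, hrb⟩ := interior_ball hΩs hp hν hin
  have hpc : p ∈ closure Ω₁ := frontier_subset_closure hp
  have hpn : p ∉ Ω₁ := by rw [hΩo.frontier_eq] at hp; exact hp.2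
  have hpε : ε < ‖p‖ := by
    by_contra hcon
    push Not at hcon
    exact hpn (hball (by simpa using hcon.trans hε.2.le))
  have hup := hu.2.2.1 p hp
  have hψp := hψ.2.2 p hp
  have hy : p + r • ν ∈ Ω₁ := hrb _ (by simp [hr.le]) (by
    intro h
    have h1 : r • ν = 0 := by simpa using h
    rcases smul_eq_zero.1 h1 with h2 | h2
    · linarith
    · rw [h2] at hν; simp at hν)
  have hop := hopf hk hkn hΩo hΩconv hΩb hψ hu hle (p := p) (y := p + r • ν) (r := r) hpc hpε (by rw [hup, hψp])
    (bdry_garding hk hkn hΩo hΩconv hψ hpc) hr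
    (by rw [dist_eq_norm]; simp [norm_smul, hν, abs_of_pos hr])
    (fun x hx hxp => ⟨hrb x hx hxp, hst x (hrb x hx hxp)⟩)
  rw [add_sub_cancel_left, map_smul, map_smul, smul_eq_mul, smul_eq_mul] at hop
  have hlt := lt_of_mul_lt_mul_left hop hr.le
  have hDu : HasFDerivWithinAt u (fderivWithin ℝ u (ringSet Ω₁ 0 ε) p) (closure Ω₁) p :=
    ((hu.1.differentiableOn (by norm_num)) p (ring_mem hpc hpε)).hasFDerivWithinAt.mono_of_mem_nhdsWithin (ring_nhdsWithin hpε)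
  have hDψ : HasFDerivWithinAt ψ (fderivWithin ℝ ψ (closure Ω₁) p) (closure Ω₁) p :=
    ((hψ.1.differentiableOn (by simp)) p hpc).hasFDerivWithinAt
  have hone := one_sided hΩconv.closure hpc (subset_closure hy) ((hDψ.const_mul C).sub hDu) (by
    filter_upwards [ring_nhdsWithin hpε] with x hx
    have := hlow x hx
    simp only [Pi.sub_apply, hup, hψp]
    linarith)
  rw [add_sub_cancel_left, map_smul, smul_eq_mul] at hone
  have h2 := nonpos_of_mul_nonpos_right hone hr
  simp only [ContinuousLinearMap.sub_apply, ContinuousLinearMap.smul_apply, smul_eq_mul] at h2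
  refine ⟨?_, hlt⟩
  set a := fderivWithin ℝ ψ (closure Ω₁) p ν
  have ha : a < 0 := by nlinarith
  linarith
end
end

section
/- Let Ω ⊂ ℝⁿ be a bounded open set and let u ∈ C³(Ω) ∩ C¹(Ω̄) be strictly k-convex with σ_k(D²u) = 1 in Ω. Then the maximum of |Du| over Ω̄ is attained on the boundary: sup_{Ω̄} |Du| = sup_{∂Ω} |Du|. -/
open Set Metric Filter Topology Bornology
open scoped RealInnerProductSpace

noncomputable section

section AlgPart
open Polynomial

lemma splits_derivative_real {f : ℝ[X]} (hf : f.Splits) : (derivative f).Splits := by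
  rw [splits_iff_card_roots] at hf ⊢
  have h1 := card_roots_le_derivative f
  have h2 := (derivative f).card_roots'
  have h3 := natDegree_derivative_le f
  rcases Nat.eq_zero_or_pos f.natDegree with h0 | h0
  · rw [natDegree_eq_zero] at h0
    obtain ⟨c, rfl⟩ := h0
    simp
  · omega

lemma splits_iter_derivative_real {f : ℝ[X]} (hf : f.Splits) (m : ℕ) :
    (derivative^[m] f).Splits := by
  induction m with
  | zero => simpa
  | succ m ih => rw [Function.iterate_succ_apply']; exact splits_derivative_real ih

lemma splits_laguerre {f : ℝ[X]} (hf : f.Splits) (x : ℝ) :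
    f.eval x * (derivative (derivative f)).eval x ≤ ((derivative f).eval x) ^ 2 := by
  rw [hf.eq_prod_roots]
  generalize f.roots = s
  generalize f.leadingCoeff = c
  suffices h : ∀ s : Multiset ℝ, ((s.map (X - C ·)).prod).eval x *
      (derivative (derivative ((s.map (X - C ·)).prod))).eval x ≤
      ((derivative ((s.map (X - C ·)).prod)).eval x) ^ 2 by
    have := h s
    simp only [derivative_C_mul, eval_mul, eval_C]
    nlinarith [mul_le_mul_of_nonneg_left this (sq_nonneg c)]
  intro s
  induction s using Multiset.induction_on with
  | empty => simp
  | cons a s ih =>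
    rw [Multiset.map_cons, Multiset.prod_cons]
    generalize (s.map (X - C ·)).prod = g at ih
    simp only [derivative_mul, derivative_sub, derivative_X, derivative_C, derivative_add,
      eval_add, eval_mul, eval_sub, eval_X, eval_C, sub_zero, one_mul]
    nlinarith [mul_le_mul_of_nonneg_left ih (sq_nonneg (x - a)), sq_nonneg (g.eval x)]

lemma splits_newton {f : ℝ[X]} (hf : f.Splits) (m : ℕ) (hpos : 0 < f.coeff m) :
    f.coeff m * f.coeff (m + 2) ≤ f.coeff (m + 1) ^ 2 := by
  have h := splits_laguerre (splits_iter_derivative_real hf m) 0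
  rw [← Function.iterate_succ_apply' derivative, ← Function.iterate_succ_apply' derivative] at h
  rw [← coeff_zero_eq_eval_zero, ← coeff_zero_eq_eval_zero, ← coeff_zero_eq_eval_zero,
    coeff_iterate_derivative, coeff_iterate_derivative, coeff_iterate_derivative] at h
  simp only [zero_add, Nat.descFactorial_self, nsmul_eq_mul, Nat.factorial_succ, Nat.succ_eq_add_one] at h
  push_cast at h
  have hm : (0:ℝ) < m.factorial := by positivity
  by_cases hc : f.coeff (m + 2) ≤ 0
  · nlinarith [sq_nonneg (f.coeff (m+1))]
  push Not at hc
  have hpp : 0 < f.coeff m * f.coeff (m+2) := by positivity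
  have h' : ((m:ℝ)+1) * (m.factorial)^2 * ((m + 2) * (f.coeff m * f.coeff (m+2))) ≤
     ((m:ℝ)+1) * (m.factorial)^2 * ((m + 1) * f.coeff (m+1)^2) := by
    ring_nf at h ⊢; linarith
  have h2 := le_of_mul_le_mul_left h' (by positivity)
  have h3 : ((m:ℝ)+1) * (f.coeff m * f.coeff (m+2)) ≤ (m + 1) * f.coeff (m+1)^2 := by linarith
  exact le_of_mul_le_mul_left h3 (by positivity)

def genP {ι : Type*} (lam : ι → ℝ) (S : Finset ι) : ℝ[X] := ∏ i ∈ S, (1 + C (lam i) * X)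

lemma genP_splits {ι : Type*} (lam : ι → ℝ) (S : Finset ι) : (genP lam S).Splits := by
  unfold genP
  apply Splits.prod
  intro i _
  apply Splits.of_natDegree_le_one
  compute_degree

lemma genP_coeff {ι : Type*} (lam : ι → ℝ) (S : Finset ι) (k : ℕ) :
    (genP lam S).coeff k = ∑ T ∈ S.powersetCard k, ∏ i ∈ T, lam i := by
  classical
  unfold genP
  rw [Finset.prod_one_add, finsetSum_coeff, Finset.powersetCard_eq_filter, Finset.sum_filter]
  refine Finset.sum_congr rfl fun T _ => ?_
  rw [Finset.prod_mul_distrib, Finset.prod_const, ← map_prod, coeff_C_mul_X_pow]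
  simp [eq_comm]

lemma genP_insert {ι : Type*} [DecidableEq ι] (lam : ι → ℝ) (S : Finset ι) (i : ι) (hi : i ∈ S) :
    genP lam S = (1 + C (lam i) * X) * genP lam (S.erase i) := by
  unfold genP
  rw [Finset.mul_prod_erase S (fun i => 1 + C (lam i) * X) hi]

lemma genP_insert_coeff {ι : Type*} [DecidableEq ι] (lam : ι → ℝ) (S : Finset ι) (i : ι) (hi : i ∈ S) (k : ℕ) :
    (genP lam S).coeff (k+1) = (genP lam (S.erase i)).coeff (k+1) +
      lam i * (genP lam (S.erase i)).coeff k := by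
  rw [genP_insert lam S i hi, add_mul, one_mul, mul_assoc]
  simp [coeff_X_mul]

lemma garding_pos {ι : Type*} [DecidableEq ι] (lam : ι → ℝ) (S : Finset ι) (i : ι) (hi : i ∈ S) (k : ℕ)
    (h : ∀ j, 1 ≤ j → j ≤ k + 1 → 0 < (genP lam S).coeff j) :
    ∀ j ≤ k, 0 < (genP lam (S.erase i)).coeff j := by
  induction k with
  | zero =>
    intro j hj
    obtain rfl : j = 0 := by omega
    rw [genP_coeff]; simp
  | succ k ih =>
    have ih' := ih fun j h1 h2 => h j h1 (by omega)
    intro j hj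
    rcases Nat.lt_or_ge j (k+1) with h1 | h1
    · exact ih' j (by omega)
    obtain rfl : j = k + 1 := by omega
    by_contra hneg
    push Not at hneg
    have hk := ih' k le_rfl
    have e1 := h (k+1) (by omega) (by omega)
    have e2 := h (k+2) (by omega) (by omega)
    rw [genP_insert_coeff lam S i hi] at e1 e2
    have hN := splits_newton (genP_splits lam (S.erase i)) k hk
    set a := (genP lam (S.erase i)).coeff k
    set b := (genP lam (S.erase i)).coeff (k+1)
    set c := (genP lam (S.erase i)).coeff (k+2)
    have q1 : 0 < a * (c + lam i * b) := mul_pos hk e2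
    have q2 : 0 ≤ (-b) * (b + lam i * a) := mul_nonneg (by linarith) e1.le
    nlinarith

/-- the `i`-th derivative of the elementary symmetric function -/
def dEsymm {n : ℕ} (k : ℕ) (lam : Fin n → ℝ) (i : Fin n) : ℝ :=
  ∑ S ∈ Finset.powersetCard k (Finset.univ : Finset (Fin n)),
    if i ∈ S then ∏ j ∈ S.erase i, lam j else 0

lemma dEsymm_eq {n : ℕ} (k : ℕ) (lam : Fin n → ℝ) (i : Fin n) :
    dEsymm (k+1) lam i = (genP lam (Finset.univ.erase i)).coeff k := by
  rw [genP_coeff, dEsymm]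
  rw [← Finset.sum_filter]
  refine Finset.sum_bij' (fun S _ => S.erase i) (fun T _ => insert i T) ?_ ?_ ?_ ?_ ?_
  · intro S hS
    simp only [Finset.mem_filter, Finset.mem_powersetCard_univ] at hS
    rw [Finset.mem_powersetCard]
    refine ⟨Finset.erase_subset_erase _ (Finset.subset_univ _), ?_⟩
    rw [Finset.card_erase_of_mem hS.2]; omega
  · intro T hT
    rw [Finset.mem_powersetCard] at hT
    have : i ∉ T := fun h => by simpa using hT.1 h
    simp [Finset.card_insert_of_notMem this, hT.2]
  · intro S hS
    simp only [Finset.mem_filter] at hS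
    exact Finset.insert_erase hS.2
  · intro T hT
    rw [Finset.mem_powersetCard] at hT
    have : i ∉ T := fun h => by simpa using hT.1 h
    exact Finset.erase_insert this
  · intro S hS; rfl

end AlgPart
section MatPart
open Matrix

lemma hasDerivAt_det_diag {ι : Type*} [Fintype ι] [DecidableEq ι] (M : ℝ → Matrix ι ι ℝ)
    (B : Matrix ι ι ℝ) (d : ι → ℝ) (hM : ∀ i j, HasDerivAt (fun s => M s i j) (B i j) 0)
    (h0 : M 0 = Matrix.diagonal d) :
    HasDerivAt (fun s => (M s).det) (∑ i, B i i * ∏ j ∈ Finset.univ.erase i, d j) 0 := by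
  have h1 : HasDerivAt (fun s => (M s).det)
      (∑ σ : Equiv.Perm ι, ((Equiv.Perm.sign σ : ℤ) : ℝ) *
        ∑ i, (∏ j ∈ Finset.univ.erase i, M 0 (σ j) j) • B (σ i) i) 0 := by
    simp only [Matrix.det_apply']
    refine HasDerivAt.fun_sum fun σ _ => ?_
    refine HasDerivAt.const_mul _ ?_
    exact HasDerivAt.fun_finsetProd fun i _ => hM (σ i) i
  convert h1 using 1
  rw [Finset.sum_eq_single (1 : Equiv.Perm ι)]
  · simp [h0, mul_comm]
  · intro σ _ hσ
    rw [Finset.sum_eq_zero, mul_zero]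
    intro i _
    have : ∃ j, j ≠ i ∧ σ j ≠ j := by
      by_contra hcon
      push Not at hcon
      apply hσ
      ext j
      by_cases hj : j = i
      · subst hj
        by_contra hne
        have hne' : σ j ≠ j := hne
        have := hcon (σ j) hne'
        exact hne' (σ.injective this)
      · simp [hcon j hj]
    obtain ⟨j, hj, hj'⟩ := this
    rw [Finset.prod_eq_zero (i := j)]
    · simp
    · simp [hj]
    · rw [h0, Matrix.diagonal_apply_ne _ hj']
  · simp

def sumMinors {n : ℕ} (k : ℕ) (M : Matrix (Fin n) (Fin n) ℝ) : ℝ :=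
  ∑ s ∈ Finset.univ.powersetCard k,
      (M.submatrix (Subtype.val : s → Fin n) (Subtype.val : s → Fin n)).det

lemma sumMinors_congr {n : ℕ} {k : ℕ} (hk : k ≤ n) {M N : Matrix (Fin n) (Fin n) ℝ}
    (h : M.charpoly = N.charpoly) : sumMinors k M = sumMinors k N := by
  have h1 := Matrix.charpoly_coeff_eq_sum_minors M k (by simpa using hk)
  have h2 := Matrix.charpoly_coeff_eq_sum_minors N k (by simpa using hk)
  rw [h, h2] at h1
  exact (mul_left_cancel₀ (pow_ne_zero k (by norm_num)) h1).symm

lemma sumMinors_diagonal {n : ℕ} (k : ℕ) (d : Fin n → ℝ) :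
    sumMinors k (Matrix.diagonal d) = esymmVec k d := by
  unfold sumMinors esymmVec
  refine Finset.sum_congr rfl fun S _ => ?_
  rw [Matrix.submatrix_diagonal _ _ Subtype.val_injective, Matrix.det_diagonal]
  exact Finset.prod_coe_sort S d

lemma sumMinors_hermitian {n : ℕ} {k : ℕ} (hk : k ≤ n) {A : Matrix (Fin n) (Fin n) ℝ}
    (hA : A.IsHermitian) : sumMinors k A = esymmVec k hA.eigenvalues := by
  rw [← sumMinors_diagonal]
  apply sumMinors_congr hk
  rw [hA.charpoly_eq, Matrix.charpoly_diagonal]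
  rfl

lemma hasDerivAt_sumMinors {n : ℕ} (k : ℕ) (M : ℝ → Matrix (Fin n) (Fin n) ℝ)
    (B : Matrix (Fin n) (Fin n) ℝ) (d : Fin n → ℝ)
    (hM : ∀ i j, HasDerivAt (fun s => M s i j) (B i j) 0)
    (h0 : M 0 = Matrix.diagonal d) :
    HasDerivAt (fun s => sumMinors k (M s)) (∑ i, B i i * dEsymm k d i) 0 := by
  have h1 : HasDerivAt (fun s => sumMinors k (M s))
      (∑ S ∈ Finset.powersetCard k (Finset.univ : Finset (Fin n)),
        ∑ i : S, B i i * ∏ j ∈ Finset.univ.erase i, d j) 0 := by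
    unfold sumMinors
    refine HasDerivAt.fun_sum fun S _ => ?_
    refine hasDerivAt_det_diag _ (B.submatrix Subtype.val Subtype.val) (fun i : S => d i)
      (fun i j => hM i j) ?_
    rw [h0, Matrix.submatrix_diagonal _ _ Subtype.val_injective]
    rfl
  convert h1 using 1
  unfold dEsymm
  simp only [Finset.mul_sum]
  rw [Finset.sum_comm]
  refine Finset.sum_congr rfl fun S _ => ?_
  have h2 : ∀ i : S, ∏ j ∈ Finset.univ.erase i, d j = ∏ j ∈ S.erase (i : Fin n), d j := by
    intro i
    symm
    refine Finset.prod_bij' (fun j hj => (⟨j, Finset.mem_of_mem_erase hj⟩ : S)) (fun j _ => (j : Fin n)) ?_ ?_ ?_ ?_ ?_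
    · intro j hj
      simp only [Finset.mem_erase, Finset.mem_univ, and_true, ne_eq]
      intro h
      exact Finset.ne_of_mem_erase hj (congrArg Subtype.val h)
    · intro j hj
      simp only [Finset.mem_erase, Finset.mem_univ, and_true, ne_eq] at hj
      simp only [Finset.mem_erase, Finset.coe_mem, and_true, ne_eq]
      exact fun h => hj (Subtype.ext h)
    · intros; rfl
    · intros; rfl
    · intros; rfl
  simp only [h2]
  rw [Finset.sum_coe_sort S (fun i => B i i * ∏ j ∈ S.erase i, d j)]
  simp [Finset.sum_ite_mem]

end MatPart

lemma second_deriv_nonpos {g g' : ℝ → ℝ} {c : ℝ} (hmax : IsLocalMax g 0)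
    (hg : ∀ᶠ s in 𝓝 (0:ℝ), HasDerivAt g (g' s) s) (hg' : HasDerivAt g' c 0) : c ≤ 0 := by
  by_contra hc
  push Not at hc
  have e1 : deriv g =ᶠ[𝓝 0] g' := hg.mono fun s hs => hs.deriv
  have e2 : deriv (deriv g) 0 = c := by rw [e1.deriv_eq, hg'.deriv]
  have hmin := isLocalMin_of_deriv_deriv_pos (by rw [e2]; exact hc) hmax.deriv_eq_zero
    hg.self_of_nhds.continuousAt
  have e3 : g =ᶠ[𝓝 0] fun _ => g 0 := by
    filter_upwards [hmax, hmin] with s h1 h2 using le_antisymm h1 h2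
  have e4 : deriv (deriv g) 0 = 0 := by
    rw [e3.deriv.deriv_eq]; simp
  linarith

section MainPart

lemma grad_hessian {n : ℕ} {u : Euc n → ℝ} {x : Euc n} (hu : ContDiffAt ℝ 3 u x)
    (hH : (hessian u x).IsHermitian) (v : Euc n) :
    WithLp.ofLp (fderiv ℝ (gradient u) x v) = Matrix.mulVec (hessian u x) (WithLp.ofLp v) := by
  have hd : DifferentiableAt ℝ (fderiv ℝ u) x :=
    (hu.fderiv_right (m := 2) (by norm_num)).differentiableAt (by norm_num)
  have h1 : fderiv ℝ (gradient u) x v =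
      (InnerProductSpace.toDual ℝ (Euc n)).symm (fderiv ℝ (fderiv ℝ u) x v) := by
    let J : (Euc n →L[ℝ] ℝ) →L[ℝ] Euc n :=
      { toFun := fun l => (InnerProductSpace.toDual ℝ (Euc n)).symm l
        map_add' := fun a b => map_add _ a b
        map_smul' := fun c a => by simp
        cont := (InnerProductSpace.toDual ℝ (Euc n)).symm.continuous }
    have : HasFDerivAt (gradient u) (J.comp (fderiv ℝ (fderiv ℝ u) x)) x :=
      J.hasFDerivAt.comp x hd.hasFDerivAt
    rw [this.fderiv]
    rfl
  ext j
  have h2 : WithLp.ofLp (fderiv ℝ (gradient u) x v) j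
      = ⟪fderiv ℝ (gradient u) x v, EuclideanSpace.single j (1:ℝ)⟫ := by
    rw [EuclideanSpace.inner_single_right]; simp
  have h3 : ∀ i j, hessian u x i j =
      fderiv ℝ (fderiv ℝ u) x (EuclideanSpace.single i (1:ℝ)) (EuclideanSpace.single j (1:ℝ)) := by
    intro i j
    unfold hessian
    rw [iteratedFDeriv_two_apply]
    rfl
  rw [h2, h1, InnerProductSpace.toDual_symm_apply]
  have hv : v = ∑ i, v i • EuclideanSpace.single i (1:ℝ) := by
    ext i; simp [Finset.sum_apply, Pi.single_apply]
  conv_lhs => rw [hv]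
  simp only [map_sum, map_smul, _root_.sum_apply, _root_.smul_apply,
    Matrix.mulVec, dotProduct]
  refine Finset.sum_congr rfl fun i _ => ?_
  rw [← h3, ← hH.apply j i, smul_eq_mul, mul_comm]
  simp

lemma no_interior_max {n k : ℕ} (hk : 1 ≤ k) (hkn : k ≤ n)
    (Ω : Set (Euc n)) (hΩo : IsOpen Ω)
    (u : Euc n → ℝ) (hu3 : ContDiffOn ℝ 3 u Ω)
    (hconv : ∀ x ∈ Ω, InGardingCone k (hessian u x))
    (heq : ∀ x ∈ Ω, sigmaMat k (hessian u x) = 1)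
    (x₀ : Euc n) (hx₀ : x₀ ∈ Ω) (hmax : ∀ x ∈ Ω, ‖fderiv ℝ u x‖ ≤ ‖fderiv ℝ u x₀‖) : False := by
  have hC3 : ∀ x ∈ Ω, ContDiffAt ℝ 3 u x := fun x hx => hu3.contDiffAt (hΩo.mem_nhds hx)
  set G : Euc n → Euc n := gradient u with hGdef
  have hG2 : ∀ x ∈ Ω, ContDiffAt ℝ 2 G x := fun x hx =>
    (InnerProductSpace.toDual ℝ (Euc n)).symm.toContinuousLinearEquiv.contDiff.contDiffAt.comp x
      ((hC3 x hx).fderiv_right (m := 2) (by norm_num))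
  have hGn : ∀ x, ‖G x‖ = ‖fderiv ℝ u x‖ := fun x => by
    simp [hGdef, gradient]
  have hHerm : ∀ x ∈ Ω, (hessian u x).IsHermitian := fun x hx => (hconv x hx).1
  have hGH : ∀ x ∈ Ω, ∀ v, WithLp.ofLp (fderiv ℝ G x v) =
      Matrix.mulVec (hessian u x) (WithLp.ofLp v) :=
    fun x hx v => grad_hessian (hC3 x hx) (hHerm x hx) v
  have hE : ∀ x ∈ Ω, sumMinors k (hessian u x) = 1 := by
    intro x hx
    have := heq x hx
    unfold sigmaMat at this
    rw [dif_pos (hHerm x hx)] at this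
    rw [sumMinors_hermitian hkn (hHerm x hx), this]
  obtain ⟨hA, hpos⟩ := hconv x₀ hx₀
  set lam := hA.eigenvalues with hlam
  set v := hA.eigenvectorBasis with hv
  have hf : ∀ i, 0 < dEsymm k lam i := by
    intro i
    obtain ⟨m, rfl⟩ : ∃ m, k = m + 1 := ⟨k - 1, by omega⟩
    rw [dEsymm_eq]
    refine garding_pos lam Finset.univ i (Finset.mem_univ _) m (fun j h1 h2 => ?_) m le_rfl
    rw [genP_coeff]
    exact hpos j h1 h2
  -- symmetric
  have hinner : ∀ x ∈ Ω, ∀ a b, ⟪fderiv ℝ G x a, b⟫ =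
      dotProduct (WithLp.ofLp b) (Matrix.mulVec (hessian u x) (WithLp.ofLp a)) := by
    intro x hx a b
    rw [EuclideanSpace.inner_eq_star_dotProduct, hGH x hx]
    simp
  have hsym : ∀ x ∈ Ω, ∀ a b, ⟪fderiv ℝ G x a, b⟫ = ⟪fderiv ℝ G x b, a⟫ := by
    intro x hx a b
    rw [hinner x hx, hinner x hx, Matrix.dotProduct_mulVec, dotProduct_comm,
      ← Matrix.mulVec_transpose]
    have := hHerm x hx
    rw [Matrix.IsHermitian, Matrix.conjTranspose_eq_transpose_of_trivial] at this
    rw [this]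
  have heig : ∀ i, fderiv ℝ G x₀ (v i) = lam i • v i := by
    intro i
    apply WithLp.ofLp_injective
    rw [hGH x₀ hx₀]
    exact hA.mulVec_eigenvectorBasis i
  set Mx : Euc n → Matrix (Fin n) (Fin n) ℝ := fun x a b => ⟪fderiv ℝ G x (v a), v b⟫ with hMx
  have hME : ∀ x ∈ Ω, sumMinors k (Mx x) = 1 := by
    intro x hx
    rw [← hE x hx]
    apply sumMinors_congr hkn
    set U : Matrix (Fin n) (Fin n) ℝ := (hA.eigenvectorUnitary).1 with hU
    have hM : (Mx x).transpose = star U * (hessian u x * U) := by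
      ext b a
      rw [Matrix.transpose_apply, hMx]
      simp only
      rw [hinner x hx, Matrix.mul_apply]
      simp only [Matrix.star_apply, Matrix.mul_apply, dotProduct, Matrix.mulVec, hU,
        star_trivial]
      rfl
    have hUU : U * star U = 1 := by
      rw [hU]; exact Unitary.coe_mul_star_self _
    rw [← Matrix.charpoly_transpose, hM, Matrix.charpoly_mul_comm, mul_assoc, hUU, mul_one]
  have hM0 : Mx x₀ = Matrix.diagonal lam := by
    ext a b
    simp only [hMx, heig, inner_smul_left, Matrix.diagonal_apply,
      orthonormal_iff_ite.mp v.orthonormal a b]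
    split_ifs <;> simp
  set T := fderiv ℝ (fderiv ℝ G) x₀ with hT
  have hTd : HasFDerivAt (fderiv ℝ G) T x₀ :=
    (((hG2 x₀ hx₀).fderiv_right (m := 1) (by norm_num)).differentiableAt (by norm_num)).hasFDerivAt
  have hline : ∀ w : Euc n, HasDerivAt (fun s : ℝ => x₀ + s • w) w 0 := by
    intro w
    simpa using ((hasDerivAt_id (0:ℝ)).smul_const w).const_add x₀
  have hTw : ∀ w a, HasDerivAt (fun s : ℝ => fderiv ℝ G (x₀ + s • w) a) (T w a) 0 := by
    intro w a
    have h1 : HasDerivAt (fun s : ℝ => fderiv ℝ G (x₀ + s • w)) (T w) 0 := by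
      refine HasFDerivAt.comp_hasDerivAt (0:ℝ) ?_ (hline w)
      simpa using hTd
    have h2 := h1.clm_apply (hasDerivAt_const (0:ℝ) a)
    simpa using h2
  have hnear : ∀ w : Euc n, ∀ᶠ s in 𝓝 (0:ℝ), x₀ + s • w ∈ Ω := by
    intro w
    have := (hline w).continuousAt
    apply this.eventually_mem
    simpa using hΩo.mem_nhds hx₀
  -- third derivative identity
  have hTinner : ∀ w a b, HasDerivAt (fun s : ℝ => ⟪fderiv ℝ G (x₀ + s • w) a, b⟫) ⟪T w a, b⟫ 0 := by
    intro w a b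
    simpa using (hTw w a).inner ℝ (hasDerivAt_const (0:ℝ) b)
  have hTsymm1 : ∀ w a b, ⟪T w a, b⟫ = ⟪T w b, a⟫ := by
    intro w a b
    refine (hTinner w a b).unique ((hTinner w b a).congr_of_eventuallyEq ?_)
    filter_upwards [hnear w] with s hs using hsym _ hs a b
  have hTsymm2 : ∀ a b, T a b = T b a := by
    have := (hG2 x₀ hx₀).isSymmSndFDerivAt (by simp)
    intro a b
    exact this a b
  have hzero : ∀ w, ∑ i, ⟪T w (v i), v i⟫ * dEsymm k lam i = 0 := by
    intro w
    have h1 := hasDerivAt_sumMinors k (fun s => Mx (x₀ + s • w)) (fun a b => ⟪T w (v a), v b⟫) lam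
      (fun i j => hTinner w (v i) (v j)) (by simpa using hM0)
    refine h1.unique ((hasDerivAt_const (0:ℝ) (1:ℝ)).congr_of_eventuallyEq ?_)
    filter_upwards [hnear w] with s hs using hME _ hs
  have hsecond : ∀ i, lam i ^ 2 + ⟪T (G x₀) (v i), v i⟫ ≤ 0 := by
    intro i
    have hGs : ∀ᶠ s in 𝓝 (0:ℝ), HasDerivAt (fun s : ℝ => G (x₀ + s • v i))
        (fderiv ℝ G (x₀ + s • v i) (v i)) s := by
      filter_upwards [hnear (v i)] with s hs
      have hl : HasDerivAt (fun s : ℝ => x₀ + s • v i) (v i) s := by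
        simpa using ((hasDerivAt_id s).smul_const (v i)).const_add x₀
      exact HasFDerivAt.comp_hasDerivAt (f := fun s : ℝ => x₀ + s • v i) s
        (((hG2 _ hs).differentiableAt (by norm_num)).hasFDerivAt) hl
    have h2 := second_deriv_nonpos (g := fun s => ⟪G (x₀ + s • v i), G (x₀ + s • v i)⟫)
      (g' := fun s => ⟪G (x₀ + s • v i), fderiv ℝ G (x₀ + s • v i) (v i)⟫
        + ⟪fderiv ℝ G (x₀ + s • v i) (v i), G (x₀ + s • v i)⟫)
      (c := (⟪G x₀, T (v i) (v i)⟫ + ⟪fderiv ℝ G x₀ (v i), fderiv ℝ G x₀ (v i)⟫) +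
        (⟪fderiv ℝ G x₀ (v i), fderiv ℝ G x₀ (v i)⟫ + ⟪T (v i) (v i), G x₀⟫)) ?_ ?_ ?_
    · rw [real_inner_comm (T (v i) (v i)) (G x₀)] at h2
      rw [hTsymm2, hTsymm1]
      have : ⟪fderiv ℝ G x₀ (v i), fderiv ℝ G x₀ (v i)⟫ = lam i ^ 2 := by
        rw [heig, real_inner_self_eq_norm_sq, norm_smul, v.orthonormal.1 i]
        simp
      rw [this] at h2
      linarith
    · filter_upwards [hnear (v i)] with s hs
      simp only [real_inner_self_eq_norm_sq, hGn, zero_smul, add_zero]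
      have := hmax _ hs
      gcongr
    · filter_upwards [hGs] with s hs using hs.inner ℝ hs
    · have a1 := hGs.self_of_nhds
      have a2 := hTw (v i) (v i)
      have := (a1.inner ℝ a2).add (a2.inner ℝ a1)
      simp only [zero_smul, add_zero] at this
      exact this
  have hall : ∀ i, lam i = 0 := by
    have hs : ∑ i, (dEsymm k lam i) * lam i ^ 2 ≤ 0 := by
      have h1 : ∑ i, dEsymm k lam i * (lam i ^ 2 + ⟪T (G x₀) (v i), v i⟫) ≤ 0 :=
        Finset.sum_nonpos fun i _ => mul_nonpos_of_nonneg_of_nonpos (hf i).le (hsecond i)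
      have h2 := hzero (G x₀)
      simp only [mul_add, Finset.sum_add_distrib] at h1
      simp only [mul_comm _ (dEsymm k lam _)] at h2
      linarith
    have hs' := (Finset.sum_eq_zero_iff_of_nonneg (fun i _ => mul_nonneg (hf i).le (sq_nonneg (lam i)))).mp
      (le_antisymm hs (Finset.sum_nonneg fun i _ => mul_nonneg (hf i).le (sq_nonneg (lam i))))
    intro i
    have := hs' i (Finset.mem_univ _)
    rcases mul_eq_zero.mp this with h | h
    · exact absurd h (hf i).ne'
    · exact pow_eq_zero_iff (by norm_num) |>.mp h
  have hp := hpos k hk le_rfl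
  have : esymmVec k lam = 0 := by
    unfold esymmVec
    refine Finset.sum_eq_zero fun S hS => ?_
    rw [Finset.mem_powersetCard] at hS
    obtain ⟨i, hi⟩ : S.Nonempty := by rw [← Finset.card_pos]; omega
    exact Finset.prod_eq_zero hi (hall i)
  exact hp.ne' this

lemma boundary_part {n : ℕ} (Ω : Set (Euc n)) (hΩo : IsOpen Ω) (hΩb : IsBounded Ω)
    (u : Euc n → ℝ) (hu1 : ContDiffOn ℝ 1 u (closure Ω))
    (hno : ∀ x₀ ∈ Ω, (∀ x ∈ Ω, ‖fderiv ℝ u x‖ ≤ ‖fderiv ℝ u x₀‖) → False) :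
    sSup ((fun x => ‖fderivWithin ℝ u (closure Ω) x‖) '' closure Ω) =
      sSup ((fun x => ‖fderivWithin ℝ u (closure Ω) x‖) '' frontier Ω) := by
  rcases Ω.eq_empty_or_nonempty with rfl | hne
  · simp
  have hin : ∀ x ∈ Ω, fderivWithin ℝ u (closure Ω) x = fderiv ℝ u x := fun x hx =>
    fderivWithin_of_mem_nhds (mem_of_superset (hΩo.mem_nhds hx) subset_closure)
  -- local extension of derivative
  have hloc : ∀ z ∈ closure Ω, ∃ L, HasFDerivWithinAt u L (closure Ω) z ∧
      Tendsto (fderiv ℝ u) (𝓝[Ω] z) (𝓝 L) := by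
    intro z hz
    have h1 := hu1 z hz
    rw [show (1 : WithTop ℕ∞) = 0 + 1 by simp,
      contDiffWithinAt_succ_iff_hasFDerivWithinAt' (by simp)] at h1
    obtain ⟨U, hU, hUs, -, f', hf', hc⟩ := h1
    rw [insert_eq_of_mem hz] at hU
    refine ⟨f' z, hf' z (mem_of_mem_nhdsWithin hz hU), ?_⟩
    have h2 : Tendsto f' (𝓝[Ω] z) (𝓝 (f' z)) :=
      hc.continuousWithinAt.mono_left (nhdsWithin_mono z subset_closure)
    refine h2.congr' ?_
    filter_upwards [nhdsWithin_mono z subset_closure hU, self_mem_nhdsWithin] with y hy hyΩ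
    exact ((hf' y hy).hasFDerivAt
      (mem_of_superset (hΩo.mem_nhds hyΩ) subset_closure)).fderiv.symm
  set D := extendFrom Ω (fderiv ℝ u) with hD
  have hDc : ContinuousOn D (closure Ω) := continuousOn_extendFrom subset_rfl fun z hz =>
    let ⟨L, _, h⟩ := hloc z hz; ⟨L, h⟩
  have hDnice : ∀ z ∈ closure Ω, UniqueDiffWithinAt ℝ (closure Ω) z →
      D z = fderivWithin ℝ u (closure Ω) z := by
    intro z hz huniq
    obtain ⟨L, h1, h2⟩ := hloc z hz
    rw [h1.fderivWithin huniq]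
    exact extendFrom_eq hz h2
  have hDin : ∀ z ∈ Ω, D z = fderiv ℝ u z := by
    intro z hz
    rw [hDnice z (subset_closure hz), hin z hz]
    exact (hΩo.uniqueDiffWithinAt hz).mono subset_closure
  have hcomp : IsCompact (closure Ω) := hΩb.isCompact_closure
  obtain ⟨z, hz, hzmax⟩ := hcomp.exists_isMaxOn hne.closure hDc.norm
  have hzΩ : z ∉ Ω := by
    intro hzΩ
    refine hno z hzΩ fun x hx => ?_
    rw [← hDin x hx, ← hDin z hzΩ]
    exact hzmax (subset_closure hx)
  have hnearest : ∀ x ∈ Ω, ∃ y ∈ frontier Ω, UniqueDiffWithinAt ℝ (closure Ω) y ∧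
      dist x y ≤ dist x z := by
    intro x hx
    obtain ⟨y, hy, hxy⟩ := hΩo.isClosed_compl.exists_infDist_eq_dist ⟨z, hzΩ⟩ x
    have hr : 0 < dist x y := dist_pos.mpr fun h => hy (h ▸ hx)
    have hball : ball x (dist x y) ⊆ Ω := by
      intro w hw
      by_contra hw'
      have := infDist_le_dist_of_mem (x := x) (s := Ωᶜ) hw'
      rw [hxy] at this
      rw [mem_ball, dist_comm] at hw
      linarith
    have hycl : y ∈ closure (ball x (dist x y)) := by
      rw [closure_ball x hr.ne', mem_closedBall, dist_comm]
    refine ⟨y, ⟨closure_mono hball hycl, ?_⟩, ?_, ?_⟩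
    · rw [hΩo.interior_eq]; exact hy
    · refine (uniqueDiffWithinAt_convex (convex_ball x (dist x y)) ?_ hycl).mono
        (hball.trans subset_closure)
      rw [isOpen_ball.interior_eq]; exact nonempty_ball.mpr hr
    · rw [← hxy]; exact infDist_le_dist_of_mem hzΩ
  have hfrne : (frontier Ω).Nonempty := ⟨z, hz, by rwa [hΩo.interior_eq]⟩
  have hcl : closure Ω = Ω ∪ frontier Ω := by
    rw [← closure_eq_self_union_frontier]
  set N : Euc n → ℝ := fun x => ‖fderivWithin ℝ u (closure Ω) x‖ with hN
  by_cases hbdd : BddAbove (N '' frontier Ω)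
  · have hzle : ‖D z‖ ≤ sSup (N '' frontier Ω) := by
      apply le_of_forall_pos_le_add
      intro ε hε
      have hcz := hDc z hz
      rw [Metric.continuousWithinAt_iff] at hcz
      obtain ⟨δ, hδ, hcz⟩ := hcz ε hε
      obtain ⟨x, hx, hxz⟩ := Metric.mem_closure_iff.mp hz (δ/2) (by positivity)
      obtain ⟨y, hy, huy, hxy⟩ := hnearest x hx
      have hyz : dist y z < δ := by
        have := dist_triangle_left y z x
        rw [dist_comm z x] at hxz
        linarith
      have hd := hcz hy.1 hyz
      have h1 : N y ≤ sSup (N '' frontier Ω) := le_csSup hbdd ⟨y, hy, rfl⟩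
      rw [hN] at h1
      simp only at h1
      rw [← hDnice y hy.1 huy] at h1
      rw [dist_eq_norm] at hd
      have h2 := norm_sub_norm_le (D z) (D y)
      rw [norm_sub_rev] at h2
      linarith
    have hbound : ∀ w ∈ N '' closure Ω, w ≤ sSup (N '' frontier Ω) := by
      rintro _ ⟨x, hx, rfl⟩
      rw [hcl] at hx
      rcases hx with hx | hx
      · simp only [hN]
        rw [hin x hx, ← hDin x hx]
        exact (hzmax (subset_closure hx)).trans hzle
      · exact le_csSup hbdd ⟨x, hx, rfl⟩
    apply le_antisymm
    · exact csSup_le (hne.closure.image N) hbound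
    · exact csSup_le_csSup ⟨_, hbound⟩ (hfrne.image N) (image_mono frontier_subset_closure)
  · have hbdd' : ¬ BddAbove (N '' closure Ω) := fun h =>
      hbdd (h.mono (image_mono frontier_subset_closure))
    rw [Real.sSup_of_not_bddAbove hbdd, Real.sSup_of_not_bddAbove hbdd']

end MainPart

/-- the maximum of `|Du|` over `Ω̄` is attained on `∂Ω`. -/
theorem statement5 {n k : ℕ} (hk : 1 ≤ k) (hkn : k ≤ n)
    (Ω : Set (Euc n)) (hΩo : IsOpen Ω) (hΩb : IsBounded Ω)
    (u : Euc n → ℝ) (hu3 : ContDiffOn ℝ 3 u Ω) (hu1 : ContDiffOn ℝ 1 u (closure Ω))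
    (hconv : ∀ x ∈ Ω, InGardingCone k (hessian u x))
    (heq : ∀ x ∈ Ω, sigmaMat k (hessian u x) = 1) :
    sSup ((fun x => ‖fderivWithin ℝ u (closure Ω) x‖) '' closure Ω) =
      sSup ((fun x => ‖fderivWithin ℝ u (closure Ω) x‖) '' frontier Ω) := by
  exact boundary_part Ω hΩo hΩb u hu1 fun x₀ hx₀ hm =>
    no_interior_max hk hkn Ω hΩo u hu3 hconv heq x₀ hx₀ hm
end
end

section
/- There exists a constant C > 0 depending only on n and k such that the following holds: for every y ∈ ℝⁿ, every r > 0, and every strictly k-convex function u ∈ C³(B_r(y)) satisfying σ_k(D²u) = 1 in the ball B = B_r(y), one has |Du(y)| ≤ (C/r)·osc_B u, where osc_B u = sup_B u − inf_B u. -/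
open Set Metric Filter Topology Bornology
open scoped RealInnerProductSpace

noncomputable section

open Polynomial in
theorem aux_lag (s : Multiset ℝ) :
    2 * ((s.map (fun a => X - C a)).prod.coeff 0 * (s.map (fun a => X - C a)).prod.coeff 2)
      ≤ ((s.map (fun a => X - C a)).prod.coeff 1)^2 := by
  induction s using Multiset.induction_on with
  | empty => simp [coeff_one]
  | cons a s ih =>
    simp only [Multiset.map_cons, Multiset.prod_cons]
    generalize (s.map (fun a => X - C a)).prod = f at *
    have h0 : ((X - C a) * f).coeff 0 = - a * f.coeff 0 := by simp [sub_mul]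
    have h1 : ((X - C a) * f).coeff 1 = f.coeff 0 - a * f.coeff 1 := by
      simp [sub_mul, coeff_X_mul]
    have h2 : ((X - C a) * f).coeff 2 = f.coeff 1 - a * f.coeff 2 := by
      simp [sub_mul, coeff_X_mul]
    rw [h0, h1, h2]
    nlinarith [sq_nonneg (f.coeff 0), mul_nonneg (sq_nonneg a) (sub_nonneg.2 ih)]

open Polynomial in
theorem aux_lag_splits (f : ℝ[X]) (hf : f.Splits) :
    2 * (f.coeff 0 * f.coeff 2) ≤ (f.coeff 1)^2 := by
  have h := hf.eq_prod_roots
  have := aux_lag f.roots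
  rw [h]
  simp only [coeff_C_mul]
  nlinarith [mul_nonneg (sq_nonneg f.leadingCoeff) (sub_nonneg.2 this)]

open Polynomial in
theorem aux_splits_deriv (f : ℝ[X]) (hf : f.Splits) : (derivative f).Splits := by
  rw [splits_iff_card_roots] at hf ⊢
  have h1 := card_roots_le_derivative f
  have h2 := card_roots' (derivative f)
  have h3 := natDegree_derivative_le f
  by_cases h : f.natDegree = 0
  · omega
  · omega

open Polynomial in
theorem aux_splits_iter (f : ℝ[X]) (hf : f.Splits) (m : ℕ) : (derivative^[m] f).Splits := by
  induction m with
  | zero => simpa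
  | succ m ih => rw [Function.iterate_succ_apply']; exact aux_splits_deriv _ ih

open Polynomial in
theorem aux_newton (f : ℝ[X]) (hf : f.Splits) (m : ℕ) :
    f.coeff m * f.coeff (m+2) ≤ (f.coeff (m+1))^2 := by
  have h := aux_lag_splits _ (aux_splits_iter f hf m)
  simp only [coeff_iterate_derivative] at h
  have e0 : (0 + m).descFactorial m = m.factorial := by
    rw [zero_add, Nat.descFactorial_self]
  have e1 : (1 + m).descFactorial m = (m+1) * m.factorial := by
    have := Nat.factorial_mul_descFactorial (n := 1 + m) (k := m) (by omega)
    rw [show 1 + m - m = 1 by omega, Nat.factorial_one, one_mul, add_comm 1 m,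
      Nat.factorial_succ] at this
    rw [add_comm 1 m]; exact this
  have e2 : 2 * (2 + m).descFactorial m = (m+2) * ((m+1) * m.factorial) := by
    have := Nat.factorial_mul_descFactorial (n := 2 + m) (k := m) (by omega)
    rw [show 2 + m - m = 2 by omega, Nat.factorial_two, add_comm 2 m,
      Nat.factorial_succ, Nat.factorial_succ] at this
    rw [add_comm 2 m]; exact this
  have e2' : (2:ℝ) * ((2 + m).descFactorial m : ℝ) = (m+2) * ((m+1) * m.factorial) := by
    exact_mod_cast e2
  rw [e0, e1] at h
  simp only [nsmul_eq_mul] at h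
  push_cast at h
  rw [zero_add, add_comm 1 m, add_comm 2 m] at h
  rw [add_comm 2 m] at e2'
  set a := f.coeff m
  set b := f.coeff (m+1)
  set c := f.coeff (m+2)
  have hF : (0:ℝ) < m.factorial := by exact_mod_cast m.factorial_pos
  set F : ℝ := ((m.factorial : ℕ) : ℝ)
  set D : ℝ := ((m+2).descFactorial m : ℝ)
  have h' : F^2 * ((m+1:ℝ) * ((m+2) * (a * c))) ≤ F^2 * ((m+1:ℝ) * ((m+1) * b^2)) := by
    have : 2 * (F * a * (D * c)) = F^2 * ((m+1:ℝ) * ((m+2) * (a * c))) := by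
      calc _ = (2 * D) * (F * a * c) := by ring
        _ = _ := by rw [e2']; ring
    nlinarith
  have h1 := le_of_mul_le_mul_left h' (by positivity)
  have h2 := le_of_mul_le_mul_left h1 (by positivity)
  by_contra hc
  push Not at hc
  have hm : (0:ℝ) ≤ m := Nat.cast_nonneg m
  nlinarith [sq_nonneg b, mul_nonneg hm (sub_nonneg.2 hc.le)]

def es {ι : Type*} (lam : ι → ℝ) (S : Finset ι) (j : ℕ) : ℝ :=
  ∑ T ∈ Finset.powersetCard j S, ∏ i ∈ T, lam i

theorem es_zero {ι : Type*} (lam : ι → ℝ) (S : Finset ι) : es lam S 0 = 1 := by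
  simp [es]

theorem es_big {ι : Type*} (lam : ι → ℝ) (S : Finset ι) (j : ℕ) (h : S.card < j) :
    es lam S j = 0 := by
  simp [es, Finset.powersetCard_eq_empty.2 h]

theorem es_insert {ι : Type*} [DecidableEq ι] (lam : ι → ℝ) (S : Finset ι) (i : ι) (hi : i ∉ S)
    (j : ℕ) : es lam (insert i S) (j+1) = es lam S (j+1) + lam i * es lam S j := by
  unfold es
  rw [Finset.powersetCard_succ_insert hi, Finset.sum_union, Finset.sum_image, Finset.mul_sum]
  · congr 1
    apply Finset.sum_congr rfl
    intro T hT
    rw [Finset.prod_insert]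
    exact fun h => hi ((Finset.mem_powersetCard.1 hT).1 h)
  · intro T hT T' hT' h
    have h1 : i ∉ T := fun h => hi ((Finset.mem_powersetCard.1 hT).1 h)
    have h2 : i ∉ T' := fun h => hi ((Finset.mem_powersetCard.1 hT').1 h)
    rw [← Finset.erase_insert h1, ← Finset.erase_insert h2, h]
  · rw [Finset.disjoint_left]
    intro T hT hT'
    obtain ⟨T', -, rfl⟩ := Finset.mem_image.1 hT'
    exact hi ((Finset.mem_powersetCard.1 hT).1 (Finset.mem_insert_self _ _))

theorem es_erase {ι : Type*} [DecidableEq ι] (lam : ι → ℝ) (S : Finset ι) (i : ι) (hi : i ∈ S)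
    (j : ℕ) : es lam S (j+1) = es lam (S.erase i) (j+1) + lam i * es lam (S.erase i) j := by
  conv_lhs => rw [← Finset.insert_erase hi]
  exact es_insert lam _ i (Finset.notMem_erase i S) j

open Polynomial in
theorem es_coeff {ι : Type*} (lam : ι → ℝ) (S : Finset ι) (j : ℕ) (hj : j ≤ S.card) :
    (∏ i ∈ S, (X + C (lam i))).coeff (S.card - j) = es lam S j := by
  rw [Finset.prod_X_add_C_coeff _ _ (Nat.sub_le _ _), Nat.sub_sub_self hj]; rfl

open Polynomial in
theorem es_newton {ι : Type*} (lam : ι → ℝ) (S : Finset ι) (j : ℕ) :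
    es lam S j * es lam S (j+2) ≤ (es lam S (j+1))^2 := by
  by_cases h : S.card < j + 2
  · rw [es_big lam S _ h, mul_zero]; positivity
  push Not at h
  have := aux_newton (∏ i ∈ S, (X + C (lam i))) (Splits.prod fun i _ => Splits.X_add_C _)
    (S.card - (j+2))
  rw [show S.card - (j+2) + 2 = S.card - j by omega,
    show S.card - (j+2) + 1 = S.card - (j+1) by omega, es_coeff _ _ _ h,
    es_coeff _ _ _ (by omega), es_coeff _ _ _ (by omega)] at this
  linarith

theorem es_garding {ι : Type*} [DecidableEq ι] (lam : ι → ℝ) (S : Finset ι) (k : ℕ)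
    (h : ∀ j ≤ k, 0 < es lam S j) (i : ι) (hi : i ∈ S) (j : ℕ) (hj : j + 1 ≤ k) :
    0 < es lam (S.erase i) j := by
  induction j with
  | zero => rw [es_zero]; exact one_pos
  | succ j ih =>
    have ha := ih (by omega)
    have h1 := h (j+1) (by omega)
    have h2 := h (j+2) (by omega)
    have hN := es_newton lam (S.erase i) j
    rw [es_erase lam S i hi] at h1
    rw [es_erase lam S i hi (j+1)] at h2
    set a := es lam (S.erase i) j
    set b := es lam (S.erase i) (j+1)
    set c := es lam (S.erase i) (j+2)
    set x := lam i
    by_contra hb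
    push Not at hb
    nlinarith [mul_pos ha h2, mul_nonneg (neg_nonneg.2 hb) h1.le]

theorem es_erase_erase_nonneg {ι : Type*} [DecidableEq ι] (lam : ι → ℝ) (S : Finset ι) (k : ℕ)
    (h : ∀ j ≤ k, 0 < es lam S j) (i l : ι) (hi : i ∈ S) (hl : l ∈ S) (hil : l ≠ i)
    (j : ℕ) (hj : j + 2 ≤ k) :
    0 < es lam ((S.erase i).erase l) j := by
  refine es_garding lam (S.erase i) (k-1) (fun m hm => ?_) l (Finset.mem_erase.2 ⟨hil, hl⟩) j
    (by omega)
  exact es_garding lam S k h i hi m (by omega)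

theorem es_sum {ι : Type*} [DecidableEq ι] (lam : ι → ℝ) (S : Finset ι) (j : ℕ) :
    ∑ i ∈ S, lam i * es lam (S.erase i) j = (j+1) * es lam S (j+1) := by
  unfold es
  have : ∀ i ∈ S, lam i * ∑ T ∈ Finset.powersetCard j (S.erase i), ∏ l ∈ T, lam l
      = ∑ T ∈ (Finset.powersetCard (j+1) S).filter (fun T => i ∈ T), ∏ l ∈ T, lam l := by
    intro i hi
    rw [Finset.mul_sum]
    refine Finset.sum_bij' (fun T _ => insert i T) (fun T _ => T.erase i) ?_ ?_ ?_ ?_ ?_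
    · intro T hT
      obtain ⟨h1, h2⟩ := Finset.mem_powersetCard.1 hT
      have h3 : i ∉ T := fun h => Finset.notMem_erase i S (h1 h)
      simp only [Finset.mem_filter, Finset.mem_powersetCard]
      refine ⟨⟨?_, by rw [Finset.card_insert_of_notMem h3, h2]⟩, Finset.mem_insert_self _ _⟩
      exact Finset.insert_subset hi (h1.trans (Finset.erase_subset _ _))
    · intro T hT
      simp only [Finset.mem_filter, Finset.mem_powersetCard] at hT ⊢
      refine ⟨Finset.erase_subset_erase _ hT.1.1, ?_⟩
      rw [Finset.card_erase_of_mem hT.2, hT.1.2]; rfl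
    · intro T hT
      obtain ⟨h1, h2⟩ := Finset.mem_powersetCard.1 hT
      have h3 : i ∉ T := fun h => Finset.notMem_erase i S (h1 h)
      exact Finset.erase_insert h3
    · intro T hT
      simp only [Finset.mem_filter] at hT
      exact Finset.insert_erase hT.2
    · intro T hT
      obtain ⟨h1, h2⟩ := Finset.mem_powersetCard.1 hT
      have h3 : i ∉ T := fun h => Finset.notMem_erase i S (h1 h)
      rw [Finset.prod_insert h3]
  rw [Finset.sum_congr rfl this]
  simp only [Finset.sum_filter]
  rw [Finset.sum_comm, Finset.mul_sum]
  apply Finset.sum_congr rfl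
  intro T hT
  obtain ⟨h1, h2⟩ := Finset.mem_powersetCard.1 hT
  rw [← Finset.sum_filter, Finset.sum_const, Finset.filter_mem_eq_inter,
    Finset.inter_eq_right.2 h1, h2]
  simp

/-- weighted Chebyshev -/
theorem aux_cheb {ι : Type*} (S : Finset ι) (w a b : ι → ℝ) (hw : ∀ i ∈ S, 0 ≤ w i)
    (hw1 : ∑ i ∈ S, w i = 1) (hab : ∀ i ∈ S, ∀ l ∈ S, (a i - a l) * (b i - b l) ≤ 0) :
    ∑ i ∈ S, w i * a i * b i ≤ (∑ i ∈ S, w i * a i) * (∑ i ∈ S, w i * b i) := by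
  have h : ∑ i ∈ S, ∑ l ∈ S, w i * w l * ((a i - a l) * (b i - b l)) ≤ 0 := by
    apply Finset.sum_nonpos; intro i hi
    apply Finset.sum_nonpos; intro l hl
    exact mul_nonpos_of_nonneg_of_nonpos (mul_nonneg (hw i hi) (hw l hl)) (hab i hi l hl)
  have e : ∑ i ∈ S, ∑ l ∈ S, w i * w l * ((a i - a l) * (b i - b l))
      = 2 * ((∑ i ∈ S, w i * a i * b i) * ∑ i ∈ S, w i
        - (∑ i ∈ S, w i * a i) * (∑ i ∈ S, w i * b i)) := by
    have : ∀ i l, w i * w l * ((a i - a l) * (b i - b l)) =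
      (w i * a i * b i) * w l + w i * (w l * a l * b l) - (w i * a i) * (w l * b l)
        - (w i * b i) * (w l * a l) := by intros; ring
    simp only [this, Finset.sum_add_distrib, Finset.sum_sub_distrib, ← Finset.mul_sum,
      ← Finset.sum_mul]
    ring
  rw [e, hw1] at h
  linarith

theorem aux_key {ι : Type*} [DecidableEq ι] (lam w : ι → ℝ) (S : Finset ι) (k : ℕ)
    (h : ∀ j ≤ k + 1, 0 < es lam S j) (hw : ∀ i ∈ S, 0 ≤ w i)
    (hw1 : ∑ i ∈ S, w i = 1) (hwl : ∑ i ∈ S, w i * lam i ≤ 0) :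
    ∑ i ∈ S, es lam (S.erase i) k ≤ S.card * ∑ i ∈ S, w i * es lam (S.erase i) k := by
  rcases k with _ | k
  · simp only [es_zero, mul_one, hw1]; simp
  have e1 : ∀ i ∈ S, es lam (S.erase i) (k+1) = es lam S (k+1) - lam i * es lam (S.erase i) k := by
    intro i hi; rw [es_erase lam S i hi]; ring
  have h1 : ∑ i ∈ S, es lam (S.erase i) (k+1) ≤ S.card * es lam S (k+1) := by
    rw [Finset.sum_congr rfl e1, Finset.sum_sub_distrib, es_sum]
    simp only [Finset.sum_const, nsmul_eq_mul]
    have := h (k+1) (by omega)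
    have : 0 ≤ ((k:ℝ)+1) * es lam S (k+1) := by positivity
    linarith
  refine h1.trans (mul_le_mul_of_nonneg_left ?_ (Nat.cast_nonneg _))
  have e2 : ∑ i ∈ S, w i * es lam (S.erase i) (k+1)
      = es lam S (k+1) - ∑ i ∈ S, w i * lam i * es lam (S.erase i) k := by
    rw [Finset.sum_congr rfl (fun i hi => by rw [e1 i hi])]
    simp only [mul_sub, Finset.sum_sub_distrib, ← Finset.sum_mul, hw1, one_mul, mul_assoc]
  rw [e2]
  have h3 := aux_cheb S w lam (fun i => es lam (S.erase i) k) hw hw1 (by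
    intro i hi l hl
    by_cases hil : l = i
    · simp [hil]
    rcases k with _ | k
    · simp [es_zero]
    have a1 := es_erase lam (S.erase i) l (Finset.mem_erase.2 ⟨hil, hl⟩) k
    have a2 := es_erase lam (S.erase l) i (Finset.mem_erase.2 ⟨Ne.symm hil, hi⟩) k
    rw [Finset.erase_right_comm] at a2
    have a3 := es_erase_erase_nonneg lam S _ h i l hi hl hil k (by omega)
    rw [a1, a2]
    nlinarith [mul_nonneg a3.le (sq_nonneg (lam i - lam l))])
  have h4 : 0 ≤ ∑ i ∈ S, w i * es lam (S.erase i) k :=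
    Finset.sum_nonneg fun i hi => mul_nonneg (hw i hi) (es_garding lam S _ h i hi k (by omega)).le
  have h5 := mul_nonneg (neg_nonneg.2 hwl) h4
  linarith
open Polynomial in
theorem aux_interp (n j : ℕ) : ∃ L : Fin (n+1) → ℝ, ∃ t : Fin (n+1) → ℝ,
    ∀ p : ℝ[X], p.natDegree ≤ n → p.coeff j = ∑ m, L m * p.eval (t m) := by
  let v : Fin (n+1) → ℝ := fun m => (m : ℕ)
  have hv : Set.InjOn v (Finset.univ : Finset (Fin (n+1))) := by
    intro a _ b _ h
    have : ((a:ℕ):ℝ) = ((b:ℕ):ℝ) := h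
    exact Fin.ext (by exact_mod_cast this)
  refine ⟨fun m => (Lagrange.basis Finset.univ v m).coeff j, v, fun p hp => ?_⟩
  have h := Lagrange.eq_interpolate (f := p) (s := Finset.univ) (v := v) hv (by
    refine lt_of_le_of_lt (degree_le_natDegree) ?_
    simp only [Finset.card_univ, Fintype.card_fin]
    exact_mod_cast Nat.lt_succ_of_le hp)
  conv_lhs => rw [h]
  rw [Lagrange.interpolate_apply, finsetSum_coeff]
  apply Finset.sum_congr rfl
  intro m _
  rw [coeff_C_mul, mul_comm]

theorem aux_det {n : ℕ} (M : ℝ → Matrix (Fin n) (Fin n) ℝ) (M' : Matrix (Fin n) (Fin n) ℝ)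
    (d : Fin n → ℝ) (hM0 : M 0 = Matrix.diagonal d)
    (hM : ∀ i j, HasDerivAt (fun s => M s i j) (M' i j) 0) :
    HasDerivAt (fun s => (M s).det) (∑ i, M' i i * ∏ l ∈ Finset.univ.erase i, d l) 0 := by
  have h1 : HasDerivAt (fun s => (M s).det)
      (∑ σ : Equiv.Perm (Fin n), ((Equiv.Perm.sign σ : ℤ) : ℝ) *
        ∑ i, (∏ l ∈ Finset.univ.erase i, M 0 (σ l) l) • M' (σ i) i) 0 := by
    simp only [Matrix.det_apply']
    apply HasDerivAt.fun_sum
    intro σ _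
    apply HasDerivAt.const_mul
    exact HasDerivAt.fun_finsetProd (fun i _ => hM (σ i) i)
  convert h1 using 1
  rw [Finset.sum_eq_single (1 : Equiv.Perm (Fin n))]
  · simp [hM0, mul_comm]
  · intro σ _ hσ
    rw [Finset.sum_eq_zero, mul_zero]
    intro i _
    obtain ⟨l, hl, hli⟩ : ∃ l, σ l ≠ l ∧ l ≠ i := by
      by_contra hcon
      push Not at hcon
      apply hσ
      ext1 a
      by_contra ha
      have e1 := hcon a ha
      have e2 := hcon (σ a) (fun h => ha (σ.injective h))
      exact ha (by rw [e2, e1]; rfl)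
    rw [Finset.prod_eq_zero (i := l) (by simp [hli])]
    · simp
    · rw [hM0, Matrix.diagonal_apply_ne _ hl]
  · simp

open Polynomial in
theorem aux_mat {n k : ℕ} (hk : k + 1 ≤ n) (A : ℝ → Matrix (Fin n) (Fin n) ℝ)
    (A' : Matrix (Fin n) (Fin n) ℝ)
    (lam : Fin n → ℝ) (hA0 : A 0 = Matrix.diagonal lam)
    (hA : ∀ i j, HasDerivAt (fun s => A s i j) (A' i j) 0)
    (hc : ∀ᶠ s in 𝓝 (0:ℝ), ∃ mu : Fin n → ℝ,
      (∀ t : ℝ, (t • (1 : Matrix (Fin n) (Fin n) ℝ) + A s).det = ∏ i, (t + mu i)) ∧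
        es mu Finset.univ (k+1) = 1) :
    ∑ i, es lam (Finset.univ.erase i) k * A' i i = 0 := by
  obtain ⟨L, t, hL⟩ := aux_interp n (n - (k+1))
  have h1 : ∀ m, HasDerivAt (fun s => (t m • (1 : Matrix (Fin n) (Fin n) ℝ) + A s).det)
      (∑ i, A' i i * ∏ l ∈ Finset.univ.erase i, (t m + lam l)) 0 := by
    intro m
    apply aux_det
    · rw [hA0, Matrix.smul_one_eq_diagonal, Matrix.diagonal_add]
    · intro i j
      simp only [Matrix.add_apply]
      exact (hA i j).const_add _
  have h2 : HasDerivAt (fun s => ∑ m, L m * (t m • (1 : Matrix (Fin n) (Fin n) ℝ) + A s).det)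
      (∑ m, L m * ∑ i, A' i i * ∏ l ∈ Finset.univ.erase i, (t m + lam l)) 0 :=
    HasDerivAt.fun_sum fun m _ => (h1 m).const_mul _
  have h3 : (fun s => ∑ m, L m * (t m • (1 : Matrix (Fin n) (Fin n) ℝ) + A s).det)
      =ᶠ[𝓝 0] fun _ => (1:ℝ) := by
    filter_upwards [hc] with s hs
    obtain ⟨mu, hmu, he⟩ := hs
    have := hL (∏ i, (X + C (mu i))) (by
      refine (natDegree_prod_le _ _).trans ?_
      simp)
    have e := es_coeff mu Finset.univ (k+1) (by simpa using hk)
    rw [Finset.card_univ, Fintype.card_fin, this, he] at e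
    rw [← e]
    apply Finset.sum_congr rfl
    intro m _
    rw [hmu, eval_prod]; simp
  have h4 := h2.unique ((hasDerivAt_const (0:ℝ) (1:ℝ)).congr_of_eventuallyEq h3)
  rw [← h4]
  have h5 := hL (∑ i, C (A' i i) * ∏ l ∈ Finset.univ.erase i, (X + C (lam l))) (by
    apply natDegree_sum_le_of_forall_le
    intro i _
    refine (natDegree_C_mul_le _ _).trans ((natDegree_prod_le _ _).trans ?_)
    simp only [natDegree_X_add_C, Finset.sum_const, smul_eq_mul, mul_one]
    exact (Finset.card_le_univ _).trans (by simp))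
  simp only [eval_finsetSum, eval_mul, eval_C, eval_prod, eval_add, eval_X] at h5
  rw [← h5, finsetSum_coeff]
  apply Finset.sum_congr rfl
  intro i _
  rw [coeff_C_mul, mul_comm]
  congr 1
  have e := es_coeff lam (Finset.univ.erase i) k (by
    rw [Finset.card_erase_of_mem (Finset.mem_univ _)]; simp; omega)
  rw [← e]
  congr 1
  rw [Finset.card_erase_of_mem (Finset.mem_univ _)]; simp; omega
theorem aux_locmax (g g' : ℝ → ℝ) (c : ℝ) (hg : ∀ᶠ s in 𝓝 (0:ℝ), HasDerivAt g (g' s) s)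
    (hg' : HasDerivAt g' c 0) (hmax : IsLocalMax g 0) : g' 0 = 0 ∧ c ≤ 0 := by
  have h0 : g' 0 = 0 := hmax.hasDerivAt_eq_zero hg.self_of_nhds
  refine ⟨h0, ?_⟩
  by_contra hc
  push Not at hc
  have hd : deriv g =ᶠ[𝓝 0] g' := hg.mono fun s hs => hs.deriv
  have hdd : deriv (deriv g) 0 = c := by rw [hd.deriv_eq, hg'.deriv]
  have hmin := isLocalMin_of_deriv_deriv_pos (f := g) (x₀ := 0) (by rw [hdd]; exact hc)
    (by rw [hd.self_of_nhds, h0]) hg.self_of_nhds.continuousAt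
  have hconst : g =ᶠ[𝓝 0] fun _ => g 0 := by
    filter_upwards [hmax, hmin] with s h1 h2
    exact le_antisymm h1 h2
  have h2 := hconst.deriv.deriv_eq
  rw [hdd] at h2
  simp at h2
  linarith

theorem aux_1d (v U R v' U' R' : ℝ → ℝ) (v2 U2 R2 M : ℝ)
    (hv : ∀ᶠ s in 𝓝 (0:ℝ), HasDerivAt v (v' s) s) (hv' : HasDerivAt v' v2 0)
    (hU : ∀ᶠ s in 𝓝 (0:ℝ), HasDerivAt U (U' s) s) (hU' : HasDerivAt U' U2 0)
    (hR : ∀ᶠ s in 𝓝 (0:ℝ), HasDerivAt R (R' s) s) (hR' : HasDerivAt R' R2 0)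
    (hv0 : 0 < v 0) (hU0 : 0 < M - U 0) (hR0 : 0 < R 0)
    (hmax : IsLocalMax (fun s => Real.log (v s) - 1/2 * Real.log (M - U s) + Real.log (R s)) 0) :
    v' 0 / v 0 + U' 0 / (2 * (M - U 0)) + R' 0 / R 0 = 0 ∧
    v2 / v 0 - (v' 0 / v 0)^2 + U2 / (2 * (M - U 0)) + (U' 0)^2 / (2 * (M - U 0)^2)
      + R2 / R 0 - (R' 0 / R 0)^2 ≤ 0 := by
  have hg : ∀ᶠ s in 𝓝 (0:ℝ), HasDerivAt
      (fun s => Real.log (v s) - 1/2 * Real.log (M - U s) + Real.log (R s))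
      (v' s / v s - 1/2 * ((- U' s) / (M - U s)) + R' s / R s) s := by
    have e1 := hv.self_of_nhds.continuousAt.eventually (lt_mem_nhds hv0)
    have e2 := (hU.self_of_nhds.const_sub M).continuousAt.eventually (lt_mem_nhds hU0)
    have e3 := hR.self_of_nhds.continuousAt.eventually (lt_mem_nhds hR0)
    filter_upwards [hv, hU, hR, e1, e2, e3] with s h1 h2 h3 h4 h5 h6
    exact ((h1.log h4.ne').sub (((h2.const_sub M).log h5.ne').const_mul _)).add (h3.log h6.ne')
  have h1 := hv'.div hv.self_of_nhds hv0.ne'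
  have h2 := ((hU'.neg).div (hU.self_of_nhds.const_sub M) hU0.ne').const_mul (1/2 : ℝ)
  have h3 := hR'.div hR.self_of_nhds hR0.ne'
  obtain ⟨k1, k2⟩ := aux_locmax _ _ _ hg ((h1.sub h2).add h3) hmax
  have a := hv0.ne'
  have b := hU0.ne'
  have c := hR0.ne'
  constructor
  · refine Eq.trans ?_ k1
    field_simp
    ring
  · refine le_of_eq_of_le ?_ k2
    simp only [Pi.neg_apply]
    generalize v 0 = V at *
    generalize M - U 0 = W at *
    generalize R 0 = Z at *
    field_simp
    ring

theorem aux_line {n : ℕ} {F : Type*} [NormedAddCommGroup F] [NormedSpace ℝ F]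
    (f : Euc n → F) (f' : Euc n →L[ℝ] F) (x b : Euc n) (s : ℝ)
    (h : HasFDerivAt f f' (x + s • b)) : HasDerivAt (fun s : ℝ => f (x + s • b)) (f' b) s := by
  have h1 : HasDerivAt (fun s : ℝ => x + s • b) b s := by
    simpa using ((hasDerivAt_id s).smul_const b).const_add x
  exact h.comp_hasDerivAt s h1

theorem aux_dir {n : ℕ} (u : Euc n → ℝ) (D1 : Euc n → Euc n →L[ℝ] ℝ)
    (D2 : Euc n → Euc n →L[ℝ] Euc n →L[ℝ] ℝ)
    (D3 : Euc n →L[ℝ] Euc n →L[ℝ] Euc n →L[ℝ] ℝ) (x0 y ξ b : Euc n) (R M : ℝ)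
    (hb : ‖b‖ = 1)
    (h1 : ∀ᶠ x in 𝓝 x0, HasFDerivAt u (D1 x) x)
    (h2 : ∀ᶠ x in 𝓝 x0, HasFDerivAt D1 (D2 x) x)
    (h3 : HasFDerivAt D2 D3 x0)
    (hv0 : 0 < D1 x0 ξ) (hU0 : 0 < M - u x0) (hR0 : 0 < 1 - ‖x0 - y‖^2 / R^2)
    (hmax : IsLocalMax (fun x => Real.log (D1 x ξ) - 1/2 * Real.log (M - u x)
      + Real.log (1 - ‖x - y‖^2 / R^2)) x0) :
    D2 x0 b ξ / D1 x0 ξ + D1 x0 b / (2 * (M - u x0))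
      + (-(2 * ⟪x0 - y, b⟫ / R^2)) / (1 - ‖x0 - y‖^2 / R^2) = 0 ∧
    D3 b b ξ / D1 x0 ξ - (D2 x0 b ξ / D1 x0 ξ)^2 + D2 x0 b b / (2 * (M - u x0))
      + (D1 x0 b)^2 / (2 * (M - u x0)^2)
      + (-(2 / R^2)) / (1 - ‖x0 - y‖^2 / R^2)
      - ((-(2 * ⟪x0 - y, b⟫ / R^2)) / (1 - ‖x0 - y‖^2 / R^2))^2 ≤ 0 := by
  have hline : Tendsto (fun s : ℝ => x0 + s • b) (𝓝 0) (𝓝 x0) := by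
    have : Continuous (fun s : ℝ => x0 + s • b) := by fun_prop
    simpa using this.tendsto 0
  have hz : x0 + (0:ℝ) • b = x0 := by simp
  have hRd : ∀ s : ℝ, HasDerivAt (fun s : ℝ => 1 - ‖x0 + s • b - y‖^2 / R^2)
      (-(2 * ⟪x0 + s • b - y, b⟫ / R^2)) s := by
    intro s
    have e1 : HasDerivAt (fun s : ℝ => x0 + s • b - y) b s := by
      simpa using (((hasDerivAt_id s).smul_const b).const_add x0).sub_const y
    exact (e1.norm_sq.div_const (R^2)).const_sub 1
  have hRd2 : HasDerivAt (fun s : ℝ => -(2 * ⟪x0 + s • b - y, b⟫ / R^2)) (-(2 / R^2)) 0 := by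
    have e1 : HasDerivAt (fun s : ℝ => x0 + s • b - y) b 0 := by
      simpa using (((hasDerivAt_id (0:ℝ)).smul_const b).const_add x0).sub_const y
    have e2 := (((e1.inner ℝ (hasDerivAt_const (0:ℝ) b)).const_mul 2).div_const (R^2)).neg
    rw [inner_zero_right, real_inner_self_eq_norm_sq, hb] at e2
    norm_num at e2
    exact e2
  have key := aux_1d (fun s => D1 (x0 + s • b) ξ) (fun s => u (x0 + s • b))
    (fun s => 1 - ‖x0 + s • b - y‖^2 / R^2) (fun s => D2 (x0 + s • b) b ξ)
    (fun s => D1 (x0 + s • b) b) (fun s => -(2 * ⟪x0 + s • b - y, b⟫ / R^2))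
    (D3 b b ξ) (D2 x0 b b) (-(2 / R^2)) M
    ((hline.eventually h2).mono fun s hs => by
      have := (aux_line _ _ _ _ _ hs).clm_apply (hasDerivAt_const s ξ)
      simpa using this)
    (by
      have := ((aux_line D2 D3 x0 b 0 (by rw [hz]; exact h3)).clm_apply
        (hasDerivAt_const (0:ℝ) b)).clm_apply (hasDerivAt_const (0:ℝ) ξ)
      simpa using this)
    ((hline.eventually h1).mono fun s hs => aux_line _ _ _ _ _ hs)
    (by
      have := (aux_line D1 (D2 x0) x0 b 0 (by rw [hz]; exact h2.self_of_nhds)).clm_apply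
        (hasDerivAt_const (0:ℝ) b)
      simpa using this)
    (Eventually.of_forall hRd) hRd2
    (by simpa using hv0) (by simpa using hU0) (by simpa using hR0)
    (by
      have := hline.eventually hmax
      simp only [IsLocalMax, IsMaxFilter]
      simpa using this)
  simpa only [hz] using key
theorem aux_bil_expand {n : ℕ} (B : Euc n →L[ℝ] Euc n →L[ℝ] ℝ) (x z : Euc n) :
    B x z = ∑ p, ∑ q, x p * B (EuclideanSpace.single p (1:ℝ)) (EuclideanSpace.single q (1:ℝ)) * z q := by
  have hx := (EuclideanSpace.basisFun (Fin n) ℝ).sum_repr x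
  have hz := (EuclideanSpace.basisFun (Fin n) ℝ).sum_repr z
  simp only [EuclideanSpace.basisFun_repr, EuclideanSpace.basisFun_apply] at hx hz
  conv_lhs => rw [← hx, ← hz]
  simp only [map_sum, map_smul, _root_.sum_apply, _root_.smul_apply,
    smul_eq_mul, Finset.mul_sum]
  rw [Finset.sum_comm]
  apply Finset.sum_congr rfl; intro p _
  apply Finset.sum_congr rfl; intro q _
  ring

theorem aux_bil {n : ℕ} (B : Euc n →L[ℝ] Euc n →L[ℝ] ℝ)
    (b : OrthonormalBasis (Fin n) ℝ (Euc n)) (t : ℝ) :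
    (t • (1 : Matrix (Fin n) (Fin n) ℝ) + Matrix.of fun i j => B (b i) (b j)).det
      = (t • (1 : Matrix (Fin n) (Fin n) ℝ) + Matrix.of fun i j =>
        B (EuclideanSpace.single i (1:ℝ)) (EuclideanSpace.single j (1:ℝ))).det := by
  set H : Matrix (Fin n) (Fin n) ℝ := Matrix.of fun i j =>
        B (EuclideanSpace.single i (1:ℝ)) (EuclideanSpace.single j (1:ℝ)) with hH
  let P : Matrix (Fin n) (Fin n) ℝ := Matrix.of fun i a => b a i
  have hP : P.transpose * P = 1 := by
    ext i j
    have := b.inner_eq_ite j i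
    rw [PiLp.inner_apply] at this
    simp only [RCLike.inner_apply, conj_trivial] at this
    rw [Matrix.mul_apply, Matrix.one_apply]
    simp only [P, Matrix.transpose_apply, Matrix.of_apply]
    rw [this]
    simp only [eq_comm]
  have hN : (Matrix.of fun i j => B (b i) (b j)) = P.transpose * H * P := by
    ext i j
    rw [Matrix.of_apply, aux_bil_expand B]
    rw [Matrix.mul_apply, Finset.sum_comm]
    apply Finset.sum_congr rfl; intro q _
    rw [Matrix.mul_apply, Finset.sum_mul]
    rfl
  have hdet : P.transpose.det * P.det = 1 := by
    rw [← Matrix.det_mul, hP, Matrix.det_one]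
  have : t • (1 : Matrix (Fin n) (Fin n) ℝ) + P.transpose * H * P
      = P.transpose * (t • (1 : Matrix (Fin n) (Fin n) ℝ) + H) * P := by
    rw [Matrix.mul_add, Matrix.add_mul, Matrix.mul_smul, Matrix.smul_mul, Matrix.mul_one, hP]
  rw [hN, this, Matrix.det_mul, Matrix.det_mul]
  linear_combination (t • (1 : Matrix (Fin n) (Fin n) ℝ) + H).det * hdet

theorem aux_diag {n : ℕ} (B : Euc n →L[ℝ] Euc n →L[ℝ] ℝ) (H : Matrix (Fin n) (Fin n) ℝ)
    (hH : ∀ i j, H i j = B (EuclideanSpace.single i (1:ℝ)) (EuclideanSpace.single j (1:ℝ)))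
    (h : H.IsHermitian) :
    (Matrix.of fun i j => B (h.eigenvectorBasis i) (h.eigenvectorBasis j))
      = Matrix.diagonal h.eigenvalues := by
  ext i j
  rw [Matrix.of_apply, aux_bil_expand B]
  have h1 := h.mulVec_eigenvectorBasis j
  have h2 : ∀ p, ∑ q, H p q * h.eigenvectorBasis j q
      = h.eigenvalues j * h.eigenvectorBasis j p := by
    intro p
    have := congrFun h1 p
    simpa [Matrix.mulVec, dotProduct] using this
  have h3 := h.eigenvectorBasis.inner_eq_ite j i
  rw [PiLp.inner_apply] at h3
  simp only [RCLike.inner_apply, conj_trivial] at h3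
  simp only [← hH, mul_assoc, ← Finset.mul_sum, h2]
  have : ∀ p, h.eigenvectorBasis i p * (h.eigenvalues j * h.eigenvectorBasis j p)
    = h.eigenvalues j * (h.eigenvectorBasis i p * h.eigenvectorBasis j p) := by intro p; ring
  simp only [this, ← Finset.mul_sum]
  rw [h3, Matrix.diagonal_apply]
  by_cases hij : i = j
  · subst hij; simp
  · simp [hij, Ne.symm hij]

theorem aux_eig_det {n : ℕ} (B : Euc n →L[ℝ] Euc n →L[ℝ] ℝ) (H : Matrix (Fin n) (Fin n) ℝ)
    (hH : ∀ i j, H i j = B (EuclideanSpace.single i (1:ℝ)) (EuclideanSpace.single j (1:ℝ)))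
    (h : H.IsHermitian) (b : OrthonormalBasis (Fin n) ℝ (Euc n)) (t : ℝ) :
    (t • (1 : Matrix (Fin n) (Fin n) ℝ) + Matrix.of fun i j => B (b i) (b j)).det
      = ∏ i, (t + h.eigenvalues i) := by
  rw [aux_bil, ← aux_bil B h.eigenvectorBasis, aux_diag B H hH h, Matrix.smul_one_eq_diagonal,
    Matrix.diagonal_add, Matrix.det_diagonal]

theorem aux_pt (V al U' be A3 lam ga Q : ℝ) (h1 : V + al * U' + be = 0)
    (h2 : A3 - V^2 + al * lam + 2 * al^2 * U'^2 + ga - be^2 ≤ 0)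
    (hb : be^2 ≤ 4 * Q) (hg : -(2 * Q) ≤ ga) :
    A3 + al * lam + 1/2 * al^2 * U'^2 ≤ 18 * Q := by
  have hV : V = -(al * U' + be) := by linarith
  rw [hV] at h2
  nlinarith [sq_nonneg (al * U' - 2 * be)]

set_option maxHeartbeats 2000000 in
theorem aux_est {n k : ℕ} (hk : k + 1 ≤ n) (y : Euc n) (r : ℝ) (u : Euc n → ℝ)
    (hu : ContDiffOn ℝ 3 u (ball y r))
    (hcone : ∀ x ∈ ball y r, InGardingCone (k+1) (hessian u x))
    (hsig : ∀ x ∈ ball y r, sigmaMat (k+1) (hessian u x) = 1)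
    (x0 : Euc n) (hx0 : x0 ∈ ball y r) (R M p : ℝ) (hR : 0 < R) (ξ : Euc n) (hξ1 : ‖ξ‖ = 1)
    (hρ : 0 < 1 - ‖x0 - y‖^2 / R^2) (hp : 0 < p) (hξ : ∀ b, fderiv ℝ u x0 b = p * ⟪ξ, b⟫)
    (hM : 0 < M - u x0)
    (hmax : IsLocalMax (fun x => Real.log (fderiv ℝ u x ξ) - 1/2 * Real.log (M - u x)
      + Real.log (1 - ‖x - y‖^2 / R^2)) x0) :
    p * (1 - ‖x0 - y‖^2 / R^2) * R ≤ 12 * n * (M - u x0) := by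
  have hnb : ball y r ∈ 𝓝 x0 := isOpen_ball.mem_nhds hx0
  have hcd : ∀ x ∈ ball y r, ContDiffAt ℝ 3 u x := fun x hx =>
    hu.contDiffAt (isOpen_ball.mem_nhds hx)
  have hcd1 : ∀ x ∈ ball y r, ContDiffAt ℝ 2 (fderiv ℝ u) x := fun x hx =>
    (hcd x hx).fderiv_right (by norm_num)
  have hcd2 : ∀ x ∈ ball y r, ContDiffAt ℝ 1 (fderiv ℝ (fderiv ℝ u)) x := fun x hx =>
    (hcd1 x hx).fderiv_right (by norm_num)
  set D1 := fderiv ℝ u with hD1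
  set D2 := fderiv ℝ D1 with hD2
  set D3 := fderiv ℝ D2 x0 with hD3
  have h1 : ∀ᶠ x in 𝓝 x0, HasFDerivAt u (D1 x) x := by
    filter_upwards [hnb] with x hx
    exact ((hcd x hx).differentiableAt (by norm_num)).hasFDerivAt
  have h2 : ∀ᶠ x in 𝓝 x0, HasFDerivAt D1 (D2 x) x := by
    filter_upwards [hnb] with x hx
    exact ((hcd1 x hx).differentiableAt (by norm_num)).hasFDerivAt
  have h3 : HasFDerivAt D2 D3 x0 := ((hcd2 x0 hx0).differentiableAt (by norm_num)).hasFDerivAt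
  have hs2 : ∀ x ∈ ball y r, ∀ a b, D2 x a b = D2 x b a := by
    intro x hx a b
    exact ((hcd x hx).isSymmSndFDerivAt (by simp; norm_num)) a b
  have hs3 : ∀ a b, D3 a b = D3 b a := by
    intro a b
    exact ((hcd1 x0 hx0).isSymmSndFDerivAt (by simp)) a b
  have hs3' : ∀ a b c, D3 a b c = D3 a c b := by
    intro a b c
    have hl : Tendsto (fun s : ℝ => x0 + s • a) (𝓝 0) (𝓝 x0) := by
      have : Continuous (fun s : ℝ => x0 + s • a) := by fun_prop
      simpa using this.tendsto 0
    have e0 : ∀ b c, HasDerivAt (fun s : ℝ => D2 (x0 + s • a) b c) (D3 a b c) 0 := by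
      intro b c
      have := ((aux_line D2 D3 x0 a 0 (by simpa using h3)).clm_apply
        (hasDerivAt_const (0:ℝ) b)).clm_apply (hasDerivAt_const (0:ℝ) c)
      simpa using this
    have e3 : (fun s : ℝ => D2 (x0 + s • a) b c) =ᶠ[𝓝 0] fun s => D2 (x0 + s • a) c b := by
      filter_upwards [hl.eventually hnb] with s hs
      exact hs2 _ hs b c
    exact (e0 b c).unique ((e0 c b).congr_of_eventuallyEq e3)
  have hsym : ∀ b, D3 b b ξ = D3 ξ b b := by
    intro b
    rw [hs3' b b ξ, hs3 b ξ]
  have hhess : ∀ x i j, hessian u x i j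
      = D2 x (EuclideanSpace.single i (1:ℝ)) (EuclideanSpace.single j (1:ℝ)) := by
    intro x i j
    unfold hessian
    rw [iteratedFDeriv_two_apply]
    simp [hD1, hD2]
  obtain ⟨hH, hpos⟩ := hcone x0 hx0
  set b := hH.eigenvectorBasis with hb
  set lam := hH.eigenvalues with hlam
  have hdiag := aux_diag (D2 x0) (hessian u x0) (hhess x0) hH
  have hes : ∀ j ≤ k + 1, 0 < es lam Finset.univ j := by
    intro j hj
    rcases j with _ | j
    · rw [es_zero]; exact one_pos
    · exact hpos (j+1) (by omega) hj
  have hline : Tendsto (fun s : ℝ => x0 + s • ξ) (𝓝 0) (𝓝 x0) := by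
    have : Continuous (fun s : ℝ => x0 + s • ξ) := by fun_prop
    simpa using this.tendsto 0
  have hlin : ∑ i, es lam (Finset.univ.erase i) k * D3 ξ (b i) (b i) = 0 := by
    refine aux_mat hk (fun s => Matrix.of fun i j => D2 (x0 + s • ξ) (b i) (b j))
      (Matrix.of fun i j => D3 ξ (b i) (b j)) lam ?_ ?_ ?_
    · simp only [zero_smul, add_zero]; exact hdiag
    · intro i j
      have := ((aux_line D2 D3 x0 ξ 0 (by simpa using h3)).clm_apply
        (hasDerivAt_const (0:ℝ) (b i))).clm_apply (hasDerivAt_const (0:ℝ) (b j))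
      simpa using this
    · filter_upwards [hline.eventually hnb] with s hs
      obtain ⟨hH', -⟩ := hcone _ hs
      refine ⟨hH'.eigenvalues, fun t => aux_eig_det _ _ (hhess _) hH' b t, ?_⟩
      have := hsig _ hs
      unfold sigmaMat at this
      rw [dif_pos hH'] at this
      exact this
  have hv0 : 0 < D1 x0 ξ := by
    rw [hξ, real_inner_self_eq_norm_sq, hξ1]; simpa using hp
  have hv0' : D1 x0 ξ = p := by
    rw [hξ, real_inner_self_eq_norm_sq, hξ1]; simp
  have hdir := fun b hb => aux_dir u D1 D2 D3 x0 y ξ b R M hb h1 h2 h3 hv0 hM hρ hmax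
  rw [hv0'] at hdir
  set W := M - u x0 with hW
  set ρ := 1 - ‖x0 - y‖^2 / R^2 with hρd
  have hρ1 : ρ ≤ 1 := by
    have : 0 ≤ ‖x0 - y‖^2 / R^2 := by positivity
    linarith
  have hxR : ‖x0 - y‖ ≤ R := by
    have : ‖x0 - y‖^2 / R^2 < 1 := by linarith
    rw [div_lt_one (by positivity)] at this
    exact (lt_of_pow_lt_pow_left₀ 2 hR.le this).le
  have hn1 : (1:ℝ) ≤ n := by exact_mod_cast (by omega : 1 ≤ n)
  have hz : ∀ b : Euc n, ‖b‖ = 1 → |⟪x0 - y, b⟫| ≤ R := by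
    intro b hb
    refine (abs_real_inner_le_norm _ _).trans ?_
    rw [hb, mul_one]; exact hxR
  by_cases hD : D2 x0 ξ ξ ≤ 0
  · set c : Fin n → ℝ := fun i => es lam (Finset.univ.erase i) k with hc
    set w : Fin n → ℝ := fun i => ⟪ξ, b i⟫^2 with hw
    have hcpos : ∀ i, 0 < c i := fun i =>
      es_garding lam Finset.univ (k+1) hes i (Finset.mem_univ i) k le_rfl
    have hw1 : ∑ i, w i = 1 := by
      have := b.sum_sq_norm_inner_left ξ
      simp only [Real.norm_eq_abs, sq_abs, hξ1] at this
      simpa [hw] using this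
    have hwl : ∑ i, w i * lam i = D2 x0 ξ ξ := by
      have e := b.sum_repr' ξ
      conv_rhs => rw [← e]
      simp only [map_sum, map_smul, _root_.sum_apply, _root_.smul_apply,
        smul_eq_mul]
      apply Finset.sum_congr rfl
      intro i _
      rw [Finset.sum_eq_single i]
      · have := congrFun (congrFun hdiag i) i
        rw [Matrix.of_apply, Matrix.diagonal_apply_eq] at this
        rw [this, hw]
        simp only
        rw [real_inner_comm]; ring
      · intro j _ hj
        have := congrFun (congrFun hdiag j) i
        rw [Matrix.of_apply, Matrix.diagonal_apply_ne _ hj] at this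
        rw [this]; ring
      · simp
    have hkey := aux_key lam w Finset.univ k hes (fun i _ => sq_nonneg _) hw1 (hwl.trans_le hD)
    rw [Finset.card_univ, Fintype.card_fin] at hkey
    set Q : ℝ := 1 / (R^2 * ρ^2) with hQ
    have hpt : ∀ i, D3 ξ (b i) (b i) / p + 1 / (2 * W) * lam i
        + 1/2 * (1 / (2*W))^2 * (p^2 * w i) ≤ 18 * Q := by
      intro i
      have hbi : ‖b i‖ = 1 := b.norm_eq_one i
      obtain ⟨d1, d2⟩ := hdir (b i) hbi
      rw [hsym] at d2
      have hlami : D2 x0 (b i) (b i) = lam i := by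
        have := congrFun (congrFun hdiag i) i
        rwa [Matrix.of_apply, Matrix.diagonal_apply_eq] at this
      rw [hlami] at d2
      have hU : D1 x0 (b i) ^ 2 = p^2 * w i := by rw [hξ, hw]; ring
      rw [← hU]
      refine aux_pt (D2 x0 (b i) ξ / p) (1/(2*W)) (D1 x0 (b i))
        (-(2 * ⟪x0 - y, b i⟫ / R ^ 2) / ρ) _ _ (-(2 / R ^ 2) / ρ) Q ?_ ?_ ?_ ?_
      · rw [← d1]; ring
      · refine le_of_eq_of_le ?_ d2
        field_simp
      · have := sq_le_sq' (by have := (abs_le.1 (hz (b i) hbi)).1; linarith)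
          (abs_le.1 (hz (b i) hbi)).2
        have e : (-(2 * ⟪x0 - y, b i⟫ / R ^ 2) / ρ)^2 = 4 * Q * (⟪x0 - y, b i⟫^2 / R^2) := by
          rw [hQ]; field_simp; ring
        rw [e]
        have : ⟪x0 - y, b i⟫^2 / R^2 ≤ 1 := by
          rw [div_le_one (by positivity)]; exact this
        have hQ0 : 0 ≤ 4 * Q := by positivity
        nlinarith
      · have e : -(2 / R ^ 2) / ρ = -(2 * (Q * ρ)) := by rw [hQ]; field_simp
        rw [e]
        have hQ0 : 0 ≤ Q := by positivity
        nlinarith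
    have hsum : ∑ i, c i * (D3 ξ (b i) (b i) / p + 1 / (2 * W) * lam i
        + 1/2 * (1 / (2*W))^2 * (p^2 * w i)) ≤ ∑ i, c i * (18 * Q) :=
      Finset.sum_le_sum fun i _ => mul_le_mul_of_nonneg_left (hpt i) (hcpos i).le
    have e1 : ∑ i, c i * (D3 ξ (b i) (b i) / p + 1 / (2 * W) * lam i
        + 1/2 * (1 / (2*W))^2 * (p^2 * w i))
        = (∑ i, c i * D3 ξ (b i) (b i)) / p + 1 / (2*W) * (∑ i, lam i * c i)
          + 1/2 * (1 / (2*W))^2 * p^2 * (∑ i, w i * c i) := by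
      rw [Finset.sum_div, Finset.mul_sum, Finset.mul_sum, ← Finset.sum_add_distrib,
        ← Finset.sum_add_distrib]
      apply Finset.sum_congr rfl
      intro i _; ring
    rw [e1, ← Finset.sum_mul, hlin, zero_div, zero_add, es_sum] at hsum
    have hes1 := hes (k+1) le_rfl
    have hpos1 : 0 ≤ 1 / (2*W) * ((k+1) * es lam Finset.univ (k+1)) := by positivity
    set T := ∑ i, w i * c i with hT
    have hcs : 0 < ∑ i, c i := by
      apply Finset.sum_pos (fun i _ => hcpos i)
      exact ⟨⟨0, by omega⟩, Finset.mem_univ _⟩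
    have hTpos : 0 < T := by
      have : 0 < n * T := lt_of_lt_of_le hcs hkey
      exact pos_of_mul_pos_right this (by linarith)
    have hQ0 : 0 < Q := by positivity
    have hfin : T * (1/2 * (1 / (2*W))^2 * p^2) ≤ T * (n * (18 * Q)) := by
      have : (∑ i, c i) * (18 * Q) ≤ (n * T) * (18 * Q) :=
        mul_le_mul_of_nonneg_right hkey (by positivity)
      nlinarith
    have hfin2 := le_of_mul_le_mul_left hfin hTpos
    have hfin3 : (p * ρ * R)^2 ≤ 144 * n * W^2 := by
      have e2 : 1/2 * (1 / (2*W))^2 * p^2 = (p * ρ * R)^2 * (Q / (8 * W^2)) := by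
        rw [hQ]; field_simp; ring
      have e3 : n * (18 * Q) = 144 * n * W^2 * (Q / (8 * W^2)) := by
        field_simp; ring
      rw [e2, e3] at hfin2
      exact le_of_mul_le_mul_right hfin2 (by positivity)
    refine (sq_le_sq₀ (by positivity) (by positivity)).1 ?_
    nlinarith [sq_nonneg W, mul_nonneg (mul_nonneg (by linarith : (0:ℝ) ≤ n) (sub_nonneg.2 hn1)) (sq_nonneg W)]
  · push Not at hD
    obtain ⟨d1, -⟩ := hdir ξ hξ1
    rw [hv0'] at d1
    have hzz := (abs_le.1 (hz ξ hξ1)).2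
    have h5 : p / (2 * W) ≤ 2 / (R * ρ) := by
      have : 0 < D2 x0 ξ ξ / p := by positivity
      have e : -(2 * ⟪x0 - y, ξ⟫ / R ^ 2) / ρ = -(2 / (R * ρ) * (⟪x0 - y, ξ⟫ / R)) := by
        field_simp
      rw [e] at d1
      have h6 : ⟪x0 - y, ξ⟫ / R ≤ 1 := by rw [div_le_one hR]; exact hzz
      have h7 : 0 ≤ 2 / (R * ρ) := by positivity
      nlinarith
    rw [div_le_div_iff₀ (by positivity) (by positivity)] at h5
    nlinarith
theorem aux_logform (a c w : ℝ) (ha : 0 < a) (hc : 0 < c) (hw : 0 < w) :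
    Real.log a - 1/2 * Real.log w + Real.log c = Real.log (a * c / √w) := by
  rw [Real.log_div (by positivity) (by positivity), Real.log_mul ha.ne' hc.ne',
    Real.log_sqrt hw.le]
  ring

theorem aux_final {n k : ℕ} (hk : k + 1 ≤ n) (y : Euc n) (r : ℝ) (hr : 0 < r) (u : Euc n → ℝ)
    (hu : ContDiffOn ℝ 3 u (ball y r))
    (hcone : ∀ x ∈ ball y r, InGardingCone (k+1) (hessian u x))
    (hsig : ∀ x ∈ ball y r, sigmaMat (k+1) (hessian u x) = 1)
    (s t : ℝ) (hst : ∀ x ∈ ball y r, s ≤ u x ∧ u x ≤ t) (hlt : s < t) :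
    ‖fderiv ℝ u y‖ ≤ 48 * n / r * (t - s) := by
  by_cases hy0 : fderiv ℝ u y = 0
  · rw [hy0, norm_zero]
    have : 0 < t - s := sub_pos.2 hlt
    positivity
  set R := r / 2 with hR
  have hRpos : 0 < R := by positivity
  set M := t + (t - s) with hM
  have hsub : closedBall y R ⊆ ball y r := closedBall_subset_ball (by rw [hR]; linarith)
  have hW : ∀ x ∈ ball y r, 0 < M - u x := fun x hx => by
    have := (hst x hx).2
    rw [hM]; linarith
  have hW2 : ∀ x ∈ ball y r, M - u x ≤ 2 * (t - s) := fun x hx => by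
    have := (hst x hx).1
    rw [hM]; linarith
  have hDc : ContinuousOn (fderiv ℝ u) (ball y r) :=
    hu.continuousOn_fderiv_of_isOpen isOpen_ball (by norm_num)
  have hcont : ContinuousOn (fun x => ‖fderiv ℝ u x‖ * (1 - ‖x - y‖^2 / R^2) / √(M - u x))
      (closedBall y R) := by
    apply ContinuousOn.div
    · apply ContinuousOn.mul
      · exact (hDc.mono hsub).norm
      · fun_prop
    · exact (continuousOn_const.sub (hu.continuousOn.mono hsub)).sqrt
    · intro x hx
      exact (Real.sqrt_pos.2 (hW x (hsub hx))).ne'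
  obtain ⟨x0, hx0, hmax⟩ := (isCompact_closedBall y R).exists_isMaxOn
    ⟨y, mem_closedBall_self hRpos.le⟩ hcont
  have hyb : y ∈ ball y r := mem_ball_self hr
  have hx0b := hsub hx0
  have hHy := hmax (mem_closedBall_self hRpos.le : y ∈ closedBall y R)
  simp only [mem_setOf_eq, sub_self, norm_zero] at hHy
  norm_num at hHy
  have hp0 : 0 < ‖fderiv ℝ u y‖ := norm_pos_iff.2 hy0
  have hsy : 0 < √(M - u y) := Real.sqrt_pos.2 (hW y hyb)
  have hs0 : 0 < √(M - u x0) := Real.sqrt_pos.2 (hW x0 hx0b)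
  have hprod : 0 < ‖fderiv ℝ u x0‖ * (1 - ‖x0 - y‖^2 / R^2) := by
    have : 0 < ‖fderiv ℝ u x0‖ * (1 - ‖x0 - y‖^2 / R^2) / √(M - u x0) :=
      lt_of_lt_of_le (by positivity) hHy
    exact (div_pos_iff_of_pos_right hs0).1 this
  have hp : 0 < ‖fderiv ℝ u x0‖ := by
    rcases (norm_nonneg (fderiv ℝ u x0)).eq_or_lt with h | h
    · rw [← h, zero_mul] at hprod; exact absurd hprod (lt_irrefl _)
    · exact h
  have hρ : 0 < 1 - ‖x0 - y‖^2 / R^2 := pos_of_mul_pos_right hprod hp.le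
  set p := ‖fderiv ℝ u x0‖ with hpd
  set G : Euc n := (InnerProductSpace.toDual ℝ (Euc n)).symm (fderiv ℝ u x0) with hG
  have hGn : ‖G‖ = p := by rw [hG, LinearIsometryEquiv.norm_map]
  have hGi : ∀ b, fderiv ℝ u x0 b = ⟪G, b⟫ := fun b => by
    rw [hG, InnerProductSpace.toDual_symm_apply]
  set ξ : Euc n := p⁻¹ • G with hξd
  have hξ1 : ‖ξ‖ = 1 := by
    rw [hξd, norm_smul, hGn, norm_inv, Real.norm_of_nonneg hp.le, inv_mul_cancel₀ hp.ne']
  have hξ : ∀ b, fderiv ℝ u x0 b = p * ⟪ξ, b⟫ := fun b => by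
    rw [hGi, hξd, real_inner_smul_left, ← mul_assoc, mul_inv_cancel₀ hp.ne', one_mul]
  have hvx0 : fderiv ℝ u x0 ξ = p := by
    rw [hξ, real_inner_self_eq_norm_sq, hξ1]; simp
  have hloc : IsLocalMax (fun x => Real.log (fderiv ℝ u x ξ) - 1/2 * Real.log (M - u x)
      + Real.log (1 - ‖x - y‖^2 / R^2)) x0 := by
    have hc1 : ContinuousAt (fun x => fderiv ℝ u x ξ) x0 :=
      (hDc.continuousAt (isOpen_ball.mem_nhds hx0b)).clm_apply continuousAt_const
    have hc2 : ContinuousAt (fun x : Euc n => 1 - ‖x - y‖^2 / R^2) x0 := by fun_prop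
    have e1 := hc1.eventually (lt_mem_nhds (by rw [hvx0]; exact hp : 0 < fderiv ℝ u x0 ξ))
    have e2 := hc2.eventually (lt_mem_nhds hρ)
    filter_upwards [e1, e2, isOpen_ball.mem_nhds hx0b] with x h1 h2 h3
    have hxR : x ∈ closedBall y R := by
      rw [mem_closedBall, dist_eq_norm]
      have : ‖x - y‖^2 / R^2 < 1 := by linarith
      rw [div_lt_one (by positivity)] at this
      exact (lt_of_pow_lt_pow_left₀ 2 hRpos.le this).le
    have h4 := hmax hxR
    simp only [mem_setOf_eq] at h4
    rw [aux_logform _ _ _ h1 h2 (hW x h3),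
      aux_logform _ _ _ (by rw [hvx0]; exact hp) hρ (hW x0 hx0b), hvx0]
    have hsx : 0 < √(M - u x) := Real.sqrt_pos.2 (hW x h3)
    apply Real.log_le_log (by positivity)
    refine le_trans ?_ h4
    have : fderiv ℝ u x ξ ≤ ‖fderiv ℝ u x‖ := by
      have := (le_abs_self _).trans ((fderiv ℝ u x).le_opNorm ξ)
      rwa [hξ1, mul_one] at this
    gcongr
  have hest := aux_est hk y r u hu hcone hsig x0 hx0b R M p hRpos ξ hξ1 hρ hp hξ (hW x0 hx0b) hloc
  set W0 := M - u x0 with hW0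
  set Wy := M - u y with hWy
  have hW0p : 0 < W0 := hW x0 hx0b
  have a1 : √W0 * √W0 = W0 := Real.mul_self_sqrt hW0p.le
  have a2 : √W0 ≤ √(2 * (t - s)) := Real.sqrt_le_sqrt (hW2 x0 hx0b)
  have a3 : √Wy ≤ √(2 * (t - s)) := Real.sqrt_le_sqrt (hW2 y hyb)
  have a4 : √(2 * (t - s)) * √(2 * (t - s)) = 2 * (t - s) :=
    Real.mul_self_sqrt (by linarith)
  have b1 : p * (1 - ‖x0 - y‖^2 / R^2) / √W0 ≤ 12 * n / R * √W0 := by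
    rw [div_le_iff₀ hs0, mul_assoc, a1, div_mul_eq_mul_div, le_div_iff₀ hRpos]
    exact hest
  have b2 := hHy.trans b1
  rw [div_le_iff₀ hsy] at b2
  refine b2.trans ?_
  have b3 : √W0 * √Wy ≤ 2 * (t - s) := by
    rw [← a4]; exact mul_le_mul a2 a3 hsy.le (Real.sqrt_nonneg _)
  have b4 : 48 * n / r * (t - s) = 12 * n / R * (2 * (t - s)) := by
    rw [hR]; field_simp; ring
  rw [b4, mul_assoc]
  exact mul_le_mul_of_nonneg_left b3 (by positivity)

/-- interior gradient estimate `|Du(y)| ≤ (C/r)·osc_B u`. -/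
theorem statement6 {n k : ℕ} (hk : 1 ≤ k) (hkn : k ≤ n) :
    ∃ C : ℝ, 0 < C ∧ ∀ (y : Euc n) (r : ℝ), 0 < r → ∀ u : Euc n → ℝ,
      ContDiffOn ℝ 3 u (ball y r) →
      (∀ x ∈ ball y r, InGardingCone k (hessian u x)) →
      (∀ x ∈ ball y r, sigmaMat k (hessian u x) = 1) →
      ∀ s t : ℝ, (∀ x ∈ ball y r, s ≤ u x ∧ u x ≤ t) →
        ‖fderiv ℝ u y‖ ≤ C / r * (t - s) := by
  obtain ⟨k, rfl⟩ : ∃ m, k = m + 1 := ⟨k - 1, by omega⟩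
  have hn : (0:ℝ) < n := by exact_mod_cast (by omega : 0 < n)
  refine ⟨48 * n, by positivity, ?_⟩
  intro y r hr u hu hcone hsig s t hst
  have hy := hst y (mem_ball_self hr)
  rcases (hy.1.trans hy.2).eq_or_lt with h | h
  · have hc : u =ᶠ[𝓝 y] fun _ => s := by
      filter_upwards [ball_mem_nhds y hr] with x hx
      have := hst x hx
      exact le_antisymm (by rw [h]; exact this.2) this.1
    rw [hc.fderiv_eq, h]
    simp
  · exact aux_final hkn y r hr u hu hcone hsig s t hst h
end
end
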